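/- arXiv:1309.6491 — 8 statements merged into one kernel-verified Lean document; each statement's English description precedes it below -/
import Mathlib

section
/- For every integer d ≥ 3 there exists a constant c = c(d) > 0 with the following property: if S is a set of n points in ℝ^d such that no d points of S lie on a common affine subspace of dimension d−2 (equivalently, every d-element subset of S is affinely independent), then the number of affine simplexes contained in S is at least C(n, d+1) − c·n^d. -/
/-!
Let `H` range over the hyperplanes spanned by `d` points of `S`. There are two sources of affine
simplexes: every `(d + 1)`-subset of some `S ∩ H` (`choose_add_genPos_le`), and every
`(d + 2)`-subset all of whose `(d + 1)`-subsets are independent, called *in general position*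
(`genPos`). Put `q = 8 (d + 2) ^ 2`. Values `n < q ^ 2` are absorbed into the constant.

If every `H` contains at most `n / q` points, then at least half of all `(d + 2)`-subsets are in
general position (`choose_le_genPos_of_small`), far more than `C(n, d + 1)`.

Otherwise some `H` contains `k > n / q` points, and `m = n - k` points lie off it. The subsets
of `S ∩ H` give `C(k, d + 1) ≥ C(n, d + 1) - m C(n, d)` simplexes. Any two points off `H` together
with at least half of the `d`-subsets of `S ∩ H` are in general position (`choose_le_good`), which
gives at least `C(m, 2) C(k, d) / 2` further simplexes. As `C(k, d)` is a fixed proportion of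
`C(n, d)`, the term quadratic in `m` outweighs the loss `m C(n, d)` once `m` exceeds a constant
depending only on `d`; for smaller `m` the loss is `O(n ^ d)`.
-/

open Finset

/-- A finite set `T` of points of `ℝ^d` is an affine simplex if `T` is affinely
dependent but every proper subset of `T` is affinely independent. -/
def IsAffSimplex (d : ℕ) (T : Finset (EuclideanSpace ℝ (Fin d))) : Prop :=
  ¬ AffineIndependent ℝ
      (fun p : (T : Set (EuclideanSpace ℝ (Fin d))) => (p : EuclideanSpace ℝ (Fin d))) ∧
  ∀ T' : Finset (EuclideanSpace ℝ (Fin d)), T' ⊂ T →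
    AffineIndependent ℝ
      (fun p : (T' : Set (EuclideanSpace ℝ (Fin d))) => (p : EuclideanSpace ℝ (Fin d)))

open Classical in
/-- The number of affine simplexes contained in the point set `S ⊆ ℝ^d`. -/
noncomputable def numAffSimplex (d : ℕ) (S : Finset (EuclideanSpace ℝ (Fin d))) : ℕ :=
  (S.powerset.filter (IsAffSimplex d)).card

/-- Affine independence of a finite set of points. -/
def AI {d : ℕ} (T : Finset (EuclideanSpace ℝ (Fin d))) : Prop :=
  AffineIndependent ℝ
    (fun p : (T : Set (EuclideanSpace ℝ (Fin d))) => (p : EuclideanSpace ℝ (Fin d)))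

open Classical in
/-- The `(d + 2)`-subsets of `S` in general position, meaning that all of their
`(d + 1)`-subsets are affinely independent. -/
noncomputable def genPos {d : ℕ} (S : Finset (EuclideanSpace ℝ (Fin d))) :
    Finset (Finset (EuclideanSpace ℝ (Fin d))) :=
  (S.powersetCard (d + 2)).filter fun T => ∀ T' ⊆ T, T'.card = d + 1 → AI T'

open Classical in
/-- The points of `S` in the affine span of `D`. -/
noncomputable def onSpan {d : ℕ} (S D : Finset (EuclideanSpace ℝ (Fin d))) :
    Finset (EuclideanSpace ℝ (Fin d)) :=
  S.filter (· ∈ affineSpan ℝ (D : Set (EuclideanSpace ℝ (Fin d))))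

open Classical in
/-- The points of `S` outside the affine span of `D`. -/
noncomputable def offSpan {d : ℕ} (S D : Finset (EuclideanSpace ℝ (Fin d))) :
    Finset (EuclideanSpace ℝ (Fin d)) :=
  S.filter (· ∉ affineSpan ℝ (D : Set (EuclideanSpace ℝ (Fin d))))

/-! ### Affine independence and the two kinds of simplexes -/

section geometry

variable {d : ℕ}

theorem AI.subset {T T' : Finset (EuclideanSpace ℝ (Fin d))} (h : AI T) (hs : T' ⊆ T) : AI T' :=
  AffineIndependent.mono h (by exact_mod_cast hs)

theorem affineIndependent_insert_of_notMem {V : Type*} [AddCommGroup V] [Module ℝ V] {s : Set V}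
    {x : V} (h : AffineIndependent ℝ (fun p : s => (p : V))) (hx : x ∉ affineSpan ℝ s) :
    AffineIndependent ℝ (fun p : (insert x s : Set V) => (p : V)) := by
  have hmem : ∀ y : (insert x s : Set V), y ≠ ⟨x, Set.mem_insert x s⟩ → y.1 ∈ s := by
    rintro ⟨y, hy⟩ hne
    rcases hy with rfl | hy
    · exact absurd rfl hne
    · exact hy
  refine AffineIndependent.affineIndependent_of_notMem_span
    (i := ⟨x, Set.mem_insert x s⟩) ?_ ?_
  · let f : { y : (insert x s : Set V) // y ≠ ⟨x, Set.mem_insert x s⟩ } ↪ s :=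
      ⟨fun y => ⟨y.1.1, hmem y.1 y.2⟩, fun a b hab =>
        Subtype.ext (Subtype.ext (Subtype.mk.inj hab))⟩
    exact h.comp_embedding f
  · refine fun hspan => hx (affineSpan_mono ℝ ?_ hspan)
    rintro _ ⟨y, hy, rfl⟩
    exact hmem y hy

open Classical in
theorem AI.insert_notMem {T : Finset (EuclideanSpace ℝ (Fin d))} (h : AI T)
    {x : EuclideanSpace ℝ (Fin d)}
    (hx : x ∉ affineSpan ℝ (T : Set (EuclideanSpace ℝ (Fin d)))) : AI (insert x T) := by
  unfold AI
  rw [Finset.coe_insert]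
  exact affineIndependent_insert_of_notMem h hx

/-- Exchange bound: independent points in the span of `t` number at most `t.card`. -/
theorem AI.card_le {s t : Finset (EuclideanSpace ℝ (Fin d))} (hs : AI s)
    (hst : (s : Set (EuclideanSpace ℝ (Fin d))) ⊆
      affineSpan ℝ (t : Set (EuclideanSpace ℝ (Fin d)))) : s.card ≤ t.card :=
  AffineIndependent.card_le_card_of_subset_affineSpan hs hst

theorem AI.card_le_dim {s : Finset (EuclideanSpace ℝ (Fin d))} (hs : AI s) : s.card ≤ d + 1 := by
  have h := AffineIndependent.card_le_finrank_succ hs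
  have h2 := Submodule.finrank_le (vectorSpan ℝ (Set.range
    (fun p : (s : Set (EuclideanSpace ℝ (Fin d))) => (p : EuclideanSpace ℝ (Fin d)))))
  rw [finrank_euclideanSpace_fin] at h2
  simp at h
  simp at h2
  omega

/-- Independent sets of equal size, one inside the span of the other, have the same span. -/
theorem AI.span_le {s t : Finset (EuclideanSpace ℝ (Fin d))} (hs : AI s)
    (hst : (s : Set (EuclideanSpace ℝ (Fin d))) ⊆
      affineSpan ℝ (t : Set (EuclideanSpace ℝ (Fin d)))) (hc : t.card ≤ s.card)
    {x : EuclideanSpace ℝ (Fin d)}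
    (hx : x ∈ affineSpan ℝ (t : Set (EuclideanSpace ℝ (Fin d)))) :
    x ∈ affineSpan ℝ (s : Set (EuclideanSpace ℝ (Fin d))) := by
  classical
  by_contra hns
  have hxs : x ∉ s := fun hh => hns (subset_affineSpan ℝ _ (by exact_mod_cast hh))
  have h1 := (hs.insert_notMem hns).card_le (t := t) (by
    rw [Finset.coe_insert]
    exact Set.insert_subset hx hst)
  rw [Finset.card_insert_of_notMem hxs] at h1
  omega

theorem isAffSimplex_genPos {S T : Finset (EuclideanSpace ℝ (Fin d))} (hT : T ∈ genPos S) :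
    IsAffSimplex d T := by
  classical
  simp only [genPos, Finset.mem_filter, Finset.mem_powersetCard] at hT
  obtain ⟨⟨hTS, hc⟩, hT⟩ := hT
  refine ⟨fun h => ?_, fun T' hT' => ?_⟩
  · have := AI.card_le_dim h
    omega
  · have := Finset.card_lt_card hT'
    obtain ⟨U, hU1, hU2, hU3⟩ := Finset.exists_subsuperset_card_eq hT'.1
      (n := d + 1) (by omega) (by omega)
    exact (hT U hU2 hU3).subset hU1

theorem isAffSimplex_of_not_AI {S T : Finset (EuclideanSpace ℝ (Fin d))}
    (hS : ∀ D ⊆ S, D.card = d → AI D) (hTS : T ⊆ S) (hc : T.card = d + 1) (hT : ¬ AI T) :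
    IsAffSimplex d T := by
  classical
  refine ⟨hT, fun T' hT' => ?_⟩
  have := Finset.card_lt_card hT'
  obtain ⟨U, hU1, hU2, hU3⟩ := Finset.exists_subsuperset_card_eq hT'.1
    (n := d) (by omega) (by omega)
  exact AI.subset (hS U (hU2.trans hTS) hU3) hU1

theorem card_genPos_le (S : Finset (EuclideanSpace ℝ (Fin d))) :
    (genPos S).card ≤ numAffSimplex d S := by
  classical
  unfold numAffSimplex
  apply Finset.card_le_card
  intro T hT
  have h := isAffSimplex_genPos hT
  simp only [genPos, Finset.mem_filter, Finset.mem_powersetCard] at hT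
  simp only [Finset.mem_filter, Finset.mem_powerset]
  exact ⟨hT.1.1, h⟩

/-- Besides the sets in general position, every `(d + 1)`-subset of the trace of `S` on a
hyperplane is an affine simplex. -/
theorem choose_add_genPos_le {S D : Finset (EuclideanSpace ℝ (Fin d))}
    (hS : ∀ D ⊆ S, D.card = d → AI D) (hD : D.card = d) :
    (onSpan S D).card.choose (d + 1) + (genPos S).card ≤ numAffSimplex d S := by
  classical
  unfold numAffSimplex
  rw [← Finset.card_powersetCard, ← Finset.card_union_of_disjoint]
  · apply Finset.card_le_card
    intro T hT
    rw [Finset.mem_union] at hT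
    rcases hT with hT | hT
    · rw [Finset.mem_powersetCard] at hT
      have hTS : T ⊆ S := hT.1.trans (Finset.filter_subset _ _)
      simp only [Finset.mem_filter, Finset.mem_powerset]
      refine ⟨hTS, isAffSimplex_of_not_AI hS hTS hT.2 fun hA => ?_⟩
      have := hA.card_le (t := D) (fun x hx => (Finset.mem_filter.1 (hT.1 hx)).2)
      omega
    · have h := isAffSimplex_genPos hT
      simp only [genPos, Finset.mem_filter, Finset.mem_powersetCard] at hT
      simp only [Finset.mem_filter, Finset.mem_powerset]
      exact ⟨hT.1.1, h⟩
  · rw [Finset.disjoint_left]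
    intro T h1 h2
    simp only [genPos, Finset.mem_filter, Finset.mem_powersetCard] at h1 h2
    omega

/-- If every hyperplane spanned by `d` points of `S` contains at most `K` points of `S`, then few
`(d + 2)`-subsets fail to be in general position: such a set consists of a `d`-set, a further
point on the hyperplane spanned by it, and one arbitrary point. -/
theorem choose_le_genPos_of_small {S : Finset (EuclideanSpace ℝ (Fin d))} {K : ℕ}
    (hS : ∀ D ⊆ S, D.card = d → AI D)
    (hK : ∀ D ⊆ S, D.card = d → (onSpan S D).card ≤ K) :
    S.card.choose (d + 2) ≤ (genPos S).card + S.card.choose d * (K * S.card) := by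
  classical
  rw [← Finset.card_powersetCard, ← Finset.card_powersetCard d S]
  have key : S.powersetCard (d + 2) ⊆ genPos S ∪ (S.powersetCard d).biUnion fun D =>
      ((onSpan S D) ×ˢ S).image fun p => insert p.2 (insert p.1 D) := by
    intro T hT
    rw [Finset.mem_union]
    by_cases hg : T ∈ genPos S
    · exact Or.inl hg
    right
    have hT0 := hT
    rw [Finset.mem_powersetCard] at hT
    simp only [genPos, Finset.mem_filter, hT0, true_and] at hg
    push Not at hg
    obtain ⟨T', hT', hc, hn⟩ := hg
    have hTS' : T' ⊆ S := hT'.trans hT.1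
    obtain ⟨y, hy⟩ : T'.Nonempty := by rw [← Finset.card_pos]; omega
    have hDc : (T'.erase y).card = d := by rw [Finset.card_erase_of_mem hy]; omega
    have hDS : T'.erase y ⊆ S := (Finset.erase_subset _ _).trans hTS'
    obtain ⟨z, hz⟩ := Finset.card_eq_one.1 (show (T \ T').card = 1 by
      rw [Finset.card_sdiff_of_subset hT']; omega)
    have hzT : z ∈ T := (Finset.mem_sdiff.1 (hz ▸ Finset.mem_singleton_self z)).1
    rw [Finset.mem_biUnion]
    refine ⟨T'.erase y, Finset.mem_powersetCard.2 ⟨hDS, hDc⟩, ?_⟩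
    rw [Finset.mem_image]
    refine ⟨(y, z), ?_, ?_⟩
    · rw [Finset.mem_product]
      refine ⟨Finset.mem_filter.2 ⟨hTS' hy, ?_⟩, hT.1 hzT⟩
      by_contra hns
      have := (hS _ hDS hDc).insert_notMem hns
      rw [Finset.insert_erase hy] at this
      exact hn this
    · simp only
      rw [Finset.insert_erase hy, Finset.insert_eq, ← hz, Finset.sdiff_union_of_subset hT']
  refine (Finset.card_le_card key).trans ((Finset.card_union_le _ _).trans ?_)
  gcongr
  apply Finset.card_biUnion_le_card_mul
  intro D hD
  rw [Finset.mem_powersetCard] at hD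
  refine Finset.card_image_le.trans ?_
  rw [Finset.card_product]
  exact Nat.mul_le_mul_right _ (hK D hD.1 hD.2)

end geometry

/-! ### Many points on one hyperplane -/

/-- Let `H` be the affine span of `D`, let `R` consist of two points of `S` off `H`, and
let `E ⊆ S ∩ H` have `d - 2` points. The flat spanned by `R ∪ E` contains at most one
further point of `S ∩ H`: with two such points `E` would extend to `d` independent points of
`S ∩ H` spanning that flat, which would then lie inside `H` although `R` does not. -/
theorem eq_of_mem_span_union {e : ℕ} {S D R E : Finset (EuclideanSpace ℝ (Fin (e + 2)))}
    (hS : ∀ D ⊆ S, D.card = e + 2 → AI D)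
    (hR : R ⊆ offSpan S D) (hRc : R.card = 2) (hE : E ⊆ onSpan S D) (hEc : E.card = e)
    {z z' : EuclideanSpace ℝ (Fin (e + 2))}
    (hz : z ∈ onSpan S D) (hzE : z ∉ E) (hz' : z' ∈ onSpan S D) (hzE' : z' ∉ E)
    (h : z ∈ affineSpan ℝ ((R : Set (EuclideanSpace ℝ (Fin (e + 2)))) ∪ E))
    (h' : z' ∈ affineSpan ℝ ((R : Set (EuclideanSpace ℝ (Fin (e + 2)))) ∪ E)) : z = z' := by
  classical
  by_contra hne
  have hsub : insert z (insert z' E) ⊆ onSpan S D :=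
    Finset.insert_subset hz (Finset.insert_subset hz' hE)
  have hc : (insert z (insert z' E)).card = e + 2 := by
    rw [Finset.card_insert_of_notMem (by simp [hne, hzE]), Finset.card_insert_of_notMem hzE', hEc]
  have hA : AI (insert z (insert z' E)) := hS _ (hsub.trans (Finset.filter_subset _ _)) hc
  obtain ⟨p, hp⟩ : R.Nonempty := by rw [← Finset.card_pos]; omega
  refine (Finset.mem_filter.1 (hR hp)).2 ?_
  have h1 : p ∈ affineSpan ℝ ((insert z (insert z' E) : Finset (EuclideanSpace ℝ (Fin (e + 2)))) :
      Set (EuclideanSpace ℝ (Fin (e + 2)))) := by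
    apply hA.span_le (t := R ∪ E)
    · rw [Finset.coe_insert, Finset.coe_insert, Finset.coe_union]
      exact Set.insert_subset h (Set.insert_subset h'
        (Set.subset_union_right.trans (subset_affineSpan ℝ _)))
    · exact (Finset.card_union_le _ _).trans (by omega)
    · exact subset_affineSpan ℝ _ (by simp [hp])
  exact affineSpan_le.2 (fun x hx => (Finset.mem_filter.1 (hsub (by exact_mod_cast hx))).2) h1

open Classical in
/-- For two points `R` off the affine span `H` of `D`, all but few of the `d`-subsets of
`S ∩ H` are in general position together with `R`. -/
theorem choose_le_good {e : ℕ} {S D R : Finset (EuclideanSpace ℝ (Fin (e + 2)))}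
    (hS : ∀ D ⊆ S, D.card = e + 2 → AI D)
    (hR : R ⊆ offSpan S D) (hRc : R.card = 2) :
    (onSpan S D).card.choose (e + 2) ≤
      (((onSpan S D).powersetCard (e + 2)).filter fun U => R ∪ U ∈ genPos S).card +
        (onSpan S D).card.choose e * (onSpan S D).card := by
  set P := onSpan S D with hP
  have hPS : P ⊆ S := Finset.filter_subset _ _
  have hRS : R ⊆ S := hR.trans (Finset.filter_subset _ _)
  have hdisj : ∀ x ∈ R, x ∉ P := fun x hx hxP =>
    (Finset.mem_filter.1 (hR hx)).2 (Finset.mem_filter.1 hxP).2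
  rw [← Finset.card_powersetCard, ← Finset.card_powersetCard e P]
  let Z : Finset (EuclideanSpace ℝ (Fin (e + 2))) → Finset (EuclideanSpace ℝ (Fin (e + 2))) :=
    fun E => P.filter fun z => z ∉ E ∧
      z ∈ affineSpan ℝ ((R : Set (EuclideanSpace ℝ (Fin (e + 2)))) ∪ E)
  have key : P.powersetCard (e + 2) ⊆
      ((P.powersetCard (e + 2)).filter fun U => R ∪ U ∈ genPos S) ∪
      (P.powersetCard e).biUnion fun E =>
        ((Z E) ×ˢ P).image fun p => insert p.2 (insert p.1 E) := by
    intro U hU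
    rw [Finset.mem_union, Finset.mem_filter]
    by_cases hg : R ∪ U ∈ genPos S
    · exact Or.inl ⟨hU, hg⟩
    right
    rw [Finset.mem_powersetCard] at hU
    have hUA : AI U := hS U (hU.1.trans hPS) hU.2
    have hRU : Disjoint R U := Finset.disjoint_left.2 fun x hx hxU => hdisj x hx (hU.1 hxU)
    have hTc : (R ∪ U).card = e + 2 + 2 := by
      rw [Finset.card_union_of_disjoint hRU]; omega
    simp only [genPos, Finset.mem_filter, Finset.mem_powersetCard, hTc, and_true,
      Finset.union_subset hRS (hU.1.trans hPS), true_and] at hg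
    push Not at hg
    obtain ⟨T', hT', hc, hn⟩ := hg
    obtain ⟨t, ht⟩ := Finset.card_eq_one.1 (show ((R ∪ U) \ T').card = 1 by
      rw [Finset.card_sdiff_of_subset hT']; omega)
    have htT : t ∈ (R ∪ U) \ T' := ht ▸ Finset.mem_singleton_self t
    have hT'e : T' = (R ∪ U).erase t := by
      rw [Finset.erase_eq, ← ht, Finset.sdiff_sdiff_eq_self hT']
    rw [Finset.mem_sdiff, Finset.mem_union] at htT
    obtain ⟨htRU, -⟩ := htT
    rcases htRU with htR | htU
    -- One point of `R` and `U`: independent, since `U` spans `H`.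
    · exfalso
      apply hn
      have htU : t ∉ U := fun h => hdisj t htR (hU.1 h)
      obtain ⟨p, hp⟩ := Finset.card_eq_one.1 (show (R.erase t).card = 1 by
        rw [Finset.card_erase_of_mem htR]; omega)
      have hpR : p ∈ R := Finset.mem_of_mem_erase (hp ▸ Finset.mem_singleton_self p)
      rw [hT'e, Finset.erase_union_distrib, hp, Finset.erase_eq_of_notMem htU,
        ← Finset.insert_eq]
      refine hUA.insert_notMem fun h => (Finset.mem_filter.1 (hR hpR)).2 ?_
      exact affineSpan_le.2 (fun x hx => (Finset.mem_filter.1 (hU.1 (by exact_mod_cast hx))).2) h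
    -- Both points of `R` and `d - 1` points of `U`: remove one more point `z` from `U`; the rest
    -- together with `R` is independent, so dependence puts `z` in its span.
    · have htR : t ∉ R := fun h => hdisj t h (hU.1 htU)
      obtain ⟨z, hz⟩ : (U.erase t).Nonempty := by
        rw [← Finset.card_pos, Finset.card_erase_of_mem htU]; omega
      have hzU : z ∈ U := Finset.mem_of_mem_erase hz
      have hEU : (U.erase t).erase z ⊆ U :=
        (Finset.erase_subset _ _).trans (Finset.erase_subset _ _)
      have hEc : ((U.erase t).erase z).card = e := by
        rw [Finset.card_erase_of_mem hz, Finset.card_erase_of_mem htU]; omega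
      rw [Finset.mem_biUnion]
      refine ⟨(U.erase t).erase z, Finset.mem_powersetCard.2 ⟨hEU.trans hU.1, hEc⟩, ?_⟩
      rw [Finset.mem_image]
      refine ⟨(z, t), ?_, ?_⟩
      · rw [Finset.mem_product]
        refine ⟨Finset.mem_filter.2 ⟨hU.1 hzU, by simp, ?_⟩, hU.1 htU⟩
        by_contra hns
        apply hn
        have hA : AI (R ∪ (U.erase t).erase z) := by
          apply hS _ (Finset.union_subset hRS ((hEU.trans hU.1).trans hPS))
          rw [Finset.card_union_of_disjoint (hRU.mono_right hEU)]; omega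
        rw [← Finset.coe_union] at hns
        have := hA.insert_notMem hns
        rw [← Finset.union_insert, Finset.insert_erase hz] at this
        rwa [hT'e, Finset.erase_union_distrib, Finset.erase_eq_of_notMem htR]
      · simp only
        rw [Finset.insert_erase hz, Finset.insert_erase htU]
  refine (Finset.card_le_card key).trans ((Finset.card_union_le _ _).trans ?_)
  gcongr
  apply Finset.card_biUnion_le_card_mul
  intro E hE
  rw [Finset.mem_powersetCard] at hE
  refine Finset.card_image_le.trans ?_
  rw [Finset.card_product]
  have : (Z E).card ≤ 1 := by
    rw [Finset.card_le_one]
    intro a ha b hb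
    simp only [Z, Finset.mem_filter] at ha hb
    exact eq_of_mem_span_union hS hR hRc hE.1 hE.2 ha.1 ha.2.1 hb.1 hb.2.1 ha.2.2 hb.2.2
  calc (Z E).card * P.card ≤ 1 * P.card := Nat.mul_le_mul_right _ this
    _ = P.card := one_mul _

/-- Each pair of points off the affine span of `D` contributes its own sets in general
position. -/
theorem choose_two_mul_le_genPos {e : ℕ} {S D : Finset (EuclideanSpace ℝ (Fin (e + 2)))}
    (hS : ∀ D ⊆ S, D.card = e + 2 → AI D) {g : ℕ}
    (hg : (onSpan S D).card.choose e * (onSpan S D).card + g ≤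
      (onSpan S D).card.choose (e + 2)) :
    (offSpan S D).card.choose 2 * g ≤ (genPos S).card := by
  classical
  let G : Finset (EuclideanSpace ℝ (Fin (e + 2))) →
      Finset (Finset (EuclideanSpace ℝ (Fin (e + 2)))) := fun R =>
    ((onSpan S D).powersetCard (e + 2)).filter fun U => R ∪ U ∈ genPos S
  have h1 : (offSpan S D).card.choose 2 * g ≤
      (((offSpan S D).powersetCard 2).sigma G).card := by
    rw [Finset.card_sigma, ← Finset.card_powersetCard, ← smul_eq_mul]
    apply Finset.card_nsmul_le_sum
    intro R hR
    rw [Finset.mem_powersetCard] at hR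
    have := choose_le_good hS hR.1 hR.2
    simp only [G]
    omega
  refine h1.trans ?_
  apply Finset.card_le_card_of_injOn (fun x => x.1 ∪ x.2)
  · intro x hx
    rw [Finset.mem_coe, Finset.mem_sigma] at hx
    exact (Finset.mem_filter.1 hx.2).2
  -- The two parts are recovered as the points off and on the hyperplane.
  · have hoff : ∀ x ∈ ((offSpan S D).powersetCard 2).sigma G,
        (x.1 ∪ x.2).filter (· ∉ affineSpan ℝ (D : Set (EuclideanSpace ℝ (Fin (e + 2))))) = x.1 ∧
        (x.1 ∪ x.2).filter (· ∈ affineSpan ℝ (D : Set (EuclideanSpace ℝ (Fin (e + 2))))) = x.2 := by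
      rintro ⟨R, U⟩ hx
      rw [Finset.mem_sigma] at hx
      have hR := (Finset.mem_powersetCard.1 hx.1).1
      have hU := (Finset.mem_powersetCard.1 (Finset.mem_filter.1 hx.2).1).1
      have hR' : ∀ y ∈ R, y ∉ affineSpan ℝ (D : Set (EuclideanSpace ℝ (Fin (e + 2)))) :=
        fun y hy => (Finset.mem_filter.1 (hR hy)).2
      have hU' : ∀ y ∈ U, y ∈ affineSpan ℝ (D : Set (EuclideanSpace ℝ (Fin (e + 2)))) :=
        fun y hy => (Finset.mem_filter.1 (hU hy)).2
      constructor
      · ext y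
        simp only [Finset.mem_filter, Finset.mem_union]
        have := hR' y
        have := hU' y
        tauto
      · ext y
        simp only [Finset.mem_filter, Finset.mem_union]
        have := hR' y
        have := hU' y
        tauto
    rintro ⟨R, U⟩ hx ⟨R', U'⟩ hx' heq
    have h := hoff _ (by exact_mod_cast hx)
    have h' := hoff _ (by exact_mod_cast hx')
    simp only at heq h h'
    rw [heq] at h
    have e1 : R = R' := h.1.symm.trans h'.1
    have e2 : U = U' := h.2.symm.trans h'.2
    subst e1 e2
    rfl

/-! ### Estimates for binomial coefficients -/

section numerics

theorem two_mul_choose_mul_le {e k : ℕ} (hk : 8 * (e + 4) ^ 2 ≤ k) :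
    2 * (k.choose e * k) ≤ k.choose (e + 2) := by
  have h1 := Nat.choose_succ_right_eq k e
  have h2 := Nat.choose_succ_right_eq k (e + 1)
  obtain ⟨r, rfl⟩ : ∃ r, k = r + (e + 1) := ⟨k - (e + 1), by
    have : e + 1 ≤ k := by nlinarith
    omega⟩
  rw [show r + (e + 1) - e = r + 1 by omega] at h1
  rw [show r + (e + 1) - (e + 1) = r by omega] at h2
  set a := (r + (e + 1)).choose e
  set b := (r + (e + 1)).choose (e + 1)
  set c := (r + (e + 1)).choose (e + 2)
  have h3 : c * ((e + 2) * (e + 1)) = a * ((r + 1) * r) := by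
    calc c * ((e + 2) * (e + 1)) = c * (e + 1 + 1) * (e + 1) := by ring
      _ = b * (e + 1) * r := by rw [h2]; ring
      _ = _ := by rw [h1]; ring
  have h4 : 2 * (r + (e + 1)) * ((e + 2) * (e + 1)) ≤ (r + 1) * r := by
    have : (e + 1) ≤ r := by nlinarith
    have h5 : 4 * ((e + 2) * (e + 1)) ≤ r := by nlinarith
    calc 2 * (r + (e + 1)) * ((e + 2) * (e + 1)) ≤ 2 * (r + r) * ((e + 2) * (e + 1)) := by gcongr
      _ = r * (4 * ((e + 2) * (e + 1))) := by ring
      _ ≤ r * r := by gcongr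
      _ ≤ _ := by nlinarith
  have h5 : (2 * (a * (r + (e + 1)))) * ((e + 2) * (e + 1)) ≤ c * ((e + 2) * (e + 1)) := by
    rw [h3]
    calc _ = a * (2 * (r + (e + 1)) * ((e + 2) * (e + 1))) := by ring
      _ ≤ _ := by gcongr
  exact Nat.le_of_mul_le_mul_right h5 (by positivity)

/-- The arithmetic of the case in which every hyperplane contains at most `K` of the `n` points. -/
theorem choose_le_of_small {d n K B q : ℕ} (hq : q = 8 * (d + 2) ^ 2) (hn : q ^ 2 ≤ n)
    (hK : q * K ≤ n) (h : n.choose (d + 2) ≤ B + n.choose d * (K * n)) :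
    n.choose (d + 1) ≤ B := by
  have hqn : q ≤ n := by nlinarith
  have h1 := Nat.choose_succ_right_eq n d
  have h2 := Nat.choose_succ_right_eq n (d + 1)
  obtain ⟨r, rfl⟩ : ∃ r, n = r + (d + 1) := ⟨n - (d + 1), by
    have : d + 1 ≤ n := by nlinarith
    omega⟩
  rw [show r + (d + 1) - d = r + 1 by omega] at h1
  rw [show r + (d + 1) - (d + 1) = r by omega] at h2
  have hr : d + 1 ≤ r := by nlinarith
  have hr2 : 2 * (d + 2) ≤ r := by nlinarith
  set a := (r + (d + 1)).choose d
  set b := (r + (d + 1)).choose (d + 1)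
  set c := (r + (d + 1)).choose (d + 2)
  set n := r + (d + 1)
  have hn2 : n ≤ 2 * r := by omega
  have h3 : c * ((d + 2) * (d + 1)) = a * ((r + 1) * r) := by
    calc c * ((d + 2) * (d + 1)) = c * (d + 1 + 1) * (d + 1) := by ring
      _ = b * (d + 1) * r := by rw [h2]; ring
      _ = _ := by rw [h1]; ring
  have h4 : q * (a * (K * n)) ≤ q * c - q * (a * (K * n)) := by
    apply Nat.le_sub_of_add_le
    calc q * (a * (K * n)) + q * (a * (K * n)) = 2 * a * n * (q * K) := by ring
      _ ≤ 2 * a * n * n := by gcongr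
      _ ≤ 2 * a * (2 * r) * (2 * r) := by gcongr
      _ ≤ 8 * (a * ((r + 1) * r)) := by
        rw [show 2 * a * (2 * r) * (2 * r) = 8 * (a * (r * r)) by ring]
        gcongr
        omega
      _ = 8 * (c * ((d + 2) * (d + 1))) := by rw [h3]
      _ = 8 * ((d + 2) * (d + 1)) * c := by ring
      _ ≤ 8 * ((d + 2) * (d + 2)) * c := by gcongr; omega
      _ = q * c := by rw [hq]; ring
  have hq0 : 0 < q := by rw [hq]; positivity
  have h5 : 2 * (a * (K * n)) ≤ c := by
    apply Nat.le_of_mul_le_mul_left _ hq0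
    calc q * (2 * (a * (K * n))) = q * (a * (K * n)) + q * (a * (K * n)) := by ring
      _ ≤ q * c := by
        have : q * (a * (K * n)) ≤ q * c := h4.trans (Nat.sub_le _ _)
        omega
  have h6 : 2 * b ≤ c := by
    apply Nat.le_of_mul_le_mul_right _ (show 0 < d + 2 by omega)
    calc 2 * b * (d + 2) = b * (2 * (d + 2)) := by ring
      _ ≤ b * r := by gcongr
      _ = c * (d + 2) := by rw [← h2]
  omega

theorem choose_add_le (k m r : ℕ) :
    (k + m).choose (r + 1) ≤ k.choose (r + 1) + m * (k + m).choose r := by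
  induction m with
  | zero => simp
  | succ m ih =>
    rw [← add_assoc, Nat.choose_succ_succ']
    have : (k + m).choose r ≤ (k + m + 1).choose r := Nat.choose_le_choose r (by omega)
    nlinarith

theorem choose_le_mul_choose {d n k q : ℕ} (hk : 2 * d ≤ k) (h : n ≤ q * k) :
    n.choose d ≤ (2 * q) ^ d * k.choose d := by
  apply Nat.le_of_mul_le_mul_left _ (Nat.factorial_pos d)
  rw [← Nat.descFactorial_eq_factorial_mul_choose]
  calc n.descFactorial d ≤ n ^ d := Nat.descFactorial_le_pow _ _
    _ ≤ (2 * q * (k + 1 - d)) ^ d := by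
      gcongr
      calc n ≤ q * k := h
        _ ≤ q * (2 * (k + 1 - d)) := by gcongr; omega
        _ = _ := by ring
    _ = (2 * q) ^ d * (k + 1 - d) ^ d := mul_pow _ _ _
    _ ≤ (2 * q) ^ d * k.descFactorial d := by gcongr; exact Nat.pow_sub_le_descFactorial _ _
    _ = _ := by rw [Nat.descFactorial_eq_factorial_mul_choose]; ring

/-- The arithmetic of the case of a hyperplane with `k` points, `m` points lying off it: the gain
`C(m, 2) g` beats the loss `m C(n, d)` as soon as `m > 4 L`. -/
theorem choose_le_of_large {d n k m g L : ℕ} (hn : n = k + m)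
    (hg : k.choose d ≤ 2 * g) (hL : n.choose d ≤ L * k.choose d) :
    n.choose (d + 1) ≤ k.choose (d + 1) + m.choose 2 * g + (4 * L + 1) * n ^ d := by
  subst hn
  refine (choose_add_le k m d).trans ?_
  rw [add_assoc]
  gcongr
  rcases Nat.lt_or_ge m (4 * L + 1) with hm | hm
  · have := Nat.choose_le_pow (k + m) d
    calc m * (k + m).choose d ≤ (4 * L + 1) * (k + m) ^ d := by gcongr
      _ ≤ _ := Nat.le_add_left _ _
  · refine le_trans ?_ (Nat.le_add_right _ _)
    have h2 : 2 * L * m ≤ m.choose 2 := by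
      rw [Nat.choose_two_right, Nat.le_div_iff_mul_le (by norm_num)]
      calc 2 * L * m * 2 = m * (4 * L) := by ring
        _ ≤ m * (m - 1) := by gcongr; omega
    calc m * (k + m).choose d ≤ m * (L * (2 * g)) := by gcongr; exact hL.trans (by gcongr)
      _ = 2 * L * m * g := by ring
      _ ≤ _ := by gcongr

end numerics

/-! ### The two cases combined -/

theorem nat_bound {e : ℕ} (q N L : ℕ) (hq : q = 8 * (e + 2 + 2) ^ 2) (hN : N = q ^ 2)
    (hL : L = (2 * q) ^ (e + 2)) (S : Finset (EuclideanSpace ℝ (Fin (e + 2))))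
    (hS : ∀ D ⊆ S, D.card = e + 2 → AI D) :
    S.card.choose (e + 2 + 1) ≤
      numAffSimplex (e + 2) S + (N + (4 * L + 1)) * S.card ^ (e + 2) := by
  classical
  rcases Nat.lt_or_ge S.card N with hlt | hge
  · calc S.card.choose (e + 2 + 1) ≤ S.card ^ (e + 2 + 1) := Nat.choose_le_pow _ _
      _ = S.card * S.card ^ (e + 2) := by ring
      _ ≤ (N + (4 * L + 1)) * S.card ^ (e + 2) := by gcongr; omega
      _ ≤ _ := Nat.le_add_left _ _
  have hq0 : 0 < q := by rw [hq]; positivity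
  by_cases hsm : ∀ D ⊆ S, D.card = e + 2 → (onSpan S D).card ≤ S.card / q
  · have h := choose_le_of_small hq (hN ▸ hge) (Nat.mul_div_le _ _)
      (choose_le_genPos_of_small hS hsm)
    exact (h.trans (card_genPos_le S)).trans (Nat.le_add_right _ _)
  · push Not at hsm
    obtain ⟨D, hDS, hD, hbig⟩ := hsm
    have hk : S.card < q * (onSpan S D).card := by
      rw [mul_comm]; exact (Nat.div_lt_iff_lt_mul hq0).1 hbig
    have hqk : q ≤ (onSpan S D).card := by
      apply Nat.le_of_mul_le_mul_left _ hq0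
      nlinarith
    have hsum : S.card = (onSpan S D).card + (offSpan S D).card :=
      (Finset.card_filter_add_card_filter_not _).symm
    have h2 := two_mul_choose_mul_le (e := e) (k := (onSpan S D).card) (by
      rw [hq] at hqk; exact hqk)
    have hA := choose_add_genPos_le hS hD
    set k := (onSpan S D).card with hkdef
    obtain ⟨g, hg⟩ := Nat.exists_eq_add_of_le (show k.choose e * k ≤ k.choose (e + 2) by omega)
    have hB := choose_two_mul_le_genPos hS (g := g) hg.ge
    have hfin := choose_le_of_large (d := e + 2) (g := g) hsum (by omega)
      (choose_le_mul_choose (by nlinarith) hk.le)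
    rw [← hL] at hfin
    calc _ ≤ _ := hfin
      _ ≤ numAffSimplex (e + 2) S + (4 * L + 1) * S.card ^ (e + 2) := by
        exact Nat.add_le_add_right ((Nat.add_le_add_left hB _).trans hA) _
      _ ≤ _ := Nat.add_le_add_left (Nat.mul_le_mul_right _ (Nat.le_add_left _ _)) _

theorem min_affine_simplexes (d : ℕ) (hd : 3 ≤ d) :
    ∃ c : ℝ, 0 < c ∧
      ∀ (n : ℕ) (S : Finset (EuclideanSpace ℝ (Fin d))), S.card = n →
        (∀ T ∈ S.powersetCard d,
          AffineIndependent ℝ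
            (fun p : (T : Set (EuclideanSpace ℝ (Fin d))) =>
              (p : EuclideanSpace ℝ (Fin d)))) →
        (n.choose (d + 1) : ℝ) - c * (n : ℝ) ^ d ≤ (numAffSimplex d S : ℝ) := by
  obtain ⟨e, rfl⟩ : ∃ e, d = e + 2 := ⟨d - 2, by omega⟩
  refine ⟨((((8 * (e + 2 + 2) ^ 2) ^ 2 +
    (4 * (2 * (8 * (e + 2 + 2) ^ 2)) ^ (e + 2) + 1) : ℕ)) : ℝ), by positivity, ?_⟩
  rintro n S rfl hS
  have h := nat_bound _ _ _ rfl rfl rfl S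
    (fun D hD hc => hS D (Finset.mem_powersetCard.2 ⟨hD, hc⟩))
  rw [sub_le_iff_le_add]
  exact_mod_cast h
end

section
/- There exist a constant c > 0 such that for every set S of n points in ℝ³ with no three points collinear, the number of coplanar quadruples of points of S plus the number of 5-element subsets of S containing no coplanar quadruple is at least C(n, 4) − c·n³. -/
/-!
Call a finite set *generic* if it has no coplanar 4-subset. Adding a point `x` to a generic set `Q`
keeps it generic as soon as `x` avoids `Q` and all planes spanned by triples of `Q`
(`card_le_card_extensions`). Hence generic 5-sets can be counted from below by adding one point at
a time and double counting (`card_mul_le_of_extensions`). Let `n = |S|`.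

* If every plane through three points of `S` contains fewer than `n / 8` points of `S`, two
  extension steps starting from all triples produce of order `n ^ 5` generic 5-sets, which exceeds
  `C(n, 4)` for large `n` (`many_generic_of_no_rich_plane`).
* Otherwise some plane contains a set `A` of `m ≥ n / 8` points of `S`, and leaves out a set of
  `k = n - m` points. There are at least `C(m, 4) ≥ C(n, 4) - k n ^ 3` coplanar quadruples, which
  suffices for bounded `k`. For `k` above a constant, start from two points outside the plane and
  add three points of `A`. A plane through three of the chosen points is not the rich one, so it
  meets `A` within a line, in at most two points; each step thus has at least `m - 12` choices
  (`many_generic_of_rich_plane`). This gives at least `C(k, 2) (m - 12) ^ 3 / 60` generic 5-sets,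
  of order `k ^ 2 n ^ 3`, which beats the loss `k n ^ 3`.
-/

/-! ### Planes and generic sets -/

lemma coplanar_affineSpan_of_card_three {E : Type*} [AddCommGroup E] [Module ℝ E]
    {T : Finset E} (hT : T.card = 3) :
    Coplanar ℝ (affineSpan ℝ (T : Set E) : Set E) := by
  classical
  obtain ⟨a, b, c, -, -, -, rfl⟩ := Finset.card_eq_three.1 hT
  have h := coplanar_triple ℝ a b c
  unfold Coplanar at h ⊢
  rw [← AffineSubspace.direction_eq_vectorSpan, direction_affineSpan]
  rwa [Finset.coe_insert, Finset.coe_insert, Finset.coe_singleton]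

section Geometry

variable {E : Type*} [AddCommGroup E] [Module ℝ E] [FiniteDimensional ℝ E]

/-- A non-collinear subset of a coplanar set spans the same plane. -/
lemma affineSpan_eq_of_coplanar {U W : Set E} (hUW : U ⊆ W) (hU : ¬ Collinear ℝ U)
    (hW : Coplanar ℝ W) : affineSpan ℝ U = affineSpan ℝ W := by
  have hne : U.Nonempty := by
    rw [Set.nonempty_iff_ne_empty]
    rintro rfl
    exact hU (collinear_empty ℝ E)
  apply AffineSubspace.eq_of_direction_eq_of_nonempty_of_le
  · rw [direction_affineSpan, direction_affineSpan]
    apply Submodule.eq_of_le_of_finrank_le (vectorSpan_mono ℝ hUW)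
    rw [collinear_iff_finrank_le_one] at hU
    rw [coplanar_iff_finrank_le_two] at hW
    omega
  · exact (affineSpan_nonempty ℝ).2 hne
  · exact affineSpan_mono ℝ hUW

/-- A set of points of `E` without coplanar quadruples. -/
def Generic (Q : Finset E) : Prop :=
  ∀ R ∈ Q.powersetCard 4, ¬ Coplanar ℝ (R : Set E)

/-- A set of points of `E` without collinear triples. -/
def NoThreeCollinear (S : Finset E) : Prop :=
  ∀ T ∈ S.powersetCard 3, ¬ Collinear ℝ (T : Set E)

open Classical in
lemma Generic.insert {S Q : Finset E} (hS : NoThreeCollinear S) (hQS : Q ⊆ S) (hQ : Generic Q)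
    {x : E} (hx : ∀ T ∈ Q.powersetCard 3, x ∉ affineSpan ℝ (T : Set E)) :
    Generic (insert x Q) := by
  intro R hR hcop
  rw [Finset.mem_powersetCard] at hR
  by_cases hxR : x ∈ R
  · have hT : R.erase x ∈ Q.powersetCard 3 := by
      rw [Finset.mem_powersetCard]
      refine ⟨?_, by rw [Finset.card_erase_of_mem hxR, hR.2]⟩
      rw [← Finset.subset_insert_iff]
      exact hR.1
    have hTS : R.erase x ∈ S.powersetCard 3 := Finset.powersetCard_mono hQS hT
    have heq := affineSpan_eq_of_coplanar (U := ((R.erase x : Finset E) : Set E))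
      (W := (R : Set E)) (by exact_mod_cast Finset.erase_subset x R) (hS _ hTS) hcop
    apply hx _ hT
    rw [heq]
    exact subset_affineSpan ℝ _ (by exact_mod_cast hxR)
  · exact hQ R (Finset.mem_powersetCard.2
      ⟨(Finset.subset_insert_iff_of_notMem hxR).1 hR.1, hR.2⟩) hcop

open Classical in
/-- If every plane through three points of the generic set `Q` contains at most `b` points of `X`,
then all but `C(|Q|, 3) * b + |Q|` points of `X` extend `Q` to a larger generic set. -/
lemma card_le_card_extensions {S X Q : Finset E} (hS : NoThreeCollinear S) (hQS : Q ⊆ S)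
    (hQ : Generic Q) {b : ℕ}
    (hb : ∀ T ∈ Q.powersetCard 3, (X.filter (fun x => x ∈ affineSpan ℝ (T : Set E))).card ≤ b) :
    X.card ≤ (X.filter (fun x => x ∉ Q ∧ Generic (insert x Q))).card
      + (Q.card.choose 3 * b + Q.card) := by
  have hsub : X ⊆ X.filter (fun x => x ∉ Q ∧ Generic (insert x Q)) ∪
      ((Q.powersetCard 3).biUnion (fun T => X.filter (fun x => x ∈ affineSpan ℝ (T : Set E)))
        ∪ Q) := by
    intro x hx
    by_cases hxQ : x ∈ Q
    · simp [hxQ]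
    by_cases hT : ∃ T ∈ Q.powersetCard 3, x ∈ affineSpan ℝ (T : Set E)
    · obtain ⟨T, hT, hxT⟩ := hT
      apply Finset.mem_union_right
      apply Finset.mem_union_left
      exact Finset.mem_biUnion.2 ⟨T, hT, Finset.mem_filter.2 ⟨hx, hxT⟩⟩
    · push Not at hT
      exact Finset.mem_union_left _ (Finset.mem_filter.2 ⟨hx, hxQ, hQ.insert hS hQS hT⟩)
  refine (Finset.card_le_card hsub).trans ((Finset.card_union_le _ _).trans ?_)
  gcongr
  refine (Finset.card_union_le _ _).trans ?_
  gcongr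
  have := Finset.card_biUnion_le_card_mul _ _ b hb
  rwa [Finset.card_powersetCard] at this

end Geometry

lemma generic_of_card_lt {E : Type*} [AddCommGroup E] [Module ℝ E] {Q : Finset E}
    (hQ : Q.card < 4) : Generic Q := by
  intro R hR
  rw [Finset.powersetCard_eq_empty.2 hQ] at hR
  simp at hR

/-! ### Counting generic sets point by point -/

/-- Double counting: if every member of `F` can be extended by one point to a member of `G` in at
least `d` ways, then `|F| * d ≤ |G| * (j + 1)`, as a `(j + 1)`-set arises from at most `j + 1` sets
by adding a point. -/
lemma card_mul_le_of_extensions {α : Type*} [DecidableEq α] (X : Finset α)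
    (F G : Finset (Finset α)) (j d : ℕ) (hG : ∀ R ∈ G, R.card = j + 1)
    (h : ∀ Q ∈ F, d ≤ (X.filter (fun x => x ∉ Q ∧ insert x Q ∈ G)).card) :
    F.card * d ≤ G.card * (j + 1) := by
  classical
  apply Finset.card_mul_le_card_mul (fun Q R => ∃ x ∈ R, Q = R.erase x)
  · intro Q hQ
    refine (h Q hQ).trans ?_
    apply Finset.card_le_card_of_injOn (fun x => insert x Q)
    · intro x hx
      simp only [Finset.coe_filter, Set.mem_ofPred_eq] at hx
      simp only [Finset.bipartiteAbove, Finset.coe_filter, Set.mem_ofPred_eq]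
      exact ⟨hx.2.2, x, Finset.mem_insert_self _ _, (Finset.erase_insert hx.2.1).symm⟩
    · intro x hx y hy hxy
      simp only [Finset.coe_filter, Set.mem_ofPred_eq] at hx hy
      have : x ∈ insert y Q := by
        rw [← show insert x Q = insert y Q from hxy]
        exact Finset.mem_insert_self _ _
      exact (Finset.mem_insert.1 this).resolve_right hx.2.1
  · intro R hR
    rw [← hG R hR]
    refine (Finset.card_le_card (t := R.image (fun x => R.erase x)) ?_).trans
      Finset.card_image_le
    intro Q hQ
    simp only [Finset.bipartiteBelow, Finset.mem_filter] at hQ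
    obtain ⟨-, x, hx, rfl⟩ := hQ
    exact Finset.mem_image_of_mem _ hx

section Counting

variable {E : Type*} [AddCommGroup E] [Module ℝ E] [FiniteDimensional ℝ E]

open Classical in
lemma many_generic_of_no_rich_plane {S : Finset E} (hS : NoThreeCollinear S)
    (hn : 200 ≤ S.card)
    (hpoor : ∀ T ∈ S.powersetCard 3,
      8 * (S.filter (fun x => x ∈ affineSpan ℝ (T : Set E))).card < S.card) :
    S.card.choose 4 ≤ ((S.powersetCard 5).filter Generic).card := by
  have step : ∀ j, 3 ≤ j → j ≤ 4 →
      ((S.powersetCard j).filter Generic).card * (S.card / 4) ≤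
        ((S.powersetCard (j + 1)).filter Generic).card * (j + 1) := by
    intro j hj3 hj4
    apply card_mul_le_of_extensions S
    · intro R hR
      exact (Finset.mem_powersetCard.1 (Finset.mem_filter.1 hR).1).2
    · intro Q hQ
      obtain ⟨hQ, hgen⟩ := Finset.mem_filter.1 hQ
      obtain ⟨hQS, hQj⟩ := Finset.mem_powersetCard.1 hQ
      have key := card_le_card_extensions (X := S) hS hQS hgen (b := S.card / 8) (by
        intro T hT
        have := hpoor T (Finset.powersetCard_mono hQS hT)
        omega)
      have hle : (S.filter (fun x => x ∉ Q ∧ Generic (insert x Q))).card ≤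
          (S.filter (fun x => x ∉ Q ∧
            insert x Q ∈ (S.powersetCard (j + 1)).filter Generic)).card := by
        apply Finset.card_le_card
        intro x hx
        simp only [Finset.mem_filter, Finset.mem_powersetCard] at hx ⊢
        refine ⟨hx.1, hx.2.1, ⟨Finset.insert_subset hx.1 hQS, ?_⟩, hx.2.2⟩
        rw [Finset.card_insert_of_notMem hx.2.1, hQj]
      have hch : Q.card.choose 3 ≤ 4 := by
        rw [hQj]
        interval_cases j <;> decide
      have : Q.card.choose 3 * (S.card / 8) ≤ 4 * (S.card / 8) := Nat.mul_le_mul_right _ hch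
      omega
  have h3 : ((S.powersetCard 3).filter Generic) = S.powersetCard 3 := by
    apply Finset.filter_true_of_mem
    intro Q hQ
    apply generic_of_card_lt
    rw [(Finset.mem_powersetCard.1 hQ).2]
    norm_num
  have s3 := step 3 le_rfl (by norm_num)
  have s4 := step 4 (by norm_num) le_rfl
  rw [h3, Finset.card_powersetCard] at s3
  have hc : S.card.choose 4 * 4 = S.card.choose 3 * (S.card - 3) := Nat.choose_succ_right_eq _ 3
  set n := S.card
  set f := ((S.powersetCard 4).filter Generic).card
  set g := ((S.powersetCard 5).filter Generic).card
  norm_num at s3 s4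
  have hq : 50 ≤ n / 4 := by omega
  have hn4 : n - 3 ≤ 4 * (n / 4) := by omega
  set q := n / 4
  have h1 : n.choose 4 ≤ n.choose 3 * q := by nlinarith [Nat.mul_le_mul_left (n.choose 3) hn4]
  have h2 : n.choose 4 * 50 ≤ f * 4 * 50 := Nat.mul_le_mul_right _ (h1.trans s3)
  have h3 : f * 50 ≤ f * q := Nat.mul_le_mul_left _ hq
  omega

open Classical in
lemma many_generic_of_rich_plane {S T₀ : Finset E} (hS : NoThreeCollinear S)
    (hT₀ : T₀ ∈ S.powersetCard 3) :
    (S.filter (fun x => x ∉ affineSpan ℝ (T₀ : Set E))).card.choose 2 *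
        ((S.filter (fun x => x ∈ affineSpan ℝ (T₀ : Set E))).card - 12) ^ 3 ≤
      60 * ((S.powersetCard 5).filter Generic).card := by
  set P := affineSpan ℝ (T₀ : Set E) with hP
  set A := S.filter (fun x => x ∈ P) with hA
  set B := S.filter (fun x => x ∉ P) with hB
  have hPcop : Coplanar ℝ (P : Set E) :=
    coplanar_affineSpan_of_card_three (Finset.mem_powersetCard.1 hT₀).2
  -- two distinct planes share at most a line, which carries at most two points of `S`
  have hline : ∀ T ∈ S.powersetCard 3, (∃ p ∈ T, p ∉ P) →
      (A.filter (fun x => x ∈ affineSpan ℝ (T : Set E))).card ≤ 2 := by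
    rintro T hT ⟨p, hpT, hpP⟩
    by_contra! hcard
    obtain ⟨U, hU, hU3⟩ := Finset.exists_subset_card_eq (Nat.succ_le_of_lt hcard)
    have hUmem : ∀ x ∈ U, x ∈ S ∧ x ∈ P ∧ x ∈ affineSpan ℝ (T : Set E) := by
      intro x hx
      have := hU hx
      simp only [hA, Finset.mem_filter] at this
      exact ⟨this.1.1, this.1.2, this.2⟩
    have hUcol : ¬ Collinear ℝ (U : Set E) :=
      hS U (Finset.mem_powersetCard.2 ⟨fun x hx => (hUmem x hx).1, hU3⟩)
    have e1 := affineSpan_eq_of_coplanar (U := (U : Set E)) (W := (P : Set E))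
      (fun x hx => (hUmem x hx).2.1) hUcol hPcop
    have e2 := affineSpan_eq_of_coplanar (U := (U : Set E))
      (W := (affineSpan ℝ (T : Set E) : Set E))
      (fun x hx => (hUmem x hx).2.2) hUcol
      (coplanar_affineSpan_of_card_three (Finset.mem_powersetCard.1 hT).2)
    rw [AffineSubspace.affineSpan_coe] at e1 e2
    apply hpP
    rw [← e1, e2]
    exact subset_affineSpan ℝ _ (by exact_mod_cast hpT)
  -- generic `j`-sets with exactly two points outside the plane `P`
  let H : ℕ → Finset (Finset E) := fun j =>
    (S.powersetCard j).filter (fun Q => Generic Q ∧ (Q.filter (fun x => x ∉ P)).card = 2)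
  have step : ∀ j, 2 ≤ j → j ≤ 4 → (H j).card * (A.card - 12) ≤ (H (j + 1)).card * (j + 1) := by
    intro j hj2 hj4
    apply card_mul_le_of_extensions A
    · intro R hR
      exact (Finset.mem_powersetCard.1 (Finset.mem_filter.1 hR).1).2
    · intro Q hQ
      obtain ⟨hQ, hgen, hQ2⟩ := Finset.mem_filter.1 hQ
      obtain ⟨hQS, hQj⟩ := Finset.mem_powersetCard.1 hQ
      have key := card_le_card_extensions (X := A) hS hQS hgen (b := 2) (by
        intro T hT
        apply hline T (Finset.powersetCard_mono hQS hT)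
        -- at most `4 - 2 = 2` points of `Q` lie in `P`, so one of the three points of `T` does not
        by_contra! hno
        obtain ⟨hTQ, hT3⟩ := Finset.mem_powersetCard.1 hT
        have h1 : T ⊆ Q.filter (fun x => x ∈ P) :=
          fun x hx => Finset.mem_filter.2 ⟨hTQ hx, hno x hx⟩
        have h2 := Finset.card_le_card h1
        have h3 := Finset.card_filter_add_card_filter_not (s := Q) (fun x => x ∈ P)
        omega)
      have hle : (A.filter (fun x => x ∉ Q ∧ Generic (insert x Q))).card ≤
          (A.filter (fun x => x ∉ Q ∧ insert x Q ∈ H (j + 1))).card := by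
        apply Finset.card_le_card
        intro x hx
        obtain ⟨hxA, hxQ, hxg⟩ := Finset.mem_filter.1 hx
        obtain ⟨hxS, hxP⟩ := Finset.mem_filter.1 hxA
        refine Finset.mem_filter.2 ⟨hxA, hxQ, Finset.mem_filter.2
          ⟨Finset.mem_powersetCard.2 ⟨Finset.insert_subset hxS hQS, ?_⟩, hxg, ?_⟩⟩
        · rw [Finset.card_insert_of_notMem hxQ, hQj]
        · rw [Finset.filter_insert, if_neg (not_not.2 hxP), hQ2]
      have hch : Q.card.choose 3 ≤ 4 := by
        rw [hQj]
        interval_cases j <;> decide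
      omega
  have h2 : B.card.choose 2 ≤ (H 2).card := by
    rw [← Finset.card_powersetCard]
    apply Finset.card_le_card
    intro Q hQ
    obtain ⟨hQB, hQ2⟩ := Finset.mem_powersetCard.1 hQ
    refine Finset.mem_filter.2 ⟨Finset.mem_powersetCard.2
      ⟨hQB.trans (Finset.filter_subset _ _), hQ2⟩, generic_of_card_lt (by omega), ?_⟩
    rw [Finset.filter_true_of_mem (fun x hx => (Finset.mem_filter.1 (hQB hx)).2), hQ2]
  have h5 : (H 5).card ≤ ((S.powersetCard 5).filter Generic).card := by
    apply Finset.card_le_card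
    intro Q hQ
    obtain ⟨hQ, hgen, -⟩ := Finset.mem_filter.1 hQ
    exact Finset.mem_filter.2 ⟨hQ, hgen⟩
  have s2 := step 2 le_rfl (by norm_num)
  have s3 := step 3 (by norm_num) (by norm_num)
  have s4 := step 4 (by norm_num) le_rfl
  norm_num at s2 s3 s4
  set d := A.card - 12
  calc B.card.choose 2 * d ^ 3 ≤ (H 2).card * d ^ 3 := Nat.mul_le_mul_right _ h2
    _ = (H 2).card * d * d * d := by ring
    _ ≤ (H 3).card * 3 * d * d := by gcongr
    _ = (H 3).card * d * 3 * d := by ring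
    _ ≤ (H 4).card * 4 * 3 * d := by gcongr
    _ = (H 4).card * d * 12 := by ring
    _ ≤ (H 5).card * 5 * 12 := by gcongr
    _ ≤ ((S.powersetCard 5).filter Generic).card * 5 * 12 := by gcongr
    _ = _ := by ring

end Counting

/-! ### Numerical estimates and conclusion -/

lemma choose_four_add_le (m k : ℕ) : (m + k).choose 4 ≤ m.choose 4 + k * (m + k) ^ 3 := by
  induction k with
  | zero => simp
  | succ k ih =>
    have h1 : (m + (k + 1)).choose 4 = (m + k).choose 3 + (m + k).choose 4 :=
      Nat.choose_succ_succ (m + k) 3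
    have h2 : (m + k).choose 3 ≤ (m + k) ^ 3 := Nat.choose_le_pow _ _
    have h3 : (m + k) ^ 3 ≤ (m + (k + 1)) ^ 3 := Nat.pow_le_pow_left (by omega) 3
    have h4 := Nat.mul_le_mul_left k h3
    rw [h1]
    nlinarith

/-- The numerical trade-off for a plane with `m` points, missing `k` points: either `k` is bounded,
or the `g` generic 5-sets make up for the deficit `k * (m + k) ^ 3`. -/
lemma choose_four_le_of_rich {m k g : ℕ} (hn : 200 ≤ m + k) (hm : m + k ≤ 8 * m)
    (hg : k.choose 2 * (m - 12) ^ 3 ≤ 60 * g) :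
    (m + k).choose 4 ≤ m.choose 4 + g + 1000000 * (m + k) ^ 3 := by
  have h := choose_four_add_le m k
  by_cases hk : k ≤ 1000000
  · have := Nat.mul_le_mul_right ((m + k) ^ 3) hk
    generalize (m + k) ^ 3 = N at *
    linarith
  · have hd : m + k ≤ 16 * (m - 12) := by omega
    have hd3 : (m + k) ^ 3 ≤ 4096 * (m - 12) ^ 3 := by
      calc (m + k) ^ 3 ≤ (16 * (m - 12)) ^ 3 := Nat.pow_le_pow_left hd 3
        _ = _ := by ring
    have hc : k.choose 2 * 2 = k * (k - 1) := by
      simpa using Nat.choose_succ_right_eq k 1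
    -- `500000` exceeds the product `60 * 4096` of the constants in `hg` and `hd3`
    have hc' : k * 500000 ≤ k.choose 2 := by
      have hk1 : 1000000 ≤ k - 1 := by omega
      generalize k - 1 = l at *
      have := Nat.mul_le_mul_left k hk1
      linarith
    have h1 : k * (m + k) ^ 3 ≤ k * (4096 * (m - 12) ^ 3) := Nat.mul_le_mul_left k hd3
    have h2 := Nat.mul_le_mul_right ((m - 12) ^ 3) hc'
    have h3 : k * (m + k) ^ 3 ≤ g := by nlinarith
    have h4 := Nat.zero_le (1000000 * (m + k) ^ 3)
    linarith

open Classical in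
theorem coplanar_quadruples_bound :
    ∃ c : ℝ, 0 < c ∧
      ∀ (n : ℕ) (S : Finset (EuclideanSpace ℝ (Fin 3))), S.card = n →
        (∀ T ∈ S.powersetCard 3,
          ¬ Collinear ℝ (T : Set (EuclideanSpace ℝ (Fin 3)))) →
        (n.choose 4 : ℝ) - c * (n : ℝ) ^ 3 ≤
          (((S.powersetCard 4).filter
              (fun T => Coplanar ℝ (T : Set (EuclideanSpace ℝ (Fin 3))))).card : ℝ) +
          (((S.powersetCard 5).filter
              (fun T : Finset (EuclideanSpace ℝ (Fin 3)) =>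
                ∀ Q ∈ T.powersetCard 4,
                  ¬ Coplanar ℝ (Q : Set (EuclideanSpace ℝ (Fin 3))))).card : ℝ) := by
  refine ⟨1000000, by norm_num, ?_⟩
  intro n S hn hS
  have hgeq : ((S.powersetCard 5).filter
      (fun T : Finset (EuclideanSpace ℝ (Fin 3)) =>
        ∀ Q ∈ T.powersetCard 4, ¬ Coplanar ℝ (Q : Set (EuclideanSpace ℝ (Fin 3))))) =
      (S.powersetCard 5).filter Generic := by
    ext T
    simp only [Finset.mem_filter, Generic]
  rw [hgeq]
  -- The first filter of the statement ranges over the image of `S.powersetCard 4` under the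
  -- injective coercion to `Set`, written with the monad operations of `Finset`.
  have hcoe : ((S.powersetCard 4).filter
      (fun T : Finset (EuclideanSpace ℝ (Fin 3)) =>
        Coplanar ℝ (T : Set (EuclideanSpace ℝ (Fin 3))))).card ≤
      ((S.powersetCard 4).filter
        (fun T => Coplanar ℝ (T : Set (EuclideanSpace ℝ (Fin 3))))).card := by
    apply Finset.card_le_card_of_injOn
      (fun T : Finset (EuclideanSpace ℝ (Fin 3)) => (T : Set (EuclideanSpace ℝ (Fin 3))))
    · intro T hT
      obtain ⟨hT, hTc⟩ := Finset.mem_filter.1 (Finset.mem_coe.1 hT)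
      refine Finset.mem_coe.2 (Finset.mem_filter.2 ⟨?_, hTc⟩)
      exact Finset.mem_sup.2 ⟨T, hT, Finset.mem_singleton_self _⟩
    · exact Finset.coe_injective.injOn
  set f := ((S.powersetCard 4).filter
      (fun T => Coplanar ℝ (T : Set (EuclideanSpace ℝ (Fin 3))))).card
  set g := ((S.powersetCard 5).filter Generic).card
  suffices hmain : n.choose 4 ≤ f + g + 1000000 * n ^ 3 by
    have : (n.choose 4 : ℝ) ≤ f + g + 1000000 * (n : ℝ) ^ 3 := by exact_mod_cast hmain
    linarith
  by_cases hsmall : n < 200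
  · have h1 : n.choose 4 ≤ n ^ 4 := Nat.choose_le_pow _ _
    have h2 : n ^ 4 ≤ 200 * n ^ 3 := by
      rw [pow_succ' n 3]
      exact Nat.mul_le_mul_right _ hsmall.le
    omega
  push Not at hsmall
  by_cases hrich : ∃ T ∈ S.powersetCard 3,
      S.card ≤ 8 * (S.filter (fun x => x ∈ affineSpan ℝ
        (T : Set (EuclideanSpace ℝ (Fin 3))))).card
  · obtain ⟨T, hT, hrich⟩ := hrich
    have hgen := many_generic_of_rich_plane hS hT
    have hsum := Finset.card_filter_add_card_filter_not (s := S)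
      (fun x => x ∈ affineSpan ℝ (T : Set (EuclideanSpace ℝ (Fin 3))))
    have hcop : (S.filter (fun x => x ∈ affineSpan ℝ
        (T : Set (EuclideanSpace ℝ (Fin 3))))).card.choose 4 ≤ f := by
      refine le_trans ?_ hcoe
      rw [← Finset.card_powersetCard]
      apply Finset.card_le_card
      intro Q hQ
      obtain ⟨hQA, hQ4⟩ := Finset.mem_powersetCard.1 hQ
      refine Finset.mem_filter.2 ⟨Finset.mem_powersetCard.2
        ⟨hQA.trans (Finset.filter_subset _ _), hQ4⟩, ?_⟩
      exact (coplanar_affineSpan_of_card_three (Finset.mem_powersetCard.1 hT).2).subset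
        (fun x hx => (Finset.mem_filter.1 (hQA hx)).2)
    have := choose_four_le_of_rich (by omega) (by omega) hgen
    rw [hsum, hn] at this
    omega
  · push Not at hrich
    have := many_generic_of_no_rich_plane hS (by omega) hrich
    rw [hn] at this
    omega
end

section
/- For every integer k ≥ 3 there exists a constant c = c(k) > 0 such that for every (k−1)-linear hypergraph H = (X, 𝓔) on n vertices, |𝓔_k| + |𝓔⁰_{k+1}| ≥ C(n, k) − c·n^{k−1}. -/
/-! Call a `(k+1)`-set *bad* if one of its `k`-subsets lies in an edge. By `(k-1)`-linearity a
`(k-1)`-set `Z` lies in at most one edge, `edgeSpan 𝓔 Z`. Fix a small `η = η(k)` and take `n` large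
(small `n` are absorbed by the constant).

If every edge has at most `η n` vertices, there are at most `η n ^ k` sets in `𝓔_k`, hence at most
`η n ^ (k+1)` bad sets, and most of the `C(n, k+1)` sets are not bad
(`choose_le_zeroE_of_small_edges`).

Otherwise let `E` be an edge with more than `η n` vertices and put `t = n - |E|`. All but
`t n ^ (k-1)` of the `k`-sets are already contained in `E`. Consider the `(k+1)`-sets `P ∪ R` with
`P` a pair outside `E` and `R` a `(k-1)`-subset of `E`. Such a set is bad only if some edge
`E' ≠ E` contains `P` and meets `R` in exactly `k-2` points, which must then be all of `E' ∩ E`.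
As `E'` is determined by `P` and `k-3` of these points, there are at most `n ^ (k-2)` bad `R` for
each `P` (`choose_two_mul_le_zeroE`). Hence `|𝓔⁰_{k+1}| ≥ γ C(t, 2) n ^ (k-1)` for some
`γ = γ(k) > 0`, and `γ C(t, 2) - t` is bounded below. -/

open Finset

/-- A hypergraph (edge set `𝓔` over vertex type `α`) is `q`-linear if any two
distinct edges intersect in fewer than `q` vertices. -/
def qLinear {α : Type*} [DecidableEq α] (q : ℕ) (𝓔 : Finset (Finset α)) : Prop :=
  ∀ E ∈ 𝓔, ∀ E' ∈ 𝓔, E ≠ E' → (E ∩ E').card < q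

/-- `𝓔_k`: the family of `k`-element sets contained in some edge of `𝓔`. -/
def secE {α : Type*} [DecidableEq α] (k : ℕ) (𝓔 : Finset (Finset α)) :
    Finset (Finset α) :=
  𝓔.biUnion fun E => E.powersetCard k

/-- `𝓔⁰_{k+1}` (relative to vertex set `V`): the `(k+1)`-element subsets of `V`
none of whose `k`-element subsets belongs to `𝓔_k`. -/
def zeroE {α : Type*} [DecidableEq α] (V : Finset α) (k : ℕ)
    (𝓔 : Finset (Finset α)) : Finset (Finset α) :=
  (V.powersetCard (k + 1)).filter fun F => ∀ G ∈ F.powersetCard k, G ∉ secE k 𝓔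

/-- The union of all edges containing `Z`. In a `q`-linear hypergraph, if `Z` has at least `q`
elements, this is the unique edge containing `Z`, or `∅` if there is none. -/
def edgeSpan {α : Type*} [DecidableEq α] (𝓔 : Finset (Finset α)) (Z : Finset α) : Finset α :=
  (𝓔.filter fun E => Z ⊆ E).biUnion id

lemma edgeSpan_eq {α : Type*} [DecidableEq α] {q : ℕ} {𝓔 : Finset (Finset α)}
    (h : qLinear q 𝓔) {Z E : Finset α} (hE : E ∈ 𝓔) (hZ : Z ⊆ E) (hq : q ≤ Z.card) :
    edgeSpan 𝓔 Z = E := by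
  have : 𝓔.filter (fun E => Z ⊆ E) = {E} := by
    ext E'
    simp only [mem_filter, mem_singleton]
    constructor
    · rintro ⟨h1, h2⟩
      by_contra hne
      have h3 := h E' h1 E hE hne
      have h4 := card_le_card (subset_inter h2 hZ)
      omega
    · rintro rfl
      exact ⟨hE, hZ⟩
  simp [edgeSpan, this]

lemma choose_two_mul_le_zeroE (j n : ℕ) (𝓔 : Finset (Finset (Fin n)))
    (h : qLinear (j + 2) 𝓔) (E : Finset (Fin n)) (hE : E ∈ 𝓔) :
    (n - E.card).choose 2 * E.card.choose (j + 2) ≤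
      (zeroE univ (j + 3) 𝓔).card + (n - E.card).choose 2 * n ^ (j + 1) := by
  classical
  set S := powersetCard 2 Eᶜ ×ˢ powersetCard (j + 2) E with hS
  have hScard : S.card = (n - E.card).choose 2 * E.card.choose (j + 2) := by
    simp [hS, card_compl]
  rw [← hScard, ← card_filter_add_card_filter_not (s := S)
    (fun p => p.1 ∪ p.2 ∈ zeroE univ (j + 3) 𝓔)]
  refine add_le_add ?_ ?_
  · refine card_le_card_of_injOn (fun p => p.1 ∪ p.2) ?_ ?_
    · intro p hp
      exact (mem_filter.1 hp).2
    · -- the pair and the part inside `E` are recovered by intersecting with `Eᶜ` and `E`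
      rintro ⟨P, R⟩ hp ⟨P', R'⟩ hp' heq
      simp only [coe_filter, Set.mem_ofPred_eq, hS, mem_product, mem_powersetCard] at hp hp'
      obtain ⟨⟨⟨hP, -⟩, hR, -⟩, -⟩ := hp
      obtain ⟨⟨⟨hP', -⟩, hR', -⟩, -⟩ := hp'
      simp only [Finset.ext_iff, mem_union, subset_iff, mem_compl] at *
      simp only [Prod.mk.injEq, Finset.ext_iff]
      constructor <;> intro a <;> grind
  · have hsub : S.filter (fun p => ¬ (p.1 ∪ p.2 ∈ zeroE univ (j + 3) 𝓔)) ⊆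
        (powersetCard 2 Eᶜ ×ˢ (powersetCard j (univ : Finset (Fin n)) ×ˢ
          (univ : Finset (Fin n)))).image
          (fun q => (q.1, insert q.2.2 (edgeSpan 𝓔 (q.1 ∪ q.2.1) ∩ E))) := by
      rintro ⟨P, R⟩ hp
      simp only [mem_filter, hS, mem_product, mem_powersetCard] at hp
      obtain ⟨⟨⟨hP, hPc⟩, hR, hRc⟩, hz⟩ := hp
      have hPE : Disjoint P E := disjoint_left.2 fun a ha => mem_compl.1 (hP ha)
      have hPR : Disjoint P R := hPE.mono_right hR
      have hF : (P ∪ R).card = j + 3 + 1 := by rw [card_union_of_disjoint hPR]; omega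
      simp only [zeroE, mem_filter, mem_powersetCard, subset_univ, true_and, hF] at hz
      push Not at hz
      obtain ⟨G, ⟨hGF, hGc⟩, hG⟩ := hz
      simp only [secE, mem_biUnion, mem_powersetCard] at hG
      obtain ⟨E', hE', hGE', -⟩ := hG
      have hne : E' ≠ E := by
        rintro rfl
        have : G ⊆ R := fun a ha => by
          rcases mem_union.1 (hGF ha) with h1 | h1
          · exact absurd (hGE' ha) (disjoint_left.1 hPE h1)
          · exact h1
        have := card_le_card this
        omega
      have hI := h E' hE' E hE hne
      have hsubI : G ∩ R ⊆ E' ∩ E := inter_subset_inter hGE' hR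
      have hc1 := card_le_card hsubI
      have hc2 : G.card = (G ∩ P).card + (G ∩ R).card := by
        rw [← card_union_of_disjoint (hPR.mono inter_subset_right inter_subset_right),
          ← inter_union_distrib_left, inter_eq_left.2 hGF]
      have hc3 : (G ∩ P).card ≤ P.card := card_le_card inter_subset_right
      have hGP : G ∩ P = P := eq_of_subset_of_card_le inter_subset_right (by omega)
      have hGR : G ∩ R = E' ∩ E := eq_of_subset_of_card_le hsubI (by omega)
      have hPE' : P ⊆ E' := (inter_eq_right.1 hGP).trans hGE'
      obtain ⟨Z, hZ, hZc⟩ := exists_subset_card_eq (s := G ∩ R) (n := j) (by omega)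
      have hw : (R \ (G ∩ R)).card = 1 := by
        rw [card_sdiff_of_subset inter_subset_right]; omega
      obtain ⟨w, hw⟩ := card_eq_one.1 hw
      have hRw : R = insert w (G ∩ R) := by
        have := sdiff_union_of_subset (inter_subset_right : G ∩ R ⊆ R)
        rw [hw] at this
        rw [insert_eq]; exact this.symm
      have hspan : edgeSpan 𝓔 (P ∪ Z) = E' := by
        refine edgeSpan_eq h hE' (union_subset hPE'
          ((hZ.trans inter_subset_left).trans hGE')) ?_
        rw [card_union_of_disjoint (hPR.mono_right (hZ.trans inter_subset_right))]
        omega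
      refine mem_image.2 ⟨(P, Z, w), ?_, ?_⟩
      · simp [mem_product, mem_powersetCard, hP, hPc, hZc]
      · simp only [hspan, ← hGR, ← hRw]
    refine (card_le_card hsub).trans (card_image_le.trans ?_)
    simp only [card_product, card_powersetCard, card_compl, Fintype.card_fin, card_univ]
    rw [pow_succ]
    gcongr
    exact Nat.choose_le_pow n j

lemma card_secE_le (j n m : ℕ) (𝓔 : Finset (Finset (Fin n)))
    (h : qLinear (j + 2) 𝓔) (hm : ∀ E ∈ 𝓔, E.card ≤ m) :
    (secE (j + 3) 𝓔).card ≤ n ^ (j + 2) * m := by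
  classical
  have hspan : ∀ Z ∈ powersetCard (j + 2) (univ : Finset (Fin n)), (edgeSpan 𝓔 Z).card ≤ m := by
    intro Z hZ
    by_cases hex : ∃ E ∈ 𝓔, Z ⊆ E
    · obtain ⟨E, hE, hZE⟩ := hex
      rw [edgeSpan_eq h hE hZE (mem_powersetCard.1 hZ).2.ge]
      exact hm E hE
    · have : 𝓔.filter (fun E => Z ⊆ E) = ∅ :=
        filter_eq_empty_iff.2 fun E hE hZE => hex ⟨E, hE, hZE⟩
      simp [edgeSpan, this]
  have hsub : secE (j + 3) 𝓔 ⊆ (powersetCard (j + 2) (univ : Finset (Fin n))).biUnion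
      (fun Z => (edgeSpan 𝓔 Z).image (fun w => insert w Z)) := by
    intro G hG
    simp only [secE, mem_biUnion, mem_powersetCard] at hG
    obtain ⟨E, hE, hGE, hGc⟩ := hG
    obtain ⟨w, hw⟩ := card_pos.1 (by omega : 0 < G.card)
    have hc : (G.erase w).card = j + 2 := by rw [card_erase_of_mem hw]; omega
    refine mem_biUnion.2 ⟨G.erase w, by simp [mem_powersetCard, hc], mem_image.2 ⟨w, ?_, ?_⟩⟩
    · rw [edgeSpan_eq h hE ((erase_subset _ _).trans hGE) hc.ge]
      exact hGE hw
    · exact insert_erase hw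
  refine (card_le_card hsub).trans ((card_biUnion_le_card_mul _ _ m fun Z hZ =>
    card_image_le.trans (hspan Z hZ)).trans ?_)
  rw [card_powersetCard, card_univ, Fintype.card_fin]
  gcongr
  exact Nat.choose_le_pow n (j + 2)

lemma choose_succ_le_zeroE_add (k n : ℕ) (𝓔 : Finset (Finset (Fin n))) :
    n.choose (k + 1) ≤ (zeroE univ k 𝓔).card + (secE k 𝓔).card * n := by
  classical
  have hc : n.choose (k + 1) = (powersetCard (k + 1) (univ : Finset (Fin n))).card := by simp
  rw [hc, ← card_filter_add_card_filter_not
    (s := powersetCard (k + 1) (univ : Finset (Fin n)))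
    (fun F => ∀ G ∈ F.powersetCard k, G ∉ secE k 𝓔)]
  refine add_le_add (card_le_card fun F hF => by simpa [zeroE] using hF) ?_
  have hsub : (powersetCard (k + 1) (univ : Finset (Fin n))).filter
      (fun F => ¬ ∀ G ∈ F.powersetCard k, G ∉ secE k 𝓔) ⊆
      (secE k 𝓔 ×ˢ (univ : Finset (Fin n))).image (fun q => insert q.2 q.1) := by
    intro F hF
    simp only [mem_filter, mem_powersetCard, subset_univ, true_and] at hF
    obtain ⟨hFc, hF⟩ := hF
    push Not at hF
    obtain ⟨G, ⟨hGF, hGc⟩, hG⟩ := hF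
    have hw : (F \ G).card = 1 := by
      rw [card_sdiff_of_subset hGF]; omega
    obtain ⟨w, hw⟩ := card_eq_one.1 hw
    refine mem_image.2 ⟨(G, w), by simp [hG], ?_⟩
    have := sdiff_union_of_subset hGF
    rw [hw] at this
    rw [insert_eq]; exact this
  refine (card_le_card hsub).trans (card_image_le.trans ?_)
  simp [card_product]

lemma choose_add_le_s2 (e t k : ℕ) :
    (e + t).choose (k + 1) ≤ e.choose (k + 1) + t * (e + t) ^ k := by
  induction t with
  | zero => simp
  | succ t ih =>
    have h1 : (e + (t + 1)).choose (k + 1) = (e + t).choose k + (e + t).choose (k + 1) :=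
      Nat.choose_succ_succ _ _
    have h2 : (e + t).choose k ≤ (e + (t + 1)) ^ k :=
      (Nat.choose_le_pow _ _).trans (Nat.pow_le_pow_left (by omega) k)
    have h3 : t * (e + t) ^ k ≤ t * (e + (t + 1)) ^ k :=
      Nat.mul_le_mul_left t (Nat.pow_le_pow_left (by omega) k)
    rw [h1, add_mul, one_mul]
    omega

lemma choose_le_secE (k n : ℕ) (𝓔 : Finset (Finset (Fin n))) (E : Finset (Fin n))
    (hE : E ∈ 𝓔) : E.card.choose k ≤ (secE k 𝓔).card := by
  rw [← card_powersetCard]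
  exact card_le_card (subset_biUnion_of_mem (fun E : Finset (Fin n) => E.powersetCard k) hE)

lemma half_pow_le_choose (e r : ℕ) (h : 2 * r ≤ e) :
    ((e : ℝ) / 2) ^ r / r.factorial ≤ (e.choose r : ℝ) := by
  have h1 : (((e + 1 - r : ℕ) : ℝ)) ^ r ≤ (r.factorial : ℝ) * e.choose r := by
    rw [← Nat.cast_mul, ← Nat.descFactorial_eq_factorial_mul_choose]
    exact_mod_cast Nat.pow_sub_le_descFactorial e r
  have h2 : (e : ℝ) / 2 ≤ ((e + 1 - r : ℕ) : ℝ) := by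
    have : (e : ℝ) ≤ 2 * ((e + 1 - r : ℕ) : ℝ) := by
      exact_mod_cast (by omega : e ≤ 2 * (e + 1 - r))
    linarith
  rw [div_le_iff₀ (by positivity)]
  calc ((e : ℝ) / 2) ^ r ≤ (((e + 1 - r : ℕ) : ℝ)) ^ r := by gcongr
    _ ≤ _ := by linarith

/-- If all edges have at most `η n` vertices, with `η = 1 / (2 ^ (k+2) (k+1)!)`, and `n` is large,
then `𝓔⁰_{k+1}` alone has at least `C(n, k)` elements; here `k = j + 3`. -/
lemma choose_le_zeroE_of_small_edges (j n : ℕ) (𝓔 : Finset (Finset (Fin n)))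
    (h : qLinear (j + 2) 𝓔) (η : ℝ) (hη : η = 1 / (2 ^ (j + 5) * (j + 4).factorial))
    (hn : 2 * (j + 4) ≤ n) (hn' : 1 ≤ η * n) (hm : ∀ E ∈ 𝓔, (E.card : ℝ) ≤ η * n) :
    (n.choose (j + 3) : ℝ) ≤ (zeroE univ (j + 3) 𝓔).card := by
  have hη0 : 0 < η := by rw [hη]; positivity
  have h1 := card_secE_le j n ⌊η * n⌋₊ 𝓔 h (fun E hE => Nat.le_floor (hm E hE))
  have h2 := choose_succ_le_zeroE_add (j + 3) n 𝓔
  have h1' : ((secE (j + 3) 𝓔).card : ℝ) ≤ n ^ (j + 2) * (η * n) := by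
    calc ((secE (j + 3) 𝓔).card : ℝ) ≤ n ^ (j + 2) * (⌊η * n⌋₊ : ℝ) := by exact_mod_cast h1
      _ ≤ _ := by gcongr; exact Nat.floor_le (by positivity)
  have h2' : (n.choose (j + 4) : ℝ) ≤
      (zeroE univ (j + 3) 𝓔).card + (secE (j + 3) 𝓔).card * n := by exact_mod_cast h2
  have h3 := half_pow_le_choose n (j + 4) hn
  have h4 : ((n : ℝ) / 2) ^ (j + 4) / (j + 4).factorial = 2 * (η * n ^ (j + 4)) := by
    rw [hη, div_pow, pow_succ (2 : ℝ) (j + 4)]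
    field_simp
  have h5 : (n.choose (j + 3) : ℝ) ≤ n ^ (j + 3) := by exact_mod_cast Nat.choose_le_pow n (j + 3)
  have h6 : (n : ℝ) ^ (j + 3) ≤ η * n ^ (j + 4) := by
    calc (n : ℝ) ^ (j + 3) = 1 * n ^ (j + 3) := by ring
      _ ≤ (η * n) * n ^ (j + 3) := by gcongr
      _ = _ := by ring
  have h7 : ((secE (j + 3) 𝓔).card : ℝ) * n ≤ η * n ^ (j + 4) := by
    calc ((secE (j + 3) 𝓔).card : ℝ) * n ≤ n ^ (j + 2) * (η * n) * n := by gcongr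
      _ = _ := by ring
  linarith

/-- The bound when some edge `E` has at least `η n` vertices and `n` is large; here `k = j + 3`. -/
lemma bound_of_large_edge (j n : ℕ) (𝓔 : Finset (Finset (Fin n)))
    (h : qLinear (j + 2) 𝓔) (η γ : ℝ) (hη : 0 < η)
    (hγ : γ = (η / 2) ^ (j + 2) / (2 * (j + 2).factorial))
    (hn : 2 * (j + 2) ≤ η * n) (hn' : 1 ≤ γ * n)
    (E : Finset (Fin n)) (hE : E ∈ 𝓔) (hEc : η * n ≤ E.card) :
    (n.choose (j + 3) : ℝ) - (1 + γ / 2) ^ 2 / (2 * γ) * n ^ (j + 2) ≤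
      (secE (j + 3) 𝓔).card + (zeroE univ (j + 3) 𝓔).card := by
  have hγ0 : 0 < γ := by rw [hγ]; positivity
  have hen : E.card ≤ n := by simpa using card_le_univ E
  obtain ⟨t, ht⟩ := Nat.exists_eq_add_of_le hen
  have hA := choose_two_mul_le_zeroE j n 𝓔 h E hE
  have hB := choose_add_le_s2 E.card t (j + 2)
  rw [← ht] at hB
  have hC := choose_le_secE (j + 3) n 𝓔 E hE
  have hte : n - E.card = t := by omega
  rw [hte] at hA
  have hA' : (t.choose 2 : ℝ) * E.card.choose (j + 2) ≤
      (zeroE univ (j + 3) 𝓔).card + t.choose 2 * n ^ (j + 1) := by exact_mod_cast hA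
  have hB' : (n.choose (j + 3) : ℝ) ≤ E.card.choose (j + 3) + t * n ^ (j + 2) := by
    exact_mod_cast hB
  have hC' : (E.card.choose (j + 3) : ℝ) ≤ (secE (j + 3) 𝓔).card := by exact_mod_cast hC
  have h1 := half_pow_le_choose E.card (j + 2) (by
    have : (2 * (j + 2) : ℝ) ≤ E.card := hn.trans hEc
    exact_mod_cast this)
  have h2 : 2 * (γ * n ^ (j + 2)) ≤ ((E.card : ℝ) / 2) ^ (j + 2) / (j + 2).factorial := by
    calc 2 * (γ * n ^ (j + 2)) = (η * n / 2) ^ (j + 2) / (j + 2).factorial := by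
          rw [hγ, mul_div_right_comm, mul_pow]; field_simp
      _ ≤ _ := by gcongr
  have h3 : (n : ℝ) ^ (j + 1) ≤ γ * n ^ (j + 2) := by
    calc (n : ℝ) ^ (j + 1) = 1 * n ^ (j + 1) := by ring
      _ ≤ (γ * n) * n ^ (j + 1) := by gcongr
      _ = _ := by ring
  have h4 : (t.choose 2 : ℝ) * (γ * n ^ (j + 2)) ≤ (zeroE univ (j + 3) 𝓔).card := by
    have : (t.choose 2 : ℝ) * (γ * n ^ (j + 2)) ≤
        t.choose 2 * (E.card.choose (j + 2) - n ^ (j + 1)) := by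
      gcongr
      linarith
    linarith
  -- minimising the quadratic `γ t (t - 1) / 2 - t` over real `t`
  have h5 : (t : ℝ) - (1 + γ / 2) ^ 2 / (2 * γ) ≤ t.choose 2 * γ := by
    rw [Nat.cast_choose_two]
    have : 0 ≤ (γ * t - (1 + γ / 2)) ^ 2 / (2 * γ) := by positivity
    have e : (γ * t - (1 + γ / 2)) ^ 2 / (2 * γ) =
        (t : ℝ) * (t - 1) / 2 * γ - t + (1 + γ / 2) ^ 2 / (2 * γ) := by
      field_simp; ring
    linarith
  have h6 := mul_le_mul_of_nonneg_right h5 (by positivity : (0 : ℝ) ≤ n ^ (j + 2))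
  rw [sub_mul, mul_assoc (t.choose 2 : ℝ)] at h6
  linarith

theorem min_semisimplexes (k : ℕ) (hk : 3 ≤ k) :
    ∃ c : ℝ, 0 < c ∧ ∀ (n : ℕ) (𝓔 : Finset (Finset (Fin n))),
      qLinear (k - 1) 𝓔 →
        ((n.choose k : ℝ)) - c * (n : ℝ) ^ (k - 1) ≤
          ((secE k 𝓔).card : ℝ) + ((zeroE Finset.univ k 𝓔).card : ℝ) := by
  obtain ⟨j, rfl⟩ : ∃ j, k = j + 3 := ⟨k - 3, by omega⟩
  have hj : j + 3 - 1 = j + 2 := rfl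
  rw [hj]
  obtain ⟨η, hη⟩ : ∃ η : ℝ, η = 1 / (2 ^ (j + 5) * (j + 4).factorial) := ⟨_, rfl⟩
  obtain ⟨γ, hγ⟩ : ∃ γ : ℝ, γ = (η / 2) ^ (j + 2) / (2 * (j + 2).factorial) := ⟨_, rfl⟩
  have hη0 : 0 < η := by rw [hη]; positivity
  have hγ0 : 0 < γ := by rw [hγ]; positivity
  -- `N` exceeds every threshold on `n` required by the two cases
  set N : ℝ := 2 * (j + 4) + 1 / η + 2 * (j + 2) / η + 1 / γ with hN
  have p1 : 0 < 1 / η := by positivity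
  have p2 : 0 < 2 * ((j : ℝ) + 2) / η := by positivity
  have p3 : 0 < 1 / γ := by positivity
  have p4 : (0 : ℝ) ≤ j := by positivity
  have p5 : 0 < (1 + γ / 2) ^ 2 / (2 * γ) := by positivity
  refine ⟨N + (1 + γ / 2) ^ 2 / (2 * γ), by linarith, fun n 𝓔 h => ?_⟩
  have hpow : (0 : ℝ) ≤ n ^ (j + 2) := by positivity
  have hq1 : 0 ≤ N * (n : ℝ) ^ (j + 2) := mul_nonneg (by linarith) hpow
  have hq2 : 0 ≤ (1 + γ / 2) ^ 2 / (2 * γ) * (n : ℝ) ^ (j + 2) := mul_nonneg p5.le hpow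
  have hs : (0 : ℝ) ≤ (secE (j + 3) 𝓔).card := by positivity
  have hz : (0 : ℝ) ≤ (zeroE univ (j + 3) 𝓔).card := by positivity
  rw [add_mul]
  rcases lt_or_ge (n : ℝ) N with hlt | hge
  · have h5 : (n.choose (j + 3) : ℝ) ≤ n ^ (j + 3) := by
      exact_mod_cast Nat.choose_le_pow n (j + 3)
    have h6 : (n : ℝ) ^ (j + 3) ≤ N * n ^ (j + 2) := by
      rw [pow_succ' _ (j + 2)]
      gcongr
    linarith
  · have t1 : 2 * (j + 4) ≤ n := by
      have : (2 * (j + 4) : ℝ) ≤ n := by linarith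
      exact_mod_cast this
    have t2 : 1 ≤ η * n := by
      have : 1 / η ≤ n := by linarith
      rwa [div_le_iff₀' hη0] at this
    have t3 : 2 * (j + 2) ≤ η * n := by
      have : 2 * ((j : ℝ) + 2) / η ≤ n := by linarith
      rwa [div_le_iff₀' hη0] at this
    have t4 : 1 ≤ γ * n := by
      have : 1 / γ ≤ n := by linarith
      rwa [div_le_iff₀' hγ0] at this
    by_cases hm : ∀ E ∈ 𝓔, (E.card : ℝ) ≤ η * n
    · have := choose_le_zeroE_of_small_edges j n 𝓔 h η hη t1 t2 hm
      linarith
    · push Not at hm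
      obtain ⟨E, hE, hEc⟩ := hm
      have := bound_of_large_edge j n 𝓔 h η γ hη0 hγ t3 t4 E hE hEc.le
      linarith
end

section
/- For every even integer n ≥ 6 there exists an arrangement of n points in ℝ³, no three collinear, such that the number of affine simplexes determined by these points is exactly C(n−1, 4) − (n−2)(n−5)/2. -/
/-!
Put `m = (n - 2) / 2`. The arrangement has `2m` points on a parabola in the plane `z = 0`, namely
those with first coordinate `±1, …, ±m`, and two apexes in the plane `z = 1` such that the line
joining them is parallel to the `m` chords between opposite points of the parabola. No three points
of the parabola are collinear, and a set consisting of both apexes and two points of the parabola is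
coplanar exactly when the two points are opposite.

Hence the minimal affinely dependent subsets (`isAffSimplex_iff`) are the four-subsets of the
parabola, the `m` sets formed by both apexes and an opposite pair, and the sets formed by both
apexes and three points of the parabola, no two of which are opposite. To prove this it suffices
that these sets are dependent (`circuits_dependent`), that none properly contains another
(`circuits_antichain`), and that every subset containing none of them is independent
(`indep_of_no_circuit`); the last fact also shows that no three points are collinear.

Their number is `C(2m, 4) + m + 8 C(m, 3)` (`card_circuits`), since a triple without opposite points
is a triple of absolute values with a choice of signs. As `C(2m, 3) = 8 C(m, 3) + m (2m - 2)`, this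
equals `C(2m + 1, 4) - m (2m - 3)`.
-/

open Finset

/-- The space `ℝ³`. -/
abbrev R3 := EuclideanSpace ℝ (Fin 3)

/-- The point of the parabola `y = x²`, `z = 0` with first coordinate `t`. -/
noncomputable def parab (t : ℤ) : R3 := !₂[(t : ℝ), (t : ℝ) ^ 2, 0]

/-- The point `(s, 0, 1)`; the two points off the plane `z = 0` are `apex 0` and `apex 1`, so the
line through them has the direction of the chords joining `parab t` to `parab (-t)`. -/
noncomputable def apex (s : ℝ) : R3 := !₂[s, 0, 1]

/-- The parameters `±1, …, ±m` of the points used on the parabola. -/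
noncomputable def params (m : ℕ) : Finset ℤ := (Icc (-(m : ℤ)) m).erase 0

open Classical in
/-- The arrangement: `2m` points on the parabola and two points off its plane. -/
noncomputable def config (m : ℕ) : Finset R3 :=
  insert (apex 0) (insert (apex 1) ((params m).image parab))

/-- The triples of parameters no two of which are opposite. -/
noncomputable def freeTriples (m : ℕ) : Finset (Finset ℤ) :=
  ((params m).powersetCard 3).filter fun I => ∀ a ∈ I, -a ∉ I

open Classical in
/-- Four points of the parabola. -/
noncomputable def quadsInPlane (m : ℕ) : Finset (Finset R3) :=
  ((params m).powersetCard 4).image fun I => I.image parab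

open Classical in
/-- Both apexes together with a pair of opposite points of the parabola. -/
noncomputable def quadsWithApexes (m : ℕ) : Finset (Finset R3) :=
  (Icc (1 : ℤ) m).image fun a => {apex 0, apex 1, parab a, parab (-a)}

open Classical in
/-- Both apexes together with three points of the parabola, no two of them opposite. -/
noncomputable def pentads (m : ℕ) : Finset (Finset R3) :=
  (freeTriples m).image fun I => insert (apex 0) (insert (apex 1) (I.image parab))

open Classical in
/-- The sets that are shown to be the affine simplexes contained in `config m`. -/
noncomputable def circuits (m : ℕ) : Finset (Finset R3) :=
  quadsInPlane m ∪ quadsWithApexes m ∪ pentads m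

/-! ### Incidences between the points -/

lemma mem_params {m : ℕ} {t : ℤ} : t ∈ params m ↔ t ≠ 0 ∧ -(m : ℤ) ≤ t ∧ t ≤ m := by
  simp [params]

lemma parab_injective : Function.Injective parab := by
  intro a b h
  have := congrArg (fun x : R3 => x 0) h
  simpa [parab] using this

@[simp] lemma parab_inj {a b : ℤ} : parab a = parab b ↔ a = b := parab_injective.eq_iff

@[simp] lemma parab_ne_apex (a : ℤ) (s : ℝ) : parab a ≠ apex s := by
  intro h
  have := congrArg (fun x : R3 => x 2) h
  simp [parab, apex] at this

@[simp] lemma apex_ne_parab (a : ℤ) (s : ℝ) : apex s ≠ parab a := (parab_ne_apex a s).symm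

@[simp] lemma apex_zero_ne_one : apex 0 ≠ apex 1 := by
  intro h
  have := congrArg (fun x : R3 => x 0) h
  simp [apex] at this

open Classical in
lemma card_config (m : ℕ) : (config m).card = 2 * m + 2 := by
  rw [config, card_insert_of_notMem (by simp), card_insert_of_notMem (by simp),
    card_image_of_injective _ parab_injective, params, card_erase_of_mem (by simp)]
  simp
  omega

/-! ### Affine dependence of four points -/

/-- Four points are affinely independent iff the linear system saying that the weights sum to zero
and annihilate each of the three coordinates has only the zero solution. -/
lemma indep_four_iff (p q r s : R3) : AffineIndependent ℝ ![p, q, r, s] ↔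
    ∀ a b c d : ℝ, a + b + c + d = 0 → (∀ i, a * p i + b * q i + c * r i + d * s i = 0) →
      a = 0 ∧ b = 0 ∧ c = 0 ∧ d = 0 := by
  rw [affineIndependent_iff]
  constructor
  · intro h a b c d h0 h1
    have := h univ ![a, b, c, d] (by simpa [Fin.sum_univ_four] using h0) (by
      ext i
      simpa [Fin.sum_univ_four] using h1 i)
    exact ⟨this 0 (mem_univ _), this 1 (mem_univ _), this 2 (mem_univ _), this 3 (mem_univ _)⟩
  · intro h t w h0 h1
    classical
    -- extend the weights by zero outside `t`
    have e0 : ∑ i, (if i ∈ t then w i else 0) = 0 := by simpa using h0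
    have e1 : ∑ i, (if i ∈ t then w i else 0) • (![p, q, r, s] i) = 0 := by
      simpa [ite_smul] using h1
    rw [Fin.sum_univ_four] at e0 e1
    obtain ⟨ha, hb, hc, hd⟩ := h _ _ _ _ e0 (fun i => by
      have := congrArg (fun x : R3 => x i) e1
      simpa [apply_ite (fun x : R3 => x i)] using this)
    intro i hi
    fin_cases i
    · simpa [show (0 : Fin 4) ∈ t from hi] using ha
    · simpa [show (1 : Fin 4) ∈ t from hi] using hb
    · simpa [show (2 : Fin 4) ∈ t from hi] using hc
    · simpa [show (3 : Fin 4) ∈ t from hi] using hd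

lemma indep_apex_parab (s : ℝ) {a b c : ℤ} (hab : a ≠ b) (hac : a ≠ c) (hbc : b ≠ c) :
    AffineIndependent ℝ ![apex s, parab a, parab b, parab c] := by
  rw [indep_four_iff]
  intro w x y z h0 h1
  have hab' : (a : ℝ) - b ≠ 0 := sub_ne_zero.2 (by exact_mod_cast hab)
  have hac' : (a : ℝ) - c ≠ 0 := sub_ne_zero.2 (by exact_mod_cast hac)
  have hbc' : (b : ℝ) - c ≠ 0 := sub_ne_zero.2 (by exact_mod_cast hbc)
  have k0 := h1 0
  have k1 := h1 1
  have k2 := h1 2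
  simp [apex, parab] at k0 k1 k2
  subst k2
  have hx : x * ((a - b) * (a - c)) = 0 := by linear_combination k1 - (b + c) * k0 + b * c * h0
  have hy : y * ((a - b) * (b - c)) = 0 := by
    linear_combination - k1 + (a + c) * k0 - a * c * h0
  have hz : z * ((a - c) * (b - c)) = 0 := by linear_combination k1 - (a + b) * k0 + a * b * h0
  simp_all

lemma indep_apexes_parab {a b : ℤ} (hab : a ^ 2 ≠ b ^ 2) :
    AffineIndependent ℝ ![apex 0, apex 1, parab a, parab b] := by
  rw [indep_four_iff]
  intro w x y z h0 h1
  have hab' : (a : ℝ) ^ 2 - b ^ 2 ≠ 0 := sub_ne_zero.2 (by exact_mod_cast hab)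
  have k0 := h1 0
  have k1 := h1 1
  have k2 := h1 2
  simp [apex, parab] at k0 k1 k2
  have hy : y * ((a : ℝ) ^ 2 - b ^ 2) = 0 := by linear_combination k1 - b ^ 2 * (h0 - k2)
  have hy0 : y = 0 := by simpa [hab'] using hy
  subst hy0
  have hz0 : z = 0 := by linarith
  subst hz0
  simp at k0
  subst k0
  simp_all

/-- The weights are those of the third divided difference with denominators cleared, which
annihilates every polynomial of degree at most two. -/
lemma dep_parab {a b c d : ℤ} (hab : a ≠ b) (hac : a ≠ c) (hbc : b ≠ c) :
    ¬ AffineIndependent ℝ ![parab a, parab b, parab c, parab d] := by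
  rw [indep_four_iff]
  intro h
  have hab' : (a : ℝ) - b ≠ 0 := sub_ne_zero.2 (by exact_mod_cast hab)
  have hac' : (a : ℝ) - c ≠ 0 := sub_ne_zero.2 (by exact_mod_cast hac)
  have hbc' : (b : ℝ) - c ≠ 0 := sub_ne_zero.2 (by exact_mod_cast hbc)
  have := (h ((b - c) * (c - d) * (b - d)) (-((a - c) * (c - d) * (a - d)))
    ((a - b) * (b - d) * (a - d)) (-((a - b) * (b - c) * (a - c))) (by ring) (by
      intro i
      fin_cases i
      all_goals simp [parab]
      all_goals ring)).2.2.2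
  exact mul_ne_zero (mul_ne_zero hab' hbc') hac' (neg_eq_zero.1 this)

lemma dep_opposite (a : ℤ) :
    ¬ AffineIndependent ℝ ![apex 0, apex 1, parab a, parab (-a)] := by
  rw [indep_four_iff]
  intro h
  have := h (2 * a) (-(2 * a)) 1 (-1) (by ring) (by
      intro i
      fin_cases i
      all_goals simp [parab, apex]
      all_goals ring)
  simp at this

/-- Four points forming a set of four elements are affinely independent as a family whenever they
are so as a set. -/
lemma indep_family_of_set [DecidableEq R3] {p q r s : R3}
    (hc : ({p, q, r, s} : Finset R3).card = 4)
    (h : AffineIndependent ℝ (fun x : (({p, q, r, s} : Finset R3) : Set R3) => (x : R3))) :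
    AffineIndependent ℝ ![p, q, r, s] := by
  have himg : (univ : Finset (Fin 4)).image ![p, q, r, s] = {p, q, r, s} := by
    ext x
    simp [Fin.exists_fin_succ, eq_comm]
  have hinj : Function.Injective ![p, q, r, s] := by
    have : Set.InjOn ![p, q, r, s] (univ : Finset (Fin 4)) :=
      card_image_iff.1 (by rw [himg, hc]; rfl)
    rwa [coe_univ, Set.injOn_univ] at this
  refine AffineIndependent.of_set_of_injective (h.mono ?_) hinj
  rintro _ ⟨i, rfl⟩
  rw [← himg]
  exact mem_coe.2 (mem_image_of_mem _ (mem_univ i))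

/-! ### The minimal dependent subsets -/

open Classical in
lemma circuits_subset {m : ℕ} {T : Finset R3} (hT : T ∈ circuits m) : T ⊆ config m := by
  simp only [circuits, mem_union, quadsInPlane, quadsWithApexes, pentads, freeTriples, mem_image,
    mem_filter, mem_powersetCard] at hT
  rcases hT with (⟨I, ⟨hI, -⟩, rfl⟩ | ⟨a, ha, rfl⟩) | ⟨I, ⟨⟨hI, -⟩, -⟩, rfl⟩
  · intro x hx
    have := image_subset_image (f := parab) hI hx
    simp only [config, mem_insert]
    tauto
  · have h1 : a ∈ params m := by rw [mem_params]; simp at ha; omega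
    have h2 : -a ∈ params m := by rw [mem_params]; simp at ha; omega
    simp only [config, insert_subset_iff, singleton_subset_iff, mem_insert, true_or, or_true,
      true_and]
    exact ⟨.inr (.inr (mem_image_of_mem _ h1)), .inr (.inr (mem_image_of_mem _ h2))⟩
  · exact insert_subset_insert _ (insert_subset_insert _ (image_subset_image hI))

open Classical in
lemma card_quad_apexes {a : ℤ} (ha : 1 ≤ a) :
    ({apex 0, apex 1, parab a, parab (-a)} : Finset R3).card = 4 := by
  have : a ≠ -a := by omega
  rw [card_insert_of_notMem (by simp), card_insert_of_notMem (by simp), card_pair (by simpa)]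

open Classical in
lemma card_pentad (I : Finset ℤ) :
    (insert (apex 0) (insert (apex 1) (I.image parab)) : Finset R3).card = I.card + 2 := by
  rw [card_insert_of_notMem (by simp), card_insert_of_notMem (by simp),
    card_image_of_injective _ parab_injective]

open Classical in
lemma circuits_dependent {m : ℕ} {T : Finset R3} (hT : T ∈ circuits m) :
    ¬ AffineIndependent ℝ (fun p : (T : Set R3) => (p : R3)) := by
  simp only [circuits, mem_union, quadsInPlane, quadsWithApexes, pentads, freeTriples, mem_image,
    mem_filter, mem_powersetCard] at hT
  rcases hT with (⟨I, ⟨-, hI⟩, rfl⟩ | ⟨a, ha, rfl⟩) | ⟨I, ⟨⟨-, hI⟩, -⟩, rfl⟩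
  · intro h
    obtain ⟨a, I', haI, rfl, hI'⟩ := card_eq_succ.1 hI
    obtain ⟨b, c, d, hbc, hbd, hcd, rfl⟩ := card_eq_three.1 hI'
    simp only [mem_insert, mem_singleton, not_or] at haI
    have hcard := card_image_of_injective (f := parab) ({a, b, c, d} : Finset ℤ) parab_injective
    rw [hI] at hcard
    rw [show ({a, b, c, d} : Finset ℤ).image parab = {parab a, parab b, parab c, parab d} by
      simp only [image_insert, image_singleton]] at h hcard
    exact dep_parab haI.1 haI.2.1 hbc (indep_family_of_set hcard h)
  · intro h
    exact dep_opposite a (indep_family_of_set (card_quad_apexes (by simp at ha; omega)) h)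
  · intro h
    have h1 := h.card_le_finrank_succ.trans (Nat.add_le_add_right (Submodule.finrank_le _) 1)
    have h3 : Module.finrank ℝ R3 = 3 := by simp
    simp only [Fintype.card_coe, coe_sort_coe, card_pentad, hI, h3] at h1
    omega

open Classical in
lemma circuits_antichain {m : ℕ} {T T' : Finset R3} (hT : T ∈ circuits m)
    (hT' : T' ∈ circuits m) : ¬ T' ⊂ T := by
  intro hss
  have hcard := card_lt_card hss
  have hsub := hss.1
  simp only [circuits, mem_union, quadsInPlane, quadsWithApexes, pentads, freeTriples, mem_image,
    mem_filter, mem_powersetCard] at hT hT'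
  rcases hT with (⟨I, ⟨-, hI⟩, rfl⟩ | ⟨a, ha, rfl⟩) | ⟨I, ⟨⟨-, hI⟩, hfree⟩, rfl⟩ <;>
  rcases hT' with (⟨K, ⟨-, hK⟩, rfl⟩ | ⟨b, hb, rfl⟩) | ⟨K, ⟨⟨-, hK⟩, -⟩, rfl⟩ <;>
  try rw [card_pentad] at hcard
  all_goals try rw [card_pentad] at hcard
  all_goals try rw [card_quad_apexes (mem_Icc.1 ha).1] at hcard
  all_goals try rw [card_quad_apexes (mem_Icc.1 hb).1] at hcard
  all_goals try rw [card_image_of_injective _ parab_injective] at hcard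
  all_goals try rw [card_image_of_injective _ parab_injective] at hcard
  all_goals try omega
  · -- four points of the parabola are not among three
    have : K ⊆ I := fun x hx => by
      simpa using hsub (mem_image_of_mem parab hx)
    have := card_le_card this
    omega
  · -- the three parameters contain no opposite pair
    have h1 : b ∈ I := by simpa using @hsub (parab b) (by simp)
    have h2 : -b ∈ I := by simpa using @hsub (parab (-b)) (by simp)
    exact hfree b h1 h2

open Classical in
lemma indep_of_subset_quad {T : Finset R3} {p q r s : R3}
    (h : AffineIndependent ℝ ![p, q, r, s]) (hT : T ⊆ {p, q, r, s}) :
    AffineIndependent ℝ (fun x : (T : Set R3) => (x : R3)) := by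
  refine h.range.mono fun x hx => ?_
  have := hT hx
  simp only [mem_insert, mem_singleton] at this
  rcases this with rfl | rfl | rfl | rfl
  exacts [⟨0, rfl⟩, ⟨1, rfl⟩, ⟨2, rfl⟩, ⟨3, rfl⟩]

/-- A set of at most two parameters that are not opposite sits in a pair with distinct squares. -/
lemma exists_pair {I : Finset ℤ} (h0 : 0 ∉ I) (hI : I.card ≤ 2) (hfree : ∀ a ∈ I, -a ∉ I) :
    ∃ a b : ℤ, a ^ 2 ≠ b ^ 2 ∧ I ⊆ {a, b} := by
  have h : I.card = 0 ∨ I.card = 1 ∨ I.card = 2 := by omega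
  rcases h with h | h | h
  · exact ⟨0, 1, by norm_num, by simp [card_eq_zero.1 h]⟩
  · obtain ⟨a, rfl⟩ := card_eq_one.1 h
    refine ⟨a, 0, ?_, by simp⟩
    have ha : a ≠ 0 := by simpa [eq_comm] using h0
    simpa using ha
  · obtain ⟨a, b, hab, rfl⟩ := card_eq_two.1 h
    refine ⟨a, b, fun hsq => ?_, subset_rfl⟩
    rcases sq_eq_sq_iff_eq_or_eq_neg.1 hsq with h | h
    · exact hab h
    · exact hfree b (by simp) (by simp [h])

open Classical in
/-- Every subset of the arrangement without a circuit is affinely independent: it has at most three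
points in the plane, and at most two, not opposite, when it contains both apexes. -/
lemma indep_of_no_circuit {m : ℕ} {T : Finset R3} (hT : T ⊆ config m)
    (hno : ∀ F ∈ circuits m, ¬ F ⊆ T) :
    AffineIndependent ℝ (fun x : (T : Set R3) => (x : R3)) := by
  set I := (params m).filter fun t => parab t ∈ T with hIdef
  have hIT : I.image parab ⊆ T := by
    intro x hx
    obtain ⟨t, ht, rfl⟩ := mem_image.1 hx
    exact (mem_filter.1 ht).2
  have hIJ : I ⊆ params m := filter_subset _ _
  have hcover : ∀ x ∈ T, x = apex 0 ∨ x = apex 1 ∨ x ∈ I.image parab := by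
    intro x hx
    have := hT hx
    simp only [config, mem_insert, mem_image] at this
    rcases this with h | h | ⟨t, ht, rfl⟩
    · exact .inl h
    · exact .inr (.inl h)
    · exact .inr (.inr (mem_image_of_mem _ (mem_filter.2 ⟨ht, hx⟩)))
  have hcard : I.card ≤ 3 := by
    by_contra! h
    obtain ⟨K, hK, hK4⟩ := exists_subset_card_eq (show 4 ≤ I.card by omega)
    refine hno (K.image parab) ?_ ((image_subset_image hK).trans hIT)
    simp only [circuits, mem_union, quadsInPlane]
    exact .inl (.inl (mem_image_of_mem _ (mem_powersetCard.2 ⟨hK.trans hIJ, hK4⟩)))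
  by_cases hu : apex 0 ∈ T ∧ apex 1 ∈ T
  · obtain ⟨hu, hv⟩ := hu
    have hfree : ∀ a ∈ I, -a ∉ I := by
      -- one of the two opposite parameters is positive
      have key : ∀ a ∈ I, -a ∈ I → 1 ≤ a → False := by
        intro a ha ha' h1
        refine hno {apex 0, apex 1, parab a, parab (-a)} ?_ ?_
        · simp only [circuits, mem_union, quadsWithApexes]
          exact .inl (.inr (mem_image_of_mem _ (mem_Icc.2 ⟨h1, (mem_params.1 (hIJ ha)).2.2⟩)))
        · simp only [insert_subset_iff, singleton_subset_iff]
          exact ⟨hu, hv, hIT (mem_image_of_mem _ ha), hIT (mem_image_of_mem _ ha')⟩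
      intro a ha ha'
      have h0 := (mem_params.1 (hIJ ha)).1
      by_cases h1 : 1 ≤ a
      · exact key a ha ha' h1
      · exact key (-a) ha' (by simpa using ha) (by omega)
    have hcard2 : I.card ≤ 2 := by
      by_contra! h
      refine hno (insert (apex 0) (insert (apex 1) (I.image parab))) ?_ ?_
      · simp only [circuits, mem_union, pentads]
        refine .inr (mem_image_of_mem _ (mem_filter.2 ⟨mem_powersetCard.2 ⟨hIJ, ?_⟩, hfree⟩))
        omega
      · simp only [insert_subset_iff]
        exact ⟨hu, hv, hIT⟩
    obtain ⟨a, b, hab, hIab⟩ :=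
      exists_pair (fun h => (mem_params.1 (hIJ h)).1 rfl) hcard2 hfree
    refine indep_of_subset_quad (indep_apexes_parab hab) fun x hx => ?_
    rcases hcover x hx with rfl | rfl | hx
    · simp
    · simp
    · have := image_subset_image (f := parab) hIab hx
      simp only [image_insert, image_singleton] at this
      exact mem_insert_of_mem (mem_insert_of_mem this)
  · obtain ⟨s, hs⟩ : ∃ s, ∀ x ∈ T, x = apex s ∨ x ∈ I.image parab := by
      by_cases h0 : apex 0 ∈ T
      · refine ⟨0, fun x hx => ?_⟩
        rcases hcover x hx with h | rfl | h
        · exact .inl h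
        · exact absurd ⟨h0, hx⟩ hu
        · exact .inr h
      · refine ⟨1, fun x hx => ?_⟩
        rcases hcover x hx with rfl | h | h
        · exact absurd hx h0
        · exact .inl h
        · exact .inr h
    -- points of the parabola beyond the arrangement fill up to exactly three
    obtain ⟨K, hIK, hK⟩ := Infinite.exists_superset_card_eq I 3 hcard
    obtain ⟨a, b, c, hab, hac, hbc, rfl⟩ := card_eq_three.1 hK
    refine indep_of_subset_quad (indep_apex_parab s hab hac hbc) fun x hx => ?_
    rcases hs x hx with rfl | hx
    · simp
    · have := image_subset_image (f := parab) hIK hx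
      simp only [image_insert, image_singleton] at this
      exact mem_insert_of_mem this

open Classical in
lemma isAffSimplex_iff {m : ℕ} {T : Finset R3} (hT : T ⊆ config m) :
    IsAffSimplex 3 T ↔ T ∈ circuits m := by
  constructor
  · rintro ⟨hdep, hmin⟩
    by_contra hTc
    refine hdep (indep_of_no_circuit hT fun F hF hFT => ?_)
    exact circuits_dependent hF (hmin F (hFT.ssubset_of_ne (by rintro rfl; exact hTc hF)))
  · intro h
    refine ⟨circuits_dependent h, fun T' hT' => ?_⟩
    exact indep_of_no_circuit (hT'.1.trans hT) fun F hF hFT' =>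
      circuits_antichain h hF (lt_of_le_of_lt hFT' hT')

open Classical in
lemma numAffSimplex_config (m : ℕ) : numAffSimplex 3 (config m) = (circuits m).card := by
  unfold numAffSimplex
  congr 1
  ext T
  rw [mem_filter, mem_powerset]
  exact ⟨fun h => (isAffSimplex_iff h.1).1 h.2,
    fun h => ⟨circuits_subset h, (isAffSimplex_iff (circuits_subset h)).2 h⟩⟩

lemma config_not_collinear (m : ℕ) {T : Finset R3} (hT : T ∈ (config m).powersetCard 3) :
    ¬ Collinear ℝ (T : Set R3) := by
  classical
  obtain ⟨hsub, hcard⟩ := mem_powersetCard.1 hT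
  have hind : AffineIndependent ℝ (fun x : (T : Set R3) => (x : R3)) := by
    refine indep_of_no_circuit hsub fun F hF hFT => ?_
    have h1 := card_le_card hFT
    simp only [circuits, mem_union, quadsInPlane, quadsWithApexes, pentads, freeTriples, mem_image,
      mem_filter, mem_powersetCard] at hF
    rcases hF with (⟨I, ⟨-, hI⟩, rfl⟩ | ⟨a, ha, rfl⟩) | ⟨I, ⟨⟨-, hI⟩, -⟩, rfl⟩
    · rw [card_image_of_injective _ parab_injective] at h1
      omega
    · rw [card_quad_apexes (mem_Icc.1 ha).1] at h1
      omega
    · rw [card_pentad] at h1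
      omega
  have h2 := hind.finrank_vectorSpan (n := 2) (by simpa using hcard)
  rw [Subtype.range_coe] at h2
  rw [collinear_iff_finrank_le_one]
  change ¬ Module.finrank ℝ (vectorSpan ℝ (T : Set R3)) ≤ 1
  rw [h2]
  norm_num

/-! ### Counting -/

lemma card_params (m : ℕ) : (params m).card = 2 * m := by
  rw [params, card_erase_of_mem (by simp)]
  simp
  omega

/-- A free triple is determined by the set of its absolute values and the subset of these taken with
positive sign. -/
lemma card_freeTriples (m : ℕ) : (freeTriples m).card = 8 * m.choose 3 := by
  have h : (freeTriples m).card =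
      (((Icc (1 : ℤ) m).powersetCard 3).sigma fun K => K.powerset).card := by
    refine card_nbij' (fun I => ⟨I.image abs, I.filter (0 < ·)⟩)
      (fun x => x.2 ∪ (x.1 \ x.2).image Neg.neg) ?_ ?_ ?_ ?_
    · intro I hI
      simp only [freeTriples, coe_filter, mem_powersetCard, Set.mem_ofPred_eq] at hI
      obtain ⟨⟨hI, hc⟩, hf⟩ := hI
      simp only [coe_sigma, Set.mem_sigma_iff, mem_coe, mem_powersetCard, mem_powerset]
      refine ⟨⟨?_, ?_⟩, ?_⟩
      · intro x hx
        obtain ⟨t, ht, rfl⟩ := mem_image.1 hx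
        have := mem_params.1 (hI ht)
        rw [mem_Icc]
        grind
      · rw [card_image_of_injOn, hc]
        intro a ha b hb hab
        rcases abs_eq_abs.1 hab with h | h
        · exact h
        · exact absurd (h ▸ ha) (hf b hb)
      · intro x hx
        obtain ⟨hx, h0⟩ := mem_filter.1 hx
        exact mem_image.2 ⟨x, hx, abs_of_pos h0⟩
    · rintro ⟨K, L⟩ hKL
      simp only [coe_sigma, Set.mem_sigma_iff, mem_coe, mem_powersetCard, mem_powerset] at hKL
      obtain ⟨⟨hK, hc⟩, hL⟩ := hKL
      have hpos : ∀ x ∈ K, 1 ≤ x ∧ x ≤ m := fun x hx => mem_Icc.1 (hK hx)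
      simp only [freeTriples, coe_filter, mem_powersetCard, Set.mem_ofPred_eq]
      refine ⟨⟨?_, ?_⟩, ?_⟩
      · intro x hx
        rw [mem_params]
        grind
      · rw [card_union_of_disjoint, card_image_of_injective _ neg_injective,
          card_sdiff_of_subset hL]
        · have := card_le_card hL
          omega
        · rw [disjoint_left]
          intro x hx hx'
          grind
      · intro a ha ha'
        grind
    · intro I hI
      simp only [freeTriples, coe_filter, mem_powersetCard, Set.mem_ofPred_eq] at hI
      obtain ⟨⟨hI, hc⟩, hf⟩ := hI
      have h0 : ∀ x ∈ I, x ≠ 0 := fun x hx => (mem_params.1 (hI hx)).1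
      ext x
      simp only [mem_union, mem_filter, mem_image, mem_sdiff]
      constructor
      · rintro (h | ⟨y, ⟨⟨z, hz, rfl⟩, hy⟩, rfl⟩)
        · exact h.1
        · rcases abs_choice z with h | h
          · rw [h] at hy
            have := h0 z hz
            have := abs_nonneg z
            grind
          · rwa [h, neg_neg]
      · intro hx
        by_cases hp : 0 < x
        · exact .inl ⟨hx, hp⟩
        · refine .inr ⟨-x, ⟨⟨x, hx, abs_of_nonpos (by omega)⟩, fun h => hf x hx h.1⟩, neg_neg x⟩
    · rintro ⟨K, L⟩ hKL
      simp only [coe_sigma, Set.mem_sigma_iff, mem_coe, mem_powersetCard, mem_powerset] at hKL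
      obtain ⟨⟨hK, hc⟩, hL⟩ := hKL
      have hpos : ∀ x ∈ K, 1 ≤ x := fun x hx => (mem_Icc.1 (hK hx)).1
      have e1 : (L ∪ (K \ L).image Neg.neg).image abs = K := by
        ext x
        simp only [mem_image, mem_union, mem_sdiff]
        constructor
        · rintro ⟨y, h | ⟨z, hz, rfl⟩, rfl⟩
          · rw [abs_of_pos (by have := hpos y (hL h); omega)]
            exact hL h
          · rw [abs_neg, abs_of_pos (by have := hpos z hz.1; omega)]
            exact hz.1
        · intro hx
          have hx1 := hpos x hx
          by_cases hxL : x ∈ L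
          · exact ⟨x, .inl hxL, abs_of_pos (by omega)⟩
          · exact ⟨-x, .inr ⟨x, ⟨hx, hxL⟩, rfl⟩, by rw [abs_neg, abs_of_pos (by omega)]⟩
      have e2 : (L ∪ (K \ L).image Neg.neg).filter (0 < ·) = L := by
        ext x
        simp only [mem_filter, mem_image, mem_union, mem_sdiff]
        constructor
        · rintro ⟨h | ⟨z, hz, rfl⟩, h0⟩
          · exact h
          · have := hpos z hz.1
            omega
        · intro hx
          exact ⟨.inl hx, by have := hpos x (hL hx); omega⟩
      simp only [e1, e2]
  rw [h, card_sigma, sum_congr rfl (g := fun _ => 8), sum_const, card_powersetCard]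
  · simp [mul_comm]
  · intro K hK
    rw [card_powerset, (mem_powersetCard.1 hK).2]
    norm_num

open Classical in
lemma card_circuits (m : ℕ) :
    (circuits m).card = (2 * m).choose 4 + m + 8 * m.choose 3 := by
  have hA : (quadsInPlane m).card = (2 * m).choose 4 := by
    rw [quadsInPlane, card_image_of_injective _ (image_injective parab_injective),
      card_powersetCard, card_params]
  have hB : (quadsWithApexes m).card = m := by
    rw [quadsWithApexes, card_image_of_injOn]
    · simp
    · intro a ha b hb hab
      have h1 : parab a ∈ ({apex 0, apex 1, parab b, parab (-b)} : Finset R3) := by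
        rw [← show _ = ({apex 0, apex 1, parab b, parab (-b)} : Finset R3) from hab]
        simp
      simp only [mem_insert, mem_singleton, parab_ne_apex, parab_inj, false_or] at h1
      simp only [coe_Icc, Set.mem_Icc] at ha hb
      omega
  have hC : (pentads m).card = 8 * m.choose 3 := by
    rw [pentads, card_image_of_injective, card_freeTriples]
    intro I K h
    ext x
    have := congrArg (fun F : Finset R3 => parab x ∈ F) h
    simpa using this
  rw [circuits, card_union_of_disjoint, card_union_of_disjoint, hA, hB, hC]
  · rw [disjoint_left]
    intro T hT hT'
    simp only [quadsInPlane, quadsWithApexes, mem_image] at hT hT'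
    obtain ⟨I, -, rfl⟩ := hT
    obtain ⟨a, -, h⟩ := hT'
    have : apex 0 ∈ I.image parab := by rw [← h]; simp
    simp at this
  · rw [disjoint_left]
    intro T hT hT'
    simp only [quadsInPlane, quadsWithApexes, pentads, freeTriples, mem_union, mem_image,
      mem_filter, mem_powersetCard] at hT hT'
    obtain ⟨K, ⟨⟨-, hK⟩, -⟩, hKT⟩ := hT'
    have hc : T.card = 5 := by rw [← hKT, card_pentad, hK]
    rcases hT with ⟨I, ⟨-, hI⟩, rfl⟩ | ⟨a, ha, rfl⟩
    · rw [card_image_of_injective _ parab_injective] at hc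
      omega
    · rw [card_quad_apexes (mem_Icc.1 ha).1] at hc
      omega

lemma choose_three_double (k : ℕ) :
    (2 * (k + 1)).choose 3 = 8 * (k + 1).choose 3 + (k + 1) * (2 * k) := by
  induction k with
  | zero => decide
  | succ k ih =>
    have h2 : ∀ n : ℕ, (n + 1).choose 2 * 2 = (n + 1) * n := fun n => by
      rw [Nat.choose_two_right, Nat.add_sub_cancel]
      exact Nat.div_mul_cancel (by simpa [mul_comm] using (Nat.even_mul_succ_self n).two_dvd)
    have e1 : (2 * (k + 1 + 1)).choose 3 =
        (2 * (k + 1)).choose 3 + (2 * k + 1 + 1).choose 2 + (2 * k + 2 + 1).choose 2 := by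
      rw [show 2 * (k + 1 + 1) = 2 * k + 3 + 1 by ring, Nat.choose_succ_succ' _ 2,
        Nat.choose_succ_succ' (2 * k + 2) 2, show 2 * (k + 1) = 2 * k + 2 by ring]
      ring
    have e2 : (k + 1 + 1).choose 3 = (k + 1).choose 3 + (k + 1).choose 2 := by
      rw [Nat.choose_succ_succ' _ 2]
      ring
    have := h2 (2 * k + 1)
    have := h2 (2 * k + 2)
    have := h2 k
    rw [e1, e2, ih]
    nlinarith

/-- `m` is written as `k + 2`, so that the subtractions are exact. -/
lemma count_identity (k : ℕ) :
    (2 * (k + 2)).choose 4 + (k + 2) + 8 * (k + 2).choose 3 =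
      (2 * (k + 2) + 1).choose 4 - (2 * (k + 2)) * (2 * k + 1) / 2 := by
  have h := choose_three_double (k + 1)
  rw [Nat.choose_succ_succ' _ 3, mul_assoc, Nat.mul_div_cancel_left _ (by norm_num)]
  have e : (k + 1 + 1) * (2 * (k + 1)) = (k + 2) * (2 * k + 1) + (k + 2) := by ring
  rw [e] at h
  simp only [show k + 1 + 1 = k + 2 from rfl, show 3 + 1 = 4 from rfl] at h ⊢
  omega

theorem construction_even (n : ℕ) (hn : 6 ≤ n) (heven : Even n) :
    ∃ S : Finset (EuclideanSpace ℝ (Fin 3)), S.card = n ∧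
      (∀ T ∈ S.powersetCard 3,
        ¬ Collinear ℝ (T : Set (EuclideanSpace ℝ (Fin 3)))) ∧
      numAffSimplex 3 S = (n - 1).choose 4 - (n - 2) * (n - 5) / 2 := by
  obtain ⟨k, rfl⟩ : ∃ k, n = 2 * (k + 2) + 2 := by
    obtain ⟨r, rfl⟩ := heven
    exact ⟨r - 3, by omega⟩
  refine ⟨config (k + 2), card_config _, fun T hT => config_not_collinear _ hT, ?_⟩
  rw [numAffSimplex_config, card_circuits, count_identity]
  simp only [show 2 * (k + 2) + 2 - 1 = 2 * (k + 2) + 1 by omega,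
    show 2 * (k + 2) + 2 - 2 = 2 * (k + 2) by omega,
    show 2 * (k + 2) + 2 - 5 = 2 * k + 1 by omega]
end

section
/- For every odd integer n ≥ 7 there exists an arrangement of n points in ℝ³, no three collinear, such that the number of affine simplexes determined by these points is exactly C(n−1, 4) − (n−3)(n−5)/2. -/
/-!
Let `n = 2k + 3`. Take the `2k + 1` points `(t, t², 0)`, `-k ≤ t ≤ k`, and two apexes `(0, 0, 1)`,
`(1, 0, 1)`. The line of the apexes is parallel to the `x`-axis, so it is coplanar with two points
`s ≠ t` of the parabola exactly when `s + t = 0`.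

An affine relation among some of the points splits into equations for its weights `w t` on the
parabola and for the two apex weights. The apex weights sum to zero, so if at most one apex is
present they vanish, and the relation is a weight killing `1, t, t²`. If both apexes are present
they absorb the `x`-coordinate, and the relation is a weight killing only `1, t²`. By Vandermonde
(`weight_eq_zero`) and a dimension count (`exists_weight`) this determines all dependent
configurations (`dep_iff`). The minimal ones (`isAffSimplex_cfg_iff`) are

* any four points of the parabola, `C(2k+1, 4)` in number;
* both apexes with an opposite pair `t, -t`, which gives `k`;
* both apexes with three points of the parabola containing no opposite pair, which gives
  `C(2k+1, 3) - k(2k-1)`.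

By Pascal's rule the total is `C(2k+2, 4) - 2k(k-1) = C(n-1, 4) - (n-3)(n-5)/2`.
-/

open Finset

/-! ### The arrangement and its affine relations -/

/-- Affine independence of a finite set of points given by an injective family, in terms of
weights on the indices. -/
lemma affInd_map_iff {ι : Type*} {d : ℕ} (F : ι ↪ EuclideanSpace ℝ (Fin d)) (U : Finset ι) :
    AffineIndependent ℝ
      (fun p : ((U.map F : Finset (EuclideanSpace ℝ (Fin d))) :
        Set (EuclideanSpace ℝ (Fin d))) => (p : EuclideanSpace ℝ (Fin d))) ↔
    ∀ w : ι → ℝ, ∑ i ∈ U, w i = 0 → ∑ i ∈ U, w i • F i = 0 → ∀ i ∈ U, w i = 0 := by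
  let e : {i // i ∈ U} ≃ {x // x ∈ U.map F} := Equiv.ofBijective
    (fun i => ⟨F i, Finset.mem_map_of_mem F i.2⟩)
    ⟨fun i j h => Subtype.ext (F.injective (congrArg Subtype.val h)), fun ⟨x, hx⟩ => by
      obtain ⟨i, hi, rfl⟩ := Finset.mem_map.1 hx
      exact ⟨⟨i, hi⟩, rfl⟩⟩
  have h1 := affineIndependent_equiv (k := ℝ) e
    (p := fun p : {x // x ∈ U.map F} => (p : EuclideanSpace ℝ (Fin d)))
  refine Iff.trans h1.symm ?_
  rw [affineIndependent_iff_of_fintype]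
  constructor
  · intro h w h0 hw i hi
    have e0 : ∑ j : {x // x ∈ U}, w j = 0 := by
      rw [← h0]; exact Finset.sum_coe_sort U w
    refine h (fun j => w j) e0 ?_ ⟨i, hi⟩
    rw [Finset.weightedVSub_eq_linear_combination _ e0, ← hw]
    exact Finset.sum_coe_sort U (fun j => w j • F j)
  · classical
    intro h w h0 hw i
    rw [Finset.weightedVSub_eq_linear_combination _ h0] at hw
    have := h (fun j => if hj : j ∈ U then w ⟨j, hj⟩ else 0) ?_ ?_ i i.2
    · simpa using this
    · rw [← h0, ← Finset.sum_coe_sort U]; simp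
    · rw [← hw, ← Finset.sum_coe_sort U]; simp; rfl

/-- The points of the arrangement: `Sum.inl t` is the point `(t, t², 0)` of a parabola in the plane
`z = 0`, while `Sum.inr false` and `Sum.inr true` are the points `(0, 0, 1)` and `(1, 0, 1)`, whose
line is parallel to the `x`-axis. -/
noncomputable def pt : ℤ ⊕ Bool → EuclideanSpace ℝ (Fin 3)
  | Sum.inl t => !₂[(t : ℝ), (t : ℝ) ^ 2, 0]
  | Sum.inr b => !₂[if b then 1 else 0, 0, 1]

lemma pt_injective : Function.Injective pt := by
  rintro (s | b) (t | c) h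
  · have := congrArg (fun v => v 0) h
    simpa [pt] using this
  · have := congrArg (fun v => v 2) h
    simp [pt] at this
  · have := congrArg (fun v => v 2) h
    simp [pt] at this
  · have := congrArg (fun v => v 0) h
    cases b <;> cases c <;> simp [pt] at this ⊢

/-- The points of the arrangement with parabola parameters in `A` and apexes in `B`. -/
noncomputable def cfg (A : Finset ℤ) (B : Finset Bool) : Finset (EuclideanSpace ℝ (Fin 3)) :=
  (A.disjSum B).map ⟨pt, pt_injective⟩

lemma card_cfg (A : Finset ℤ) (B : Finset Bool) : (cfg A B).card = A.card + B.card := by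
  simp [cfg]

lemma cfg_inj {A A' : Finset ℤ} {B B' : Finset Bool} :
    cfg A B = cfg A' B' ↔ A = A' ∧ B = B' := by
  simp [cfg, Finset.disjSum_inj]

lemma subset_cfg {T : Finset (EuclideanSpace ℝ (Fin 3))} {A : Finset ℤ} {B : Finset Bool} :
    T ⊆ cfg A B ↔ ∃ A' ⊆ A, ∃ B' ⊆ B, T = cfg A' B' := by
  unfold cfg
  rw [Finset.subset_map_iff]
  constructor
  · rintro ⟨u, hu, rfl⟩
    rw [Finset.subset_disjSum] at hu
    exact ⟨_, hu.1, _, hu.2, by rw [Finset.toLeft_disjSum_toRight]⟩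
  · rintro ⟨A', hA, B', hB, rfl⟩
    exact ⟨_, Finset.disjSum_mono hA hB, rfl⟩

/-- Affine independence of a configuration, written out in coordinates: the relations are those of
the sum of weights and of the `x`-, `y`- and `z`-coordinates. -/
lemma affInd_cfg_iff (A : Finset ℤ) (B : Finset Bool) :
    AffineIndependent ℝ (fun p : (cfg A B : Set (EuclideanSpace ℝ (Fin 3))) =>
      (p : EuclideanSpace ℝ (Fin 3))) ↔
    ∀ (w : ℤ → ℝ) (u : Bool → ℝ), ∑ t ∈ A, w t = 0 →
      ∑ t ∈ A, w t * (t : ℝ) + ∑ b ∈ B, u b * (if b then 1 else 0) = 0 →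
      ∑ t ∈ A, w t * (t : ℝ) ^ 2 = 0 → ∑ b ∈ B, u b = 0 →
      (∀ t ∈ A, w t = 0) ∧ ∀ b ∈ B, u b = 0 := by
  unfold cfg
  rw [affInd_map_iff]
  constructor
  · intro h w u h0 hx hy hz
    have key := h (Sum.elim w u) (by rw [Finset.sum_disjSum]; simp [h0, hz]) (by
      ext i
      rw [Finset.sum_disjSum]
      fin_cases i
      · simpa [pt] using hx
      · simpa [pt] using hy
      · simpa [pt] using hz)
    exact ⟨fun t ht => key (Sum.inl t) (by simpa using ht),
      fun b hb => key (Sum.inr b) (by simpa using hb)⟩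
  · intro h w h0 hw
    rw [Finset.sum_disjSum] at h0 hw
    have hx := congrArg (fun v => v 0) hw
    have hy := congrArg (fun v => v 1) hw
    have hz := congrArg (fun v => v 2) hw
    simp [pt] at hx hy hz
    rw [hz, add_zero] at h0
    have key := h (fun t => w (Sum.inl t)) (fun b => w (Sum.inr b)) h0 (by simpa using hx) hy hz
    rintro (t | b) hi
    · exact key.1 t (by simpa using hi)
    · exact key.2 b (by simpa using hi)

/-! ### Dependent configurations -/

/-- Vandermonde: if a weight on at most `m` points with distinct values of `g` annihilates
`1, g, …, g ^ (m - 1)`, it vanishes. -/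
lemma weight_eq_zero {A : Finset ℤ} {m : ℕ} (g w : ℤ → ℝ) (hg : Set.InjOn g A) (hA : A.card ≤ m)
    (h : ∀ j < m, ∑ t ∈ A, w t * g t ^ j = 0) : ∀ t ∈ A, w t = 0 := by
  classical
  intro t ht
  -- Test the weight against the polynomial vanishing at all points but `t`.
  let P : Polynomial ℝ := Lagrange.nodal (A.erase t) g
  have hP : P.natDegree < m := by
    have : P.natDegree = (A.erase t).card := Lagrange.natDegree_nodal
    have := Finset.card_erase_lt_of_mem ht
    omega
  have h1 : ∑ s ∈ A, w s * P.eval (g s) = 0 := by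
    simp_rw [Polynomial.eval_eq_sum_range' hP, Finset.mul_sum]
    rw [Finset.sum_comm]
    refine Finset.sum_eq_zero fun j hj => ?_
    have := h j (Finset.mem_range.1 hj)
    calc _ = ∑ s ∈ A, P.coeff j * (w s * g s ^ j) :=
          Finset.sum_congr rfl fun s _ => by ring
      _ = 0 := by rw [← Finset.mul_sum, this, mul_zero]
  rw [Finset.sum_eq_single_of_mem t ht] at h1
  · refine (mul_eq_zero.1 h1).resolve_right ?_
    simp only [P, Lagrange.eval_nodal]
    refine Finset.prod_ne_zero_iff.2 ?_
    intro s hs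
    rw [Finset.mem_erase] at hs
    exact sub_ne_zero.2 fun e => hs.1 (hg hs.2 ht e.symm)
  · intro s hs hst
    have : P.eval (g s) = 0 := Lagrange.eval_nodal_at_node (Finset.mem_erase.2 ⟨hst, hs⟩)
    rw [this, mul_zero]

/-- More than `m` points carry a nonzero weight annihilating `1, g, …, g ^ (m - 1)`. -/
lemma exists_weight {A : Finset ℤ} {m : ℕ} (g : ℤ → ℝ) (hA : m < A.card) :
    ∃ w : ℤ → ℝ, (∀ j < m, ∑ t ∈ A, w t * g t ^ j = 0) ∧ ∃ t ∈ A, w t ≠ 0 := by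
  let L : ({x // x ∈ A} → ℝ) →ₗ[ℝ] (Fin m → ℝ) :=
    { toFun := fun w j => ∑ t, w t * g t ^ (j : ℕ)
      map_add' := fun w v => by
        ext j; simp [add_mul, Finset.sum_add_distrib]
      map_smul' := fun c w => by
        ext j; simp [Finset.mul_sum, mul_assoc] }
  have hL : LinearMap.ker L ≠ ⊥ := LinearMap.ker_ne_bot_of_finrank_lt (by simpa using hA)
  obtain ⟨v, hv, hv0⟩ := (Submodule.ne_bot_iff _).1 hL
  refine ⟨fun t => if h : t ∈ A then v ⟨t, h⟩ else 0, fun j hj => ?_, ?_⟩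
  · have := congrFun (LinearMap.mem_ker.1 hv) ⟨j, hj⟩
    rw [← Finset.sum_coe_sort A]
    simpa [L] using this
  · obtain ⟨t, ht⟩ := Function.ne_iff.1 hv0
    exact ⟨t, t.2, by simpa using ht⟩

/-- `A` contains two distinct opposite parameters, i.e. two points of the parabola on a line
parallel to the `x`-axis; the pair is named by its positive member. -/
def Anti (A : Finset ℤ) : Prop := ∃ t ∈ A, 0 < t ∧ -t ∈ A

/-- The dependent configurations: four points in the plane `z = 0`, or both apexes together with
three points of the plane or with two points on a line parallel to that of the apexes. -/
lemma dep_iff (A : Finset ℤ) (B : Finset Bool) :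
    ¬ AffineIndependent ℝ (fun p : (cfg A B : Set (EuclideanSpace ℝ (Fin 3))) =>
      (p : EuclideanSpace ℝ (Fin 3))) ↔
    4 ≤ A.card ∨ (B = Finset.univ ∧ (3 ≤ A.card ∨ Anti A)) := by
  rw [affInd_cfg_iff]
  constructor
  · intro h
    by_contra! hc
    obtain ⟨hA, hB⟩ := hc
    apply h
    intro w u h0 hx hy hz
    have hB4 : B = Finset.univ ∨ B = ∅ ∨ B = {true} ∨ B = {false} := by
      clear * -
      revert B; decide
    rcases eq_or_ne B Finset.univ with rfl | hBu
    · obtain ⟨hA3, hanti⟩ := hB rfl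
      have hw : ∀ t ∈ A, w t = 0 := by
        refine weight_eq_zero (m := 2) (fun t => (t : ℝ) ^ 2) w ?_ (by omega) ?_
        · intro s hs t ht hst
          have hst' : s ^ 2 = t ^ 2 := by
            have hst : (s : ℝ) ^ 2 = (t : ℝ) ^ 2 := hst
            exact_mod_cast hst
          rcases sq_eq_sq_iff_eq_or_eq_neg.1 hst' with e | e
          · exact e
          · by_contra hne
            apply hanti
            rcases lt_trichotomy s 0 with h' | h' | h'
            · exact ⟨t, ht, by omega, by rw [← e]; exact hs⟩
            · omega
            · exact ⟨s, hs, h', by rw [e, neg_neg]; exact ht⟩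
        · intro j hj
          interval_cases j
          · simpa using h0
          · simpa using hy
      refine ⟨hw, ?_⟩
      have : ∑ t ∈ A, w t * (t : ℝ) = 0 :=
        Finset.sum_eq_zero fun t ht => by rw [hw t ht, zero_mul]
      rw [this] at hx
      simp at hx hz
      intro b _
      cases b <;> linarith
    · have hu : ∀ b ∈ B, u b = 0 := by
        rcases hB4 with rfl | rfl | rfl | rfl
        · exact absurd rfl hBu
        · simp
        · simpa using hz
        · simpa using hz
      refine ⟨?_, hu⟩
      have : ∑ b ∈ B, u b * (if b then 1 else 0 : ℝ) = 0 :=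
        Finset.sum_eq_zero fun t ht => by rw [hu t ht, zero_mul]
      rw [this, add_zero] at hx
      refine weight_eq_zero (m := 3) (fun t => (t : ℝ)) w (Int.cast_injective.injOn) (by omega) ?_
      intro j hj
      interval_cases j
      · simpa using h0
      · simpa using hx
      · simpa using hy
  · rintro (hA | ⟨rfl, hA⟩) h
    · obtain ⟨w, hw, t, ht, hne⟩ := exists_weight (fun t => (t : ℝ)) (show 3 < A.card by omega)
      exact hne ((h w 0 (by simpa using hw 0) (by simpa using hw 1) (by simpa using hw 2)
        (by simp)).1 t ht)
    · -- The weights of the apexes can absorb any value of the `x`-coordinate.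
      have key : ∀ w : ℤ → ℝ, ∑ t ∈ A, w t = 0 → ∑ t ∈ A, w t * (t : ℝ) ^ 2 = 0 →
          ∀ t ∈ A, w t = 0 := fun w h0 hy =>
        (h w (fun b => if b then -∑ t ∈ A, w t * (t : ℝ) else ∑ t ∈ A, w t * (t : ℝ)) h0
          (by simp) hy (by simp)).1
      rcases hA with hA | ⟨t, ht, hpos, hnt⟩
      · obtain ⟨w, hw, t, ht, hne⟩ :=
          exists_weight (fun t => (t : ℝ) ^ 2) (show 2 < A.card by omega)
        exact hne (key w (by simpa using hw 0) (by simpa using hw 1) t ht)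
      · have hne : t ≠ -t := by omega
        -- The relation is `(t, t²) - (-t, t²)`, a multiple of the direction of the apexes.
        have := key (fun s => (if s = t then 1 else 0) - (if s = -t then 1 else 0))
          (by simp [Finset.sum_sub_distrib, ht, hnt])
          (by simp [sub_mul, Finset.sum_sub_distrib, ht, hnt]) t ht
        simp [hne] at this

/-! ### Affine simplexes among the points -/

/-- The minimal dependent configurations. With exactly one apex there is none: any dependence
already uses four points of the parabola, and the apex can be removed. -/
lemma isAffSimplex_cfg_iff (A : Finset ℤ) (B : Finset Bool) :
    IsAffSimplex 3 (cfg A B) ↔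
      (B = ∅ ∧ A.card = 4) ∨
      (B = Finset.univ ∧ ((A.card = 2 ∧ Anti A) ∨ (A.card = 3 ∧ ¬ Anti A))) := by
  have hmin : ∀ P : Finset (EuclideanSpace ℝ (Fin 3)) → Prop,
      (∀ T', T' ⊂ cfg A B → P T') ↔
        ∀ A' ⊆ A, ∀ B' ⊆ B, ¬ (A' = A ∧ B' = B) → P (cfg A' B') := by
    intro P
    constructor
    · intro h A' hA B' hB hne
      refine h _ (Finset.ssubset_iff_subset_ne.2 ⟨subset_cfg.2 ⟨A', hA, B', hB, rfl⟩, ?_⟩)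
      rwa [Ne, cfg_inj]
    · intro h T' hT
      rw [Finset.ssubset_iff_subset_ne, subset_cfg] at hT
      obtain ⟨⟨A', hA, B', hB, rfl⟩, hne⟩ := hT
      rw [Ne, cfg_inj] at hne
      exact h A' hA B' hB hne
  have hcard : ∀ {A'}, A' ⊆ A → A' ≠ A → A'.card < A.card := fun h h' =>
    Finset.card_lt_card (Finset.ssubset_iff_subset_ne.2 ⟨h, h'⟩)
  have hanti2 : ∀ A' : Finset ℤ, Anti A' → 2 ≤ A'.card := by
    rintro A' ⟨t, ht, hp, hnt⟩
    have : ({t, -t} : Finset ℤ) ⊆ A' := by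
      intro s hs
      simp at hs
      rcases hs with rfl | rfl <;> assumption
    have h2 := Finset.card_le_card this
    rwa [Finset.card_pair (by omega)] at h2
  have hmono : ∀ A' ⊆ A, Anti A' → Anti A := by
    rintro A' hA ⟨t, ht, hp, hnt⟩
    exact ⟨t, hA ht, hp, hA hnt⟩
  unfold IsAffSimplex
  rw [dep_iff, hmin]
  have hd : ∀ A' B', AffineIndependent ℝ (fun p : (cfg A' B' : Set (EuclideanSpace ℝ (Fin 3))) =>
      (p : EuclideanSpace ℝ (Fin 3))) ↔
      ¬ (4 ≤ A'.card ∨ (B' = Finset.univ ∧ (3 ≤ A'.card ∨ Anti A'))) := fun A' B' => by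
    rw [← dep_iff, not_not]
  simp only [hd]
  have hne : (∅ : Finset Bool) ≠ Finset.univ := by decide
  constructor
  · rintro ⟨h, hm⟩
    by_cases h4 : 4 ≤ A.card
    · left
      have hB : B = ∅ := by
        by_contra hB
        exact hm A subset_rfl ∅ (Finset.empty_subset _) (fun e => hB e.2.symm) (Or.inl h4)
      refine ⟨hB, ?_⟩
      obtain ⟨A', hA', hc⟩ := Finset.exists_subset_card_eq h4
      by_contra hne4
      exact hm A' hA' B subset_rfl (fun e => hne4 (e.1 ▸ hc)) (Or.inl hc.ge)
    · right
      obtain ⟨hB, h⟩ := h.resolve_left h4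
      refine ⟨hB, ?_⟩
      by_cases ha : Anti A
      · left
        refine ⟨?_, ha⟩
        obtain ⟨t, ht, hp, hnt⟩ := id ha
        by_contra hc
        refine hm {t, -t} ?_ B subset_rfl ?_
          (Or.inr ⟨hB, Or.inr ⟨t, by simp, hp, by simp⟩⟩)
        · intro s hs
          simp at hs
          rcases hs with rfl | rfl <;> assumption
        · rintro ⟨e, -⟩
          apply hc
          rw [← e, Finset.card_pair (by omega)]
      · right
        exact ⟨by have := h.resolve_right ha; omega, ha⟩
  · rintro (⟨rfl, hA⟩ | ⟨rfl, ⟨hA, ha⟩ | ⟨hA, ha⟩⟩)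
    · refine ⟨Or.inl hA.ge, fun A' hA' B' hB' hn => ?_⟩
      obtain rfl := Finset.subset_empty.1 hB'
      have := hcard hA' (fun e => hn ⟨e, rfl⟩)
      rintro (h | ⟨h, -⟩)
      · omega
      · exact hne h
    · refine ⟨Or.inr ⟨rfl, Or.inr ha⟩, fun A' hA' B' hB' hn => ?_⟩
      have h1 := Finset.card_le_card hA'
      rintro (h | ⟨rfl, h | h⟩)
      · omega
      · omega
      · have := hcard hA' (fun e => hn ⟨e, rfl⟩)
        have := hanti2 A' h
        omega
    · refine ⟨Or.inr ⟨rfl, Or.inl hA.ge⟩, fun A' hA' B' hB' hn => ?_⟩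
      have h1 := Finset.card_le_card hA'
      rintro (h | ⟨rfl, h | h⟩)
      · omega
      · have := hcard hA' (fun e => hn ⟨e, rfl⟩)
        omega
      · exact ha (hmono A' hA' h)

/-! ### Counting -/

open Classical in
/-- An opposite pair is `{t, -t}` for a unique `1 ≤ t ≤ k`. -/
lemma card_anti_two (k : ℕ) :
    (((Finset.Icc (-k : ℤ) k).powersetCard 2).filter Anti).card = k := by
  have : ((Finset.Icc (-k : ℤ) k).powersetCard 2).filter Anti
      = (Finset.Icc (1 : ℤ) k).image (fun t => {t, -t}) := by
    ext A
    simp only [Finset.mem_filter, Finset.mem_powersetCard, Finset.mem_image, Finset.mem_Icc]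
    constructor
    · rintro ⟨⟨hA, hc⟩, t, ht, hp, hnt⟩
      refine ⟨t, ⟨by omega, (Finset.mem_Icc.1 (hA ht)).2⟩, ?_⟩
      refine Finset.eq_of_subset_of_card_le ?_ ?_
      · intro s hs
        simp at hs
        rcases hs with rfl | rfl <;> assumption
      · rw [hc, Finset.card_pair (by omega)]
    · rintro ⟨t, ht, rfl⟩
      refine ⟨⟨?_, Finset.card_pair (by omega)⟩, t, by simp, by omega, by simp⟩
      intro s hs
      simp at hs ⊢
      omega
  rw [this, Finset.card_image_of_injOn]
  · simp
  · intro s hs t ht h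
    simp only [Finset.coe_Icc, Set.mem_Icc] at hs ht
    have : s ∈ ({t, -t} : Finset ℤ) := by
      have h' : ({s, -s} : Finset ℤ) = {t, -t} := h
      rw [← h']; simp
    simp at this
    omega

open Classical in
/-- A triple containing an opposite pair is `{s, t, -t}` with `1 ≤ t ≤ k` and `s ≠ t, -t`. -/
lemma card_anti_three (k : ℕ) :
    (((Finset.Icc (-k : ℤ) k).powersetCard 3).filter Anti).card = k * (2 * k - 1) := by
  let I := (Finset.Icc (1 : ℤ) k).sigma (fun t => (Finset.Icc (-k : ℤ) k) \ {t, -t})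
  have hI : I.card = k * (2 * k - 1) := by
    rw [Finset.card_sigma, Finset.sum_const_nat (m := 2 * k - 1)]
    · simp
    · intro t ht
      rw [Finset.mem_Icc] at ht
      rw [Finset.card_sdiff_of_subset, Finset.card_pair (by omega)]
      · simp; omega
      · intro s hs
        simp at hs ⊢
        omega
  have : ((Finset.Icc (-k : ℤ) k).powersetCard 3).filter Anti
      = I.image (fun x => {x.2, x.1, -x.1}) := by
    ext A
    simp only [Finset.mem_filter, Finset.mem_powersetCard, Finset.mem_image, I, Finset.mem_sigma,
      Finset.mem_sdiff, Finset.mem_Icc]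
    constructor
    · rintro ⟨⟨hA, hc⟩, t, ht, hp, hnt⟩
      have hsub : ({t, -t} : Finset ℤ) ⊆ A := by
        intro s hs
        simp at hs
        rcases hs with rfl | rfl <;> assumption
      have h1 : (A \ {t, -t}).card = 1 := by
        rw [Finset.card_sdiff_of_subset hsub, hc, Finset.card_pair (by omega)]
      obtain ⟨s, hs⟩ := Finset.card_eq_one.1 h1
      have hsm : s ∈ A \ {t, -t} := by rw [hs]; simp
      rw [Finset.mem_sdiff] at hsm
      refine ⟨⟨t, s⟩, ⟨⟨by show 1 ≤ t; omega, (Finset.mem_Icc.1 (hA ht)).2⟩,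
        Finset.mem_Icc.1 (hA hsm.1), hsm.2⟩, ?_⟩
      show insert s {t, -t} = A
      rw [← Finset.sdiff_union_of_subset hsub, hs]
      rfl
    · rintro ⟨⟨t, s⟩, ⟨ht, hs, hst⟩, rfl⟩
      dsimp only at *
      refine ⟨⟨?_, ?_⟩, t, by simp, by omega, by simp⟩
      · intro r hr
        simp at hr ⊢
        omega
      · rw [Finset.card_insert_of_notMem hst, Finset.card_pair (by omega)]
  rw [this, Finset.card_image_of_injOn, hI]
  -- The sum of a triple `{s, t, -t}` is `s`, so the triple determines `s` and then `t`.
  rintro ⟨t, s⟩ h ⟨t', s'⟩ h' he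
  simp only [I, Finset.coe_sigma, Set.mem_sigma_iff, Finset.mem_coe, Finset.mem_sdiff,
    Finset.mem_Icc] at h h'
  have he : ({s, t, -t} : Finset ℤ) = {s', t', -t'} := he
  have hsum : ∀ a b : ℤ, 1 ≤ b → a ∉ ({b, -b} : Finset ℤ) →
      ∑ x ∈ ({a, b, -b} : Finset ℤ), x = a := by
    intro a b hb hab
    rw [Finset.sum_insert hab, Finset.sum_pair (by omega)]
    ring
  have hs : s = s' := by
    rw [← hsum s t h.1.1 h.2.2, he, hsum s' t' h'.1.1 h'.2.2]
  subst hs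
  have ht : t ∈ ({s, t', -t'} : Finset ℤ) := by rw [← he]; simp
  have h2 := h.2.2
  simp at ht h2
  have : t = t' := by omega
  subst this
  rfl

/-- The `k * (2 * k - 1)` triples with an opposite pair stand on the left to avoid a truncated
subtraction. -/
lemma numAffSimplex_cfg (k : ℕ) :
    numAffSimplex 3 (cfg (Finset.Icc (-k : ℤ) k) Finset.univ) + k * (2 * k - 1) =
      (2 * k + 1).choose 4 + k + (2 * k + 1).choose 3 := by
  classical
  set N := Finset.Icc (-k : ℤ) k with hN
  have hNc : N.card = 2 * k + 1 := by simp [hN]; omega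
  have e : (cfg N Finset.univ).powerset.filter (IsAffSimplex 3) =
      ((N.powersetCard 4).image fun A => cfg A ∅) ∪
      (((N.powersetCard 2).filter Anti).image fun A => cfg A Finset.univ) ∪
      (((N.powersetCard 3).filter (fun A => ¬ Anti A)).image fun A => cfg A Finset.univ) := by
    ext T
    simp only [Finset.mem_filter, Finset.mem_powerset, Finset.mem_union, Finset.mem_image,
      Finset.mem_powersetCard, subset_cfg]
    constructor
    · rintro ⟨⟨A, hA, B, -, rfl⟩, h⟩
      rw [isAffSimplex_cfg_iff] at h
      rcases h with ⟨rfl, h⟩ | ⟨rfl, h | h⟩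
      · exact Or.inl (Or.inl ⟨A, ⟨hA, h⟩, rfl⟩)
      · exact Or.inl (Or.inr ⟨A, ⟨⟨hA, h.1⟩, h.2⟩, rfl⟩)
      · exact Or.inr ⟨A, ⟨⟨hA, h.1⟩, h.2⟩, rfl⟩
    · rintro ((⟨A, ⟨hA, h⟩, rfl⟩ | ⟨A, ⟨⟨hA, h⟩, h'⟩, rfl⟩) | ⟨A, ⟨⟨hA, h⟩, h'⟩, rfl⟩) <;>
      refine ⟨⟨A, hA, _, Finset.subset_univ _, rfl⟩, (isAffSimplex_cfg_iff _ _).2 ?_⟩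
      · exact Or.inl ⟨rfl, h⟩
      · exact Or.inr ⟨rfl, Or.inl ⟨h, h'⟩⟩
      · exact Or.inr ⟨rfl, Or.inr ⟨h, h'⟩⟩
  have hinj : ∀ B, Function.Injective fun A => cfg A B := fun B A A' h => (cfg_inj.1 h).1
  have hne : (∅ : Finset Bool) ≠ Finset.univ := by decide
  have h3 := Finset.card_filter_add_card_filter_not (s := N.powersetCard 3) Anti
  have hnum : numAffSimplex 3 (cfg N Finset.univ) = (N.powersetCard 4).card +
      ((N.powersetCard 2).filter Anti).card +
      ((N.powersetCard 3).filter (fun A => ¬ Anti A)).card := by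
    unfold numAffSimplex
    have e' := congrArg Finset.card e
    rw [Finset.card_union_of_disjoint, Finset.card_union_of_disjoint,
      Finset.card_image_of_injective _ (hinj _), Finset.card_image_of_injective _ (hinj _),
      Finset.card_image_of_injective _ (hinj _)] at e'
    · rw [← e']
    · rw [Finset.disjoint_left]
      rintro T hT hT'
      simp only [Finset.mem_image] at hT hT'
      obtain ⟨A, -, rfl⟩ := hT
      obtain ⟨A', -, h⟩ := hT'
      exact hne (cfg_inj.1 h).2.symm
    · rw [Finset.disjoint_left]
      rintro T hT hT'
      simp only [Finset.mem_union, Finset.mem_image, Finset.mem_filter,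
        Finset.mem_powersetCard] at hT hT'
      obtain ⟨A', hA', rfl⟩ := hT'
      rcases hT with ⟨A, -, h⟩ | ⟨A, hA, h⟩
      · exact hne (cfg_inj.1 h).2
      · obtain rfl := (cfg_inj.1 h).1
        exact hA'.2 hA.2
  rw [hN, card_anti_three, ← hN, Finset.card_powersetCard, hNc] at h3
  rw [hN, card_anti_two, ← hN, Finset.card_powersetCard, hNc] at hnum
  omega

theorem construction_odd (n : ℕ) (hn : 7 ≤ n) (hodd : Odd n) :
    ∃ S : Finset (EuclideanSpace ℝ (Fin 3)), S.card = n ∧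
      (∀ T ∈ S.powersetCard 3,
        ¬ Collinear ℝ (T : Set (EuclideanSpace ℝ (Fin 3)))) ∧
      numAffSimplex 3 S = (n - 1).choose 4 - (n - 3) * (n - 5) / 2 := by
  obtain ⟨m, hm⟩ := hodd
  obtain ⟨k, rfl⟩ : ∃ k, m = k + 1 := ⟨m - 1, by omega⟩
  obtain ⟨j, rfl⟩ : ∃ j, k = j + 1 := ⟨k - 1, by omega⟩
  subst hm
  -- Now `n = 2 * (j + 1) + 3`, so the largest parabola parameter is `j + 1`.
  refine ⟨cfg (Finset.Icc (-(j + 1 : ℕ) : ℤ) (j + 1 : ℕ)) Finset.univ, ?_, ?_, ?_⟩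
  · rw [card_cfg]; simp; omega
  · intro T hT
    rw [Finset.mem_powersetCard, subset_cfg] at hT
    obtain ⟨⟨A, hA, B, -, rfl⟩, hc⟩ := hT
    have hi : AffineIndependent ℝ (fun p : (cfg A B : Set (EuclideanSpace ℝ (Fin 3))) =>
        (p : EuclideanSpace ℝ (Fin 3))) := by
      by_contra hd
      rw [dep_iff] at hd
      rw [card_cfg] at hc
      rcases hd with hd | ⟨rfl, hd⟩
      · omega
      · rw [Finset.card_univ, Fintype.card_bool] at hc
        rcases hd with hd | ⟨t, ht, hp, hnt⟩
        · omega
        · have := Finset.card_le_one.1 (show A.card ≤ 1 by omega) t ht (-t) hnt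
          omega
    rw [collinear_iff_finrank_le_one]
    have := hi.finrank_vectorSpan (n := 2) (by simpa using hc)
    rw [Subtype.range_coe] at this
    omega
  · have h := numAffSimplex_cfg (j + 1)
    have e1 : 2 * (j + 1 + 1) + 1 - 1 = (2 * (j + 1) + 1) + 1 := by omega
    have e2 : (2 * (j + 1 + 1) + 1 - 3) * (2 * (j + 1 + 1) + 1 - 5) / 2 = (j + 1) * (2 * j) := by
      have a1 : 2 * (j + 1 + 1) + 1 - 3 = 2 * (j + 1) := by omega
      have a2 : 2 * (j + 1 + 1) + 1 - 5 = 2 * j := by omega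
      rw [a1, a2, mul_assoc, Nat.mul_div_cancel_left _ (by norm_num)]
    have e3 : (j + 1) * (2 * (j + 1) - 1) = (j + 1) * (2 * j) + (j + 1) := by
      have : 2 * (j + 1) - 1 = 2 * j + 1 := by omega
      rw [this]; ring
    rw [e1, e2, Nat.choose_succ_succ' _ 3, show 3 + 1 = 4 from rfl]
    rw [e3] at h
    omega
end

section
/- For every fixed integer k ≥ 2, the limits s_k := lim_{n→∞} s(n,k) and s'_k := lim_{n→∞} s'(n,k) both exist, and they satisfy 0 < s'_k ≤ s_k < 1 (with strict inequality at both ends). -/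
/-! Write `d_j(𝓕)` for the density of a family `𝓕` of `j`-sets inside all `j`-sets of the vertex
set; `hSum` is the density of `𝓔_k` plus the density of `𝓔⁰_{k+1}` (`hSum_eq`).

*Existence of the limits.* Deleting a vertex `v` from a hypergraph on `n + 1` vertices keeps
`q`-linearity, and the families `𝓔_k`, `𝓔⁰_{k+1}` of the result consist of the members of the
original families that avoid `v`. Averaging over `v` preserves densities (`sum_hSum_del`), so some
deletion does not increase `hSum`, and both minima are nondecreasing in `n ≥ k + 1`. They are
bounded above (see below), hence converge.

*Positivity.* By monotonicity `s'_k ≥ s'(k+1, k)`, and on `k + 1` vertices either some `k`-set is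
covered or the whole vertex set lies in `𝓔⁰_{k+1}`; in both cases the sum is at least `1/(k+1)`.

*Upper bound.* On `2m` vertices take a single edge `A` with `m` vertices, which is `q`-linear for
every `q`. With `r = C(m,k) / C(2m,k)`, the density of `𝓔_k` is `r`, and the `m * C(m,k)` sets
with exactly `k` elements in `A` and one outside are missing from `𝓔⁰_{k+1}`. So the sum is at most
`1 + r (1 - (k+1) m / (2m - k)) ≤ 1 - r / 2`, and `r ≥ 4⁻ᵏ` once `m ≥ 2k`. Monotonicity carries
the bound `1 - 4⁻ᵏ / 2` over to all large `n`. -/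

open Finset

/-- The YBLM-type sum `Σ_{S ∈ 𝓔_k ∪ 𝓔⁰_{k+1}} C(n,|S|)⁻¹` for a hypergraph on
`n` vertices. -/
noncomputable def hSum (n k : ℕ) (𝓔 : Finset (Finset (Fin n))) : ℝ :=
  ∑ S ∈ secE k 𝓔 ∪ zeroE Finset.univ k 𝓔, ((n.choose S.card : ℝ))⁻¹

/-- `s(n,k)`: the minimum of `hSum n k 𝓔` over all `(k-1)`-linear hypergraphs
on `n` vertices. -/
noncomputable def sVal (n k : ℕ) : ℝ :=
  sInf {r : ℝ | ∃ 𝓔 : Finset (Finset (Fin n)), qLinear (k - 1) 𝓔 ∧ r = hSum n k 𝓔}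

/-- `s'(n,k)`: the minimum of `hSum n k 𝓔` over all hypergraphs on `n`
vertices. -/
noncomputable def s'Val (n k : ℕ) : ℝ :=
  sInf {r : ℝ | ∃ 𝓔 : Finset (Finset (Fin n)), r = hSum n k 𝓔}

lemma card_of_mem_secE {α : Type*} [DecidableEq α] {k : ℕ} {𝓔 : Finset (Finset α)} {S : Finset α}
    (h : S ∈ secE k 𝓔) : S.card = k := by
  simp only [secE, mem_biUnion, mem_powersetCard] at h
  obtain ⟨_, _, _, h⟩ := h
  exact h

lemma card_of_mem_zeroE {α : Type*} [DecidableEq α] {V : Finset α} {k : ℕ}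
    {𝓔 : Finset (Finset α)} {S : Finset α} (h : S ∈ zeroE V k 𝓔) : S.card = k + 1 := by
  simp only [zeroE, mem_filter, mem_powersetCard] at h
  exact h.1.2

lemma hSum_eq (n k : ℕ) (𝓔 : Finset (Finset (Fin n))) :
    hSum n k 𝓔 = (secE k 𝓔).card * ((n.choose k : ℝ))⁻¹
      + (zeroE univ k 𝓔).card * ((n.choose (k + 1) : ℝ))⁻¹ := by
  have hd : Disjoint (secE k 𝓔) (zeroE univ k 𝓔) := by
    rw [Finset.disjoint_left]
    intro S h1 h2
    have := card_of_mem_secE h1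
    have := card_of_mem_zeroE h2
    omega
  rw [hSum, sum_union hd]
  congr 1
  · rw [sum_congr rfl (fun S hS => by rw [card_of_mem_secE hS]), sum_const, nsmul_eq_mul]
  · rw [sum_congr rfl (fun S hS => by rw [card_of_mem_zeroE hS]), sum_const, nsmul_eq_mul]

lemma hSum_nonneg (n k : ℕ) (𝓔 : Finset (Finset (Fin n))) : 0 ≤ hSum n k 𝓔 :=
  sum_nonneg fun _ _ => by positivity

/-! ### Deleting a vertex -/

/-- The trace of `E` on the vertices other than `v`, which are identified with `Fin n` by
`v.succAbove`. -/
def delSet {n : ℕ} (v : Fin (n + 1)) (E : Finset (Fin (n + 1))) : Finset (Fin n) :=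
  univ.filter fun x => v.succAbove x ∈ E

/-- The hypergraph obtained from `𝓔` by deleting the vertex `v` from the vertex set and from every
edge. -/
def del {n : ℕ} (v : Fin (n + 1)) (𝓔 : Finset (Finset (Fin (n + 1)))) :
    Finset (Finset (Fin n)) :=
  𝓔.image (delSet v)

lemma subset_delSet {n : ℕ} {v : Fin (n + 1)} {E : Finset (Fin (n + 1))} {S : Finset (Fin n)} :
    S ⊆ delSet v E ↔ S.map v.succAboveEmb ⊆ E := by
  simp [delSet, subset_iff]

lemma qLinear_del {n q : ℕ} (v : Fin (n + 1)) {𝓔 : Finset (Finset (Fin (n + 1)))}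
    (h : qLinear q 𝓔) : qLinear q (del v 𝓔) := by
  intro E hE E' hE' hne
  simp only [del, mem_image] at hE hE'
  obtain ⟨F, hF, rfl⟩ := hE
  obtain ⟨F', hF', rfl⟩ := hE'
  refine lt_of_le_of_lt ?_ (h F hF F' hF' (fun e => hne (by rw [e])))
  rw [← card_map v.succAboveEmb]
  apply card_le_card
  rw [subset_inter_iff]
  exact ⟨subset_delSet.1 inter_subset_left, subset_delSet.1 inter_subset_right⟩

lemma mem_secE_del {n k : ℕ} (v : Fin (n + 1)) (𝓔 : Finset (Finset (Fin (n + 1))))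
    (S : Finset (Fin n)) : S ∈ secE k (del v 𝓔) ↔ S.map v.succAboveEmb ∈ secE k 𝓔 := by
  simp only [secE, del, mem_biUnion, mem_image, mem_powersetCard, card_map,
    exists_exists_and_eq_and, subset_delSet]

lemma mem_zeroE_del {n k : ℕ} (v : Fin (n + 1)) (𝓔 : Finset (Finset (Fin (n + 1))))
    (S : Finset (Fin n)) :
    S ∈ zeroE univ k (del v 𝓔) ↔ S.map v.succAboveEmb ∈ zeroE univ k 𝓔 := by
  simp only [zeroE, mem_filter, mem_powersetCard, card_map, subset_univ, true_and, mem_secE_del]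
  refine and_congr_right fun _ => ⟨fun h G hG => ?_, fun h G hG => ?_⟩
  · obtain ⟨T, hT, rfl⟩ := subset_map_iff.1 hG.1
    exact h T ⟨hT, by simpa using hG.2⟩
  · exact h _ ⟨map_subset_map.2 hG.1, by simpa using hG.2⟩

/-- Double counting of the pairs `(v, S)` with `S ∈ F` and `v ∉ S`. -/
lemma sum_card_avoid {n j : ℕ} (F : Finset (Finset (Fin (n + 1)))) (hF : ∀ S ∈ F, S.card = j)
    (G : Fin (n + 1) → Finset (Finset (Fin n)))
    (hG : ∀ v S, S ∈ G v ↔ S.map v.succAboveEmb ∈ F) :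
    ∑ v, (G v).card = (n + 1 - j) * F.card := by
  have h1 : ∀ v, (G v).card = (F.filter fun S => v ∉ S).card := by
    intro v
    rw [← card_map (mapEmbedding v.succAboveEmb).toEmbedding]
    congr 1
    ext S
    simp only [mem_map, mem_filter, hG]
    constructor
    · rintro ⟨T, hT, rfl⟩
      refine ⟨hT, ?_⟩
      simp [Fin.succAbove_ne]
    · rintro ⟨hS, hv⟩
      have hsub : S ⊆ (univ : Finset (Fin n)).map v.succAboveEmb := by
        intro x hx
        obtain ⟨y, rfl⟩ := Fin.exists_succAbove_eq (x := x) (y := v) (by rintro rfl; exact hv hx)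
        simp
      obtain ⟨T, _, rfl⟩ := subset_map_iff.1 hsub
      exact ⟨T, hS, rfl⟩
  simp only [h1, card_filter]
  rw [sum_comm]
  have h2 : ∀ S ∈ F, (∑ v, if v ∉ S then 1 else 0) = n + 1 - j := by
    intro S hS
    rw [← card_filter, ← hF S hS]
    have : (univ.filter fun v => v ∉ S) = Sᶜ := by ext; simp
    rw [this, card_compl, Fintype.card_fin]
  rw [sum_congr rfl h2, sum_const, smul_eq_mul, mul_comm]

lemma density_step {n j c : ℕ} (hj : j ≤ n) :
    (((n + 1 - j) * c : ℕ) : ℝ) * ((n.choose j : ℝ))⁻¹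
      = (n + 1) * (c * (((n + 1).choose j : ℝ))⁻¹) := by
  have h : ((n.choose j : ℝ)) * (n + 1) = (n + 1).choose j * ((n + 1 - j : ℕ) : ℝ) := by
    exact_mod_cast Nat.choose_mul_succ_eq n j
  have h1 : (n.choose j : ℝ) ≠ 0 := by exact_mod_cast (Nat.choose_pos hj).ne'
  have h2 : ((n + 1).choose j : ℝ) ≠ 0 := by
    exact_mod_cast (Nat.choose_pos (hj.trans n.le_succ)).ne'
  rw [Nat.cast_mul]
  field_simp
  linear_combination -(c : ℝ) * h

lemma sum_hSum_del {n k : ℕ} (hn : k + 1 ≤ n) (𝓔 : Finset (Finset (Fin (n + 1)))) :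
    ∑ v, hSum n k (del v 𝓔) = (n + 1) * hSum (n + 1) k 𝓔 := by
  simp only [hSum_eq, sum_add_distrib, ← sum_mul, ← Nat.cast_sum]
  rw [sum_card_avoid (secE k 𝓔) (fun _ => card_of_mem_secE) _ (fun v S => mem_secE_del v 𝓔 S),
    sum_card_avoid (zeroE univ k 𝓔) (fun _ => card_of_mem_zeroE) _
      (fun v S => mem_zeroE_del v 𝓔 S),
    density_step (by omega), density_step hn]
  ring

lemma exists_del_le {n k : ℕ} (hn : k + 1 ≤ n) (𝓔 : Finset (Finset (Fin (n + 1)))) :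
    ∃ v, hSum n k (del v 𝓔) ≤ hSum (n + 1) k 𝓔 := by
  obtain ⟨v, -, hv⟩ := exists_le_of_sum_le (s := (univ : Finset (Fin (n + 1))))
    (f := fun v => hSum n k (del v 𝓔)) (g := fun _ => hSum (n + 1) k 𝓔) univ_nonempty
    (by rw [sum_hSum_del hn, sum_const]; simp)
  exact ⟨v, hv⟩

/-! ### Monotonicity of the two minima -/

lemma sVal_le {n k : ℕ} {𝓔 : Finset (Finset (Fin n))} (h : qLinear (k - 1) 𝓔) :
    sVal n k ≤ hSum n k 𝓔 :=
  csInf_le ⟨0, by rintro _ ⟨_, _, rfl⟩; exact hSum_nonneg _ _ _⟩ ⟨𝓔, h, rfl⟩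

lemma s'Val_le {n k : ℕ} (𝓔 : Finset (Finset (Fin n))) : s'Val n k ≤ hSum n k 𝓔 :=
  csInf_le ⟨0, by rintro _ ⟨_, rfl⟩; exact hSum_nonneg _ _ _⟩ ⟨𝓔, rfl⟩

lemma le_sVal {n k : ℕ} {c : ℝ} (h : ∀ 𝓔, qLinear (k - 1) 𝓔 → c ≤ hSum n k 𝓔) :
    c ≤ sVal n k :=
  le_csInf ⟨_, ∅, by simp [qLinear], rfl⟩ (by rintro _ ⟨𝓔, h', rfl⟩; exact h 𝓔 h')

lemma le_s'Val {n k : ℕ} {c : ℝ} (h : ∀ 𝓔, c ≤ hSum n k 𝓔) : c ≤ s'Val n k :=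
  le_csInf ⟨_, ∅, rfl⟩ (by rintro _ ⟨𝓔, rfl⟩; exact h 𝓔)

lemma s'Val_le_sVal (n k : ℕ) : s'Val n k ≤ sVal n k := le_sVal fun 𝓔 _ => s'Val_le 𝓔

lemma monotone_sVal (k : ℕ) : Monotone fun n => sVal (n + (k + 1)) k :=
  monotone_nat_of_le_succ fun n => by
    rw [Nat.succ_add_eq_add_succ, Nat.add_succ]
    refine le_sVal fun 𝓔 h𝓔 => ?_
    obtain ⟨v, hv⟩ := exists_del_le (Nat.le_add_left _ _) 𝓔
    exact (sVal_le (qLinear_del v h𝓔)).trans hv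

lemma monotone_s'Val (k : ℕ) : Monotone fun n => s'Val (n + (k + 1)) k :=
  monotone_nat_of_le_succ fun n => by
    rw [Nat.succ_add_eq_add_succ, Nat.add_succ]
    refine le_s'Val fun 𝓔 => ?_
    obtain ⟨v, hv⟩ := exists_del_le (Nat.le_add_left _ _) 𝓔
    exact (s'Val_le _).trans hv

/-! ### The lower bound -/

lemma s'Val_base (k : ℕ) : ((k : ℝ) + 1)⁻¹ ≤ s'Val (k + 1) k := by
  refine le_s'Val fun 𝓔 => ?_
  rw [hSum_eq]
  have e : (((k + 1).choose k : ℕ) : ℝ) = k + 1 := by simp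
  rw [e, Nat.choose_self]
  have hk : ((k : ℝ) + 1)⁻¹ ≤ 1 := inv_le_one_of_one_le₀ (by linarith [Nat.cast_nonneg (α := ℝ) k])
  have hp : (0 : ℝ) < ((k : ℝ) + 1)⁻¹ := by positivity
  rcases (secE k 𝓔).eq_empty_or_nonempty with h | h
  · have : univ ∈ zeroE univ k 𝓔 := by simp [zeroE, h]
    have h1 : (1 : ℝ) ≤ (zeroE univ k 𝓔).card := by exact_mod_cast card_pos.2 ⟨_, this⟩
    simp only [h, card_empty, Nat.cast_zero, zero_mul, zero_add, Nat.cast_one, inv_one, mul_one]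
    linarith
  · have h1 : (1 : ℝ) ≤ (secE k 𝓔).card := by exact_mod_cast card_pos.2 h
    have h2 : (0 : ℝ) ≤ (zeroE univ k 𝓔).card := by positivity
    simp only [Nat.cast_one, inv_one, mul_one]
    nlinarith

/-! ### The upper bound from a single edge -/

lemma choose_ratio (m k : ℕ) (h : 2 * k ≤ m) : (2 * m).choose k ≤ 4 ^ k * m.choose k := by
  induction k with
  | zero => simp
  | succ k ih =>
    have h1 := Nat.choose_succ_right_eq (2 * m) k
    have h2 := Nat.choose_succ_right_eq m k
    have h3 : (2 * m).choose k * (2 * m - k) ≤ (4 ^ k * m.choose k) * (4 * (m - k)) :=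
      Nat.mul_le_mul (ih (by omega)) (by omega)
    refine Nat.le_of_mul_le_mul_right (c := k + 1) ?_ (Nat.succ_pos k)
    calc _ = _ := h1
      _ ≤ _ := h3
      _ = 4 ^ (k + 1) * (m.choose k * (m - k)) := by ring
      _ = _ := by rw [← h2]; ring

/-- The sets with `k` elements in `A` and one element outside are `(k+1)`-sets that are not in
`𝓔⁰_{k+1}`. -/
lemma card_zeroE_single {n k : ℕ} (A : Finset (Fin n)) :
    (zeroE univ k {A}).card + Aᶜ.card * A.card.choose k ≤ n.choose (k + 1) := by
  have hA : ∀ {x : Fin n} {G : Finset (Fin n)}, x ∉ A → G ⊆ A → insert x G ∩ A = G := by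
    intro x G hx hG
    rw [insert_inter_of_notMem hx, inter_eq_left.2 hG]
  set P := (Aᶜ ×ˢ A.powersetCard k).image fun p => insert p.1 p.2 with hP
  have hcard : P.card = Aᶜ.card * A.card.choose k := by
    rw [hP, card_image_of_injOn, card_product, card_powersetCard]
    rintro ⟨x, G⟩ h1 ⟨y, G'⟩ h2 h
    simp only [coe_product, Set.mem_prod, mem_coe, mem_compl, mem_powersetCard] at h1 h2 h
    have hG : G = G' := by rw [← hA h1.1 h1.2.1, ← hA h2.1 h2.2.1, h]
    subst hG
    have hx : x ∈ insert y G := h ▸ mem_insert_self x G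
    rcases mem_insert.1 hx with rfl | hx
    · rfl
    · exact absurd (h1.2.1 hx) h1.1
  have hdisj : Disjoint (zeroE univ k {A}) P := by
    rw [Finset.disjoint_left]
    intro S h1 h2
    simp only [hP, mem_image, mem_product, mem_compl, mem_powersetCard, Prod.exists] at h2
    obtain ⟨x, G, ⟨_, hG⟩, rfl⟩ := h2
    simp only [zeroE, mem_filter] at h1
    refine h1.2 G (mem_powersetCard.2 ⟨subset_insert _ _, hG.2⟩) ?_
    simpa [secE] using hG
  rw [← hcard, ← card_union_of_disjoint hdisj]
  have : (powersetCard (k + 1) (univ : Finset (Fin n))).card = n.choose (k + 1) := by simp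
  rw [← this]
  refine card_le_card (union_subset (fun S hS => ?_) fun S hS => ?_)
  · exact mem_powersetCard.2 ⟨subset_univ _, card_of_mem_zeroE hS⟩
  simp only [hP, mem_image, mem_product, mem_compl, mem_powersetCard, Prod.exists] at hS
  obtain ⟨x, G, ⟨hx, hG⟩, rfl⟩ := hS
  rw [mem_powersetCard]
  refine ⟨subset_univ _, ?_⟩
  rw [card_insert_of_notMem (fun h => hx (hG.1 h)), hG.2]

lemma sVal_double_le {m k : ℕ} (hk : 2 ≤ k) (hm : 2 * k ≤ m) :
    sVal (2 * m) k ≤ 1 - ((4 : ℝ) ^ k)⁻¹ / 2 := by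
  obtain ⟨A, -, hA⟩ := exists_subset_card_eq (s := (univ : Finset (Fin (2 * m)))) (n := m)
    (by simp; omega)
  have hlin : qLinear (k - 1) {A} := by
    intro E hE E' hE' hne
    rw [mem_singleton] at hE hE'
    exact absurd (hE.trans hE'.symm) hne
  refine (sVal_le hlin).trans ?_
  have h1 : (secE k {A}).card = m.choose k := by simp [secE, hA]
  have h2 := card_zeroE_single (k := k) A
  rw [card_compl, Fintype.card_fin, hA, show 2 * m - m = m by omega] at h2
  rw [hSum_eq, h1]
  have h3 := Nat.choose_succ_right_eq (2 * m) k
  have h4 := choose_ratio m k hm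
  have ha : 0 < (2 * m).choose k := Nat.choose_pos (by omega)
  have hb : 0 < (2 * m).choose (k + 1) := Nat.choose_pos (by omega)
  generalize (2 * m).choose k = a at *
  generalize (2 * m).choose (k + 1) = b at *
  generalize m.choose k = c at *
  generalize (zeroE univ k {A}).card = z at *
  have h3' : (b : ℝ) * (k + 1) = a * (2 * m - k) := by
    have : ((2 * m - k : ℕ) : ℝ) = 2 * m - k := by
      rw [Nat.cast_sub (by omega)]; push_cast; rfl
    rw [← this]; exact_mod_cast h3
  have h2' : (z : ℝ) + m * c ≤ b := by exact_mod_cast h2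
  have h4' : (a : ℝ) ≤ 4 ^ k * c := by exact_mod_cast h4
  have ha' : (0 : ℝ) < a := by exact_mod_cast ha
  have hb' : (0 : ℝ) < b := by exact_mod_cast hb
  have hk' : (2 : ℝ) ≤ k := by exact_mod_cast hk
  have hm' : 2 * (k : ℝ) ≤ m := by exact_mod_cast hm
  have hc' : (0 : ℝ) ≤ c := by positivity
  have hr : ((4 : ℝ) ^ k)⁻¹ ≤ c * (a : ℝ)⁻¹ := by
    rwa [← div_eq_mul_inv, le_div_iff₀ ha', inv_mul_le_iff₀ (by positivity)]
  -- Since `b (k + 1) = a (2 m - k) ≤ 2 a m`, we have `m / b ≥ (k + 1) / (2 a) ≥ 3 / (2 a)`.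
  have hmb : 3 / 2 * (a : ℝ)⁻¹ ≤ m * (b : ℝ)⁻¹ := by
    rw [← div_eq_mul_inv, ← div_eq_mul_inv, div_le_div_iff₀ ha' hb']
    nlinarith
  have hz : (z : ℝ) * (b : ℝ)⁻¹ ≤ 1 - c * (m * (b : ℝ)⁻¹) := by
    have : (z : ℝ) * (b : ℝ)⁻¹ ≤ (b - m * c) * (b : ℝ)⁻¹ :=
      mul_le_mul_of_nonneg_right (by linarith) (by positivity)
    rw [sub_mul, mul_inv_cancel₀ hb'.ne'] at this
    linarith
  have := mul_le_mul_of_nonneg_left hmb hc'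
  linarith

theorem limits_exist_and_bounds (k : ℕ) (hk : 2 ≤ k) :
    ∃ L L' : ℝ,
      Filter.Tendsto (fun n => sVal n k) Filter.atTop (nhds L) ∧
      Filter.Tendsto (fun n => s'Val n k) Filter.atTop (nhds L') ∧
      0 < L' ∧ L' ≤ L ∧ L < 1 := by
  -- `n + (k + 1) ≤ 2 * (n + 2 * k)`, and the single-edge bound applies at the right-hand side.
  have hub : ∀ n, sVal (n + (k + 1)) k ≤ 1 - ((4 : ℝ) ^ k)⁻¹ / 2 := by
    intro n
    have h := monotone_sVal k (show n ≤ 2 * (n + 2 * k) - (k + 1) by omega)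
    simp only [show 2 * (n + 2 * k) - (k + 1) + (k + 1) = 2 * (n + 2 * k) by omega] at h
    exact h.trans (sVal_double_le hk (by omega))
  have hub' : ∀ n, s'Val (n + (k + 1)) k ≤ 1 - ((4 : ℝ) ^ k)⁻¹ / 2 :=
    fun n => (s'Val_le_sVal _ _).trans (hub n)
  have hL := tendsto_atTop_ciSup (monotone_sVal k) ⟨_, by rintro _ ⟨n, rfl⟩; exact hub n⟩
  have hL' := tendsto_atTop_ciSup (monotone_s'Val k) ⟨_, by rintro _ ⟨n, rfl⟩; exact hub' n⟩
  refine ⟨_, _, (Filter.tendsto_add_atTop_iff_nat (k + 1)).1 hL,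
    (Filter.tendsto_add_atTop_iff_nat (k + 1)).1 hL', ?_, ?_, ?_⟩
  · have h0 : ((k : ℝ) + 1)⁻¹ ≤ s'Val (0 + (k + 1)) k := by
      rw [zero_add]; exact s'Val_base k
    exact lt_of_lt_of_le (by positivity)
      (h0.trans ((monotone_s'Val k).ge_of_tendsto hL' 0))
  · exact le_of_tendsto_of_tendsto' hL' hL fun n => s'Val_le_sVal _ _
  · refine lt_of_le_of_lt (le_of_tendsto' hL hub) ?_
    have : (0 : ℝ) < ((4 : ℝ) ^ k)⁻¹ := by positivity
    linarith
end

section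
/- For every integer k ≥ 2 and every n > k, the hypergraph on 2n vertices whose edge set consists of two disjoint vertex sets of cardinality n each is 2-linear (hence (k−1)-linear for k ≥ 3, and linear), and it witnesses the inequality s(2n, k) ≤ 1 − (C(n,k)/C(2n,k)) · (2nk/(2n−k)). -/
/-!
The hypergraph with two disjoint edges of size `n` is itself the witness. At most `2 * C(n, k)`
sets lie in `secE`. A `(k+1)`-set is excluded from `zeroE` as soon as it meets one of the edges
in at least `k` points; each edge excludes at least `C(n, k+1) + n * C(n, k)` sets
(`card_heavy_ge`), and no set is excluded by both edges because `k + 1 < 2 * k`. Hence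
`zeroE` has at most `C(2n, k+1) - 2 * (C(n, k+1) + n * C(n, k))` members (`card_zeroE_add_le`),
and the relation `C(m, k+1) * (k+1) = C(m, k) * (m-k)` for `m = n` and `m = 2n` turns the resulting
bound on `hSum` into the closed form.
-/

open Finset

/-- The `(k+1)`-element sets meeting `E` in at least `k` points. -/
def heavy {α : Type*} [Fintype α] [DecidableEq α] (k : ℕ) (E : Finset α) : Finset (Finset α) :=
  ((Finset.univ : Finset α).powersetCard (k + 1)).filter fun F => k ≤ (F ∩ E).card

/-- A heavy set is either a `(k+1)`-subset of `E`, or a `k`-subset of `E` plus one outside point;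
only the resulting lower bound on the count is needed. -/
lemma card_heavy_ge {α : Type*} [Fintype α] [DecidableEq α] (k : ℕ) (E : Finset α) :
    E.card.choose (k + 1) + Eᶜ.card * E.card.choose k ≤ (heavy k E).card := by
  have inter_eq : ∀ x ∈ Eᶜ, ∀ G ⊆ E, insert x G ∩ E = G := by
    intro x hx G hG
    rw [Finset.insert_inter_of_notMem (Finset.mem_compl.1 hx), Finset.inter_eq_left.2 hG]
  set I : Finset (Finset α) :=
    (Eᶜ ×ˢ E.powersetCard k).image fun p => insert p.1 p.2 with hI
  have hIcard : I.card = Eᶜ.card * E.card.choose k := by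
    rw [hI, Finset.card_image_of_injOn, Finset.card_product, Finset.card_powersetCard]
    rintro ⟨x, G⟩ hp ⟨y, H⟩ hq h
    simp only [Finset.coe_product, Set.mem_prod, Finset.mem_coe, Finset.mem_powersetCard] at hp hq
    obtain ⟨hx, hG, -⟩ := hp
    obtain ⟨hy, hH, -⟩ := hq
    simp only at h hx hy hG hH
    have hGH : G = H := by rw [← inter_eq x hx G hG, h, inter_eq y hy H hH]
    subst hGH
    have hxG : x ∉ G := fun hm => Finset.mem_compl.1 hx (hG hm)
    have hxm : x ∈ insert y G := h ▸ Finset.mem_insert_self x G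
    rcases Finset.mem_insert.1 hxm with rfl | hm
    · rfl
    · exact absurd hm hxG
  have hdisj : Disjoint (E.powersetCard (k + 1)) I := by
    rw [Finset.disjoint_left]
    intro F hF hFI
    simp only [hI, Finset.mem_image, Finset.mem_product] at hFI
    obtain ⟨⟨x, G⟩, ⟨hx, -⟩, rfl⟩ := hFI
    exact Finset.mem_compl.1 hx
      ((Finset.mem_powersetCard.1 hF).1 (Finset.mem_insert_self x G))
  rw [← hIcard, ← Finset.card_powersetCard (k + 1) E, ← Finset.card_union_of_disjoint hdisj]
  apply Finset.card_le_card
  intro F hF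
  simp only [heavy, Finset.mem_filter, Finset.mem_powersetCard, Finset.subset_univ, true_and]
  rcases Finset.mem_union.1 hF with hF | hF
  · obtain ⟨hFE, hc⟩ := Finset.mem_powersetCard.1 hF
    rw [Finset.inter_eq_left.2 hFE]
    omega
  · simp only [hI, Finset.mem_image, Finset.mem_product, Finset.mem_powersetCard] at hF
    obtain ⟨⟨x, G⟩, ⟨hx, hG, hc⟩, rfl⟩ := hF
    simp only at hx hG hc
    rw [inter_eq x hx G hG,
      Finset.card_insert_of_notMem fun hm => Finset.mem_compl.1 hx (hG hm)]
    omega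

lemma mem_zeroE {α : Type*} [DecidableEq α] {V F : Finset α} {k : ℕ} {𝓔 : Finset (Finset α)} :
    F ∈ zeroE V k 𝓔 ↔
      F ∈ V.powersetCard (k + 1) ∧ ∀ G ∈ F.powersetCard k, G ∉ secE k 𝓔 := by
  unfold zeroE
  rw [Finset.mem_filter]

lemma disjoint_zeroE_heavy {α : Type*} [Fintype α] [DecidableEq α] {k : ℕ} {E : Finset α}
    {𝓔 : Finset (Finset α)} (hE : E ∈ 𝓔) :
    Disjoint (zeroE Finset.univ k 𝓔) (heavy k E) := by
  rw [Finset.disjoint_left]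
  intro F hF hF'
  obtain ⟨G, hG, hc⟩ := Finset.exists_subset_card_eq (Finset.mem_filter.1 hF').2
  refine (mem_zeroE.1 hF).2 G
    (Finset.mem_powersetCard.2 ⟨hG.trans Finset.inter_subset_left, hc⟩) ?_
  exact Finset.mem_biUnion.2
    ⟨E, hE, Finset.mem_powersetCard.2 ⟨hG.trans Finset.inter_subset_right, hc⟩⟩

/-- `zeroE` and the two heavy families are pairwise disjoint families of `(k+1)`-sets. -/
lemma card_zeroE_add_le {α : Type*} [Fintype α] [DecidableEq α] {k : ℕ} (hk : 2 ≤ k)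
    {A B : Finset α} (hAB : Disjoint A B) :
    (zeroE Finset.univ k {A, B}).card + (heavy k A).card + (heavy k B).card
      ≤ (Fintype.card α).choose (k + 1) := by
  have hAB' : Disjoint (heavy k A) (heavy k B) := by
    rw [Finset.disjoint_left]
    intro F hA hB
    obtain ⟨hF, hA⟩ := Finset.mem_filter.1 hA
    have hB := (Finset.mem_filter.1 hB).2
    have hc := (Finset.mem_powersetCard.1 hF).2
    have hd : Disjoint (F ∩ A) (F ∩ B) :=
      hAB.mono Finset.inter_subset_right Finset.inter_subset_right
    have hle : (F ∩ A ∪ F ∩ B).card ≤ F.card :=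
      Finset.card_le_card (Finset.union_subset Finset.inter_subset_left Finset.inter_subset_left)
    rw [Finset.card_union_of_disjoint hd] at hle
    omega
  rw [← Finset.card_union_of_disjoint (disjoint_zeroE_heavy (by simp)),
    ← Finset.card_union_of_disjoint
      (Finset.disjoint_union_left.2 ⟨disjoint_zeroE_heavy (by simp), hAB'⟩),
    ← Finset.card_univ, ← Finset.card_powersetCard (k + 1)]
  exact Finset.card_le_card (Finset.union_subset
    (Finset.union_subset (fun _ hF => (mem_zeroE.1 hF).1) (Finset.filter_subset _ _))
    (Finset.filter_subset _ _))

lemma card_secE_pair_le {α : Type*} [DecidableEq α] (k : ℕ) (A B : Finset α) :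
    (secE k {A, B}).card ≤ A.card.choose k + B.card.choose k := by
  rw [secE, Finset.biUnion_insert, Finset.singleton_biUnion]
  simpa using Finset.card_union_le (A.powersetCard k) (B.powersetCard k)

lemma hSum_le (n k : ℕ) (𝓔 : Finset (Finset (Fin n))) :
    hSum n k 𝓔 ≤ ((secE k 𝓔).card : ℝ) * (n.choose k : ℝ)⁻¹
      + ((zeroE Finset.univ k 𝓔).card : ℝ) * (n.choose (k + 1) : ℝ)⁻¹ := by
  have h1 : ∑ S ∈ secE k 𝓔, ((n.choose S.card : ℝ))⁻¹
      = ((secE k 𝓔).card : ℝ) * (n.choose k : ℝ)⁻¹ := by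
    rw [← nsmul_eq_mul]
    refine Finset.sum_eq_card_nsmul fun S hS => ?_
    obtain ⟨E, -, hS⟩ := Finset.mem_biUnion.1 hS
    rw [(Finset.mem_powersetCard.1 hS).2]
  have h2 : ∑ S ∈ zeroE Finset.univ k 𝓔, ((n.choose S.card : ℝ))⁻¹
      = ((zeroE Finset.univ k 𝓔).card : ℝ) * (n.choose (k + 1) : ℝ)⁻¹ := by
    rw [← nsmul_eq_mul]
    refine Finset.sum_eq_card_nsmul fun S hS => ?_
    rw [(Finset.mem_powersetCard.1 (mem_zeroE.1 hS).1).2]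
  rw [← h1, ← h2, ← Finset.sum_union_inter, hSum]
  exact le_add_of_nonneg_right (Finset.sum_nonneg fun _ _ => by positivity)

lemma cast_choose_succ {m k : ℕ} (h : k ≤ m) :
    (m.choose (k + 1) : ℝ) = m.choose k * ((m : ℝ) - k) / (k + 1) := by
  rw [eq_div_iff (by positivity), ← Nat.cast_sub h]
  exact_mod_cast Nat.choose_succ_right_eq m k

lemma qLinear_pair {α : Type*} [DecidableEq α] {q : ℕ} (hq : 0 < q) {A B : Finset α}
    (hAB : Disjoint A B) : qLinear q {A, B} := by
  intro E hE E' hE' hne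
  simp only [Finset.mem_insert, Finset.mem_singleton] at hE hE'
  rcases hE with rfl | rfl <;> rcases hE' with rfl | rfl
  · exact absurd rfl hne
  · rwa [Finset.disjoint_iff_inter_eq_empty.1 hAB, Finset.card_empty]
  · rwa [Finset.disjoint_iff_inter_eq_empty.1 hAB.symm, Finset.card_empty]
  · exact absurd rfl hne

theorem two_disjoint_edges_bound (k n : ℕ) (hk : 2 ≤ k) (hn : k < n)
    (E₁ E₂ : Finset (Fin (2 * n)))
    (hE₁ : E₁ = Finset.univ.filter (fun i : Fin (2 * n) => (i : ℕ) < n))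
    (hE₂ : E₂ = Finset.univ.filter (fun i : Fin (2 * n) => n ≤ (i : ℕ))) :
    qLinear 2 ({E₁, E₂} : Finset (Finset (Fin (2 * n)))) ∧
    qLinear (k - 1) ({E₁, E₂} : Finset (Finset (Fin (2 * n)))) ∧
    sVal (2 * n) k ≤
      1 - ((n.choose k : ℝ) / ((2 * n).choose k : ℝ)) *
        ((2 * (n : ℝ) * (k : ℝ)) / (2 * (n : ℝ) - (k : ℝ))) := by
  have hcompl : E₁ᶜ = E₂ := by
    subst hE₁ hE₂
    ext i
    simp
  have hdisj : Disjoint E₁ E₂ := hcompl ▸ disjoint_compl_right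
  have hc1 : E₁.card = n := by
    rw [hE₁, Fin.card_filter_val_lt]
    omega
  have hc2 : E₂.card = n := by
    rw [← hcompl, Finset.card_compl, hc1, Fintype.card_fin]
    omega
  have hlin := qLinear_pair (q := k - 1) (by omega) hdisj
  refine ⟨qLinear_pair (by omega) hdisj, hlin, ?_⟩
  have hs : sVal (2 * n) k ≤ hSum (2 * n) k {E₁, E₂} := by
    refine csInf_le ⟨0, ?_⟩ ⟨_, hlin, rfl⟩
    rintro r ⟨𝓔, -, rfl⟩
    exact hSum_nonneg _ _ _
  refine (hs.trans (hSum_le _ _ _)).trans ?_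
  have hsec : ((secE k {E₁, E₂}).card : ℝ) ≤ 2 * n.choose k := by
    have h := card_secE_pair_le k E₁ E₂
    rw [hc1, hc2, ← two_mul] at h
    exact_mod_cast h
  have hzero : ((zeroE Finset.univ k {E₁, E₂}).card : ℝ)
      ≤ (2 * n).choose (k + 1) - 2 * (n.choose (k + 1) + n * n.choose k) := by
    have h := card_zeroE_add_le hk hdisj
    have h1 := card_heavy_ge k E₁
    have h2 := card_heavy_ge k E₂
    rw [hcompl, hc1, hc2] at h1
    rw [← hcompl, compl_compl, hcompl, hc1, hc2] at h2
    rw [Fintype.card_fin] at h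
    have h3 : (zeroE Finset.univ k {E₁, E₂}).card + 2 * (n.choose (k + 1) + n * n.choose k)
        ≤ (2 * n).choose (k + 1) := by omega
    rw [le_sub_iff_add_le]
    exact_mod_cast h3
  have hpos : (0 : ℝ) < (2 * n).choose k := by
    exact_mod_cast Nat.choose_pos (by omega)
  have hkn : (0 : ℝ) < 2 * n - k := by
    have : (k : ℝ) < n := by exact_mod_cast hn
    have : (0 : ℝ) ≤ k := by positivity
    linarith
  calc _ ≤ (2 * n.choose k : ℝ) * ((2 * n).choose k : ℝ)⁻¹
        + ((2 * n).choose (k + 1) - 2 * (n.choose (k + 1) + n * n.choose k) : ℝ)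
          * ((2 * n).choose (k + 1) : ℝ)⁻¹ := by gcongr
    _ = _ := by
      rw [cast_choose_succ hn.le, cast_choose_succ (show k ≤ 2 * n by omega)]
      push_cast
      have hk1 : (k : ℝ) + 1 ≠ 0 := by positivity
      have := hpos.ne'
      have := hkn.ne'
      field_simp
      ring
end

section
/- For every fixed integer k ≥ 2, if L is the limit of s(n,k) as n → ∞ (which exists since the sequence is non-decreasing and bounded above by 1), then L ≤ 1 − k/2^k. -/
/-!
Split `2m` vertices into two halves `A` and `Aᶜ` of size `m` and let these be the only two edges.
They are disjoint, so the hypergraph is `(k-1)`-linear for every `k ≥ 2`. As `m → ∞`, the `k`-sets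
inside one half have density `2 / 2^k`, while a `(k+1)`-set is free of such `k`-sets only if it has
at least two points in each half, which has density `1 - (2 + 2(k+1)) / 2^(k+1) = 1 - (k+2) / 2^k`.
The two densities add up to `1 - k / 2^k`.

`sVal_two_mul_le` is the resulting bound for finite `m`, and the limits of the ratios of binomial
coefficients are `tendsto_choose_div_choose_two_mul` and `tendsto_mul_choose_div`.
-/

open Finset

/-- The `(i+j)`-sets meeting `A` in exactly `i` points are at least as many as the pairs of an
`i`-subset of `A` and a `j`-subset of `Aᶜ`, since such a pair is recovered from its union. -/
lemma choose_mul_choose_le_card_split {n : ℕ} (A : Finset (Fin n)) (i j : ℕ) :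
    A.card.choose i * (Aᶜ).card.choose j ≤
      ((univ.powersetCard (i + j)).filter fun F : Finset (Fin n) => (F ∩ A).card = i).card := by
  rw [← card_powersetCard, ← card_powersetCard, ← card_product]
  have key : ∀ S T : Finset (Fin n), S ⊆ A → T ⊆ Aᶜ →
      (S ∪ T) ∩ A = S ∧ (S ∪ T) ∩ Aᶜ = T := by
    intro S T hS hT
    constructor <;> ext x <;> have h1 := @hS x <;> have h2 := @hT x <;>
      simp only [mem_inter, mem_union, mem_compl] at * <;> tauto
  refine card_le_card_of_injOn (fun p => p.1 ∪ p.2) ?_ ?_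
  · rintro ⟨S, T⟩ h
    simp only [coe_product, Set.mem_prod, mem_coe, mem_powersetCard] at h
    obtain ⟨⟨hS, hSc⟩, hT, hTc⟩ := h
    simp only [coe_filter, mem_powersetCard, Set.mem_ofPred_eq]
    refine ⟨⟨subset_univ _, ?_⟩, ?_⟩
    · rw [card_union_of_disjoint, hSc, hTc]
      exact disjoint_of_subset_left hS (disjoint_of_subset_right hT disjoint_compl_right)
    · rw [(key S T hS hT).1, hSc]
  · rintro ⟨S, T⟩ h ⟨S', T'⟩ h' he
    simp only [coe_product, Set.mem_prod, mem_coe, mem_powersetCard] at h h'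
    dsimp only at he
    have h1 := key S T h.1.1 h.2.1
    have h2 := key S' T' h'.1.1 h'.2.1
    rw [he] at h1
    exact Prod.ext (h1.1.symm.trans h2.1) (h1.2.symm.trans h2.2)

lemma card_secE_pair_le_s9 {n m : ℕ} (k : ℕ) (A : Finset (Fin n)) (hA : A.card = m)
    (hB : (Aᶜ).card = m) : (secE k {A, Aᶜ}).card ≤ 2 * m.choose k := by
  refine card_biUnion_le.trans ?_
  refine (sum_le_card_nsmul _ _ (m.choose k) ?_).trans ?_
  · intro E hE
    rw [mem_insert, mem_singleton] at hE
    rcases hE with rfl | rfl <;> simp [card_powersetCard, hA, hB]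
  · rw [smul_eq_mul]
    exact Nat.mul_le_mul_right _ card_le_two

/-- A `(k+1)`-set that is split `(k+1,0)`, `(k,1)`, `(1,k)` or `(0,k+1)` by `A` and `Aᶜ` has a
`k`-subset inside one of the two parts, so it is not counted by `zeroE`. -/
lemma card_zeroE_pair_le {n m k : ℕ} (hk : 2 ≤ k) (A : Finset (Fin n)) (hA : A.card = m)
    (hB : (Aᶜ).card = m) :
    (zeroE univ k {A, Aᶜ}).card + (2 * m.choose (k + 1) + 2 * (m * m.choose k)) ≤
      n.choose (k + 1) := by
  set P := (univ : Finset (Fin n)).powersetCard (k + 1) with hP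
  let I : Finset ℕ := {0, 1, k, k + 1}
  have hsub : zeroE univ k {A, Aᶜ} ⊆ P.filter fun F => ¬ (F ∩ A).card ∈ I := by
    intro F hF
    simp only [zeroE, mem_filter] at hF
    obtain ⟨hFP, hF0⟩ := hF
    refine mem_filter.2 ⟨hFP, fun hI => ?_⟩
    have hc : F.card = k + 1 := (mem_powersetCard.1 hFP).2
    have hs : (F ∩ A).card + (F ∩ Aᶜ).card = F.card := by
      rw [← card_inter_add_card_sdiff F A, sdiff_eq_inter_compl]
    have hcov : ∀ E ∈ ({A, Aᶜ} : Finset (Finset (Fin n))), ¬ k ≤ (F ∩ E).card := by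
      intro E hE hle
      obtain ⟨G, hG, hGc⟩ := exists_subset_card_eq hle
      exact hF0 G (mem_powersetCard.2 ⟨hG.trans inter_subset_left, hGc⟩)
        (mem_biUnion.2 ⟨E, hE, mem_powersetCard.2 ⟨hG.trans inter_subset_right, hGc⟩⟩)
    have h1 := hcov A (by simp)
    have h2 := hcov Aᶜ (by simp)
    simp only [I, mem_insert, mem_singleton] at hI
    omega
  have hfib : (P.filter fun F => (F ∩ A).card ∈ I).card =
      ∑ i ∈ I, (P.filter fun F => (F ∩ A).card = i).card := by
    have hmaps : ∀ F ∈ P.filter fun F => (F ∩ A).card ∈ I, (F ∩ A).card ∈ I :=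
      fun F hF => (mem_filter.1 hF).2
    rw [card_eq_sum_card_fiberwise hmaps]
    refine sum_congr rfl fun i hi => ?_
    rw [filter_filter]
    congr 1
    refine filter_congr fun F _ => ⟨fun h => h.2, fun h => ⟨h ▸ hi, h⟩⟩
  have hsplit : ∀ i j, i + j = k + 1 →
      m.choose i * m.choose j ≤ (P.filter fun F => (F ∩ A).card = i).card := by
    intro i j hij
    have := choose_mul_choose_le_card_split A i j
    rwa [hA, hB, hij] at this
  have hI : ∑ i ∈ I, (P.filter fun F => (F ∩ A).card = i).card =
      (P.filter fun F => (F ∩ A).card = 0).card + ((P.filter fun F => (F ∩ A).card = 1).card +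
      ((P.filter fun F => (F ∩ A).card = k).card +
        (P.filter fun F => (F ∩ A).card = k + 1).card)) := by
    rw [sum_insert, sum_insert, sum_insert, sum_singleton] <;>
      simp only [mem_insert, mem_singleton] <;> omega
  have e0 := hsplit 0 (k + 1) (by omega)
  have e1 := hsplit 1 k (by omega)
  have e2 := hsplit k 1 (by omega)
  have e3 := hsplit (k + 1) 0 (by omega)
  have htot := card_filter_add_card_filter_not (s := P) (fun F => (F ∩ A).card ∈ I)
  have hPc : P.card = n.choose (k + 1) := by rw [hP, card_powersetCard, card_fin]
  have hle := card_le_card hsub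
  rw [Nat.choose_zero_right, Nat.choose_one_right] at *
  rw [mul_comm (m.choose k) m] at e2
  omega

lemma sVal_two_mul_le {k : ℕ} (hk : 2 ≤ k) (m : ℕ) :
    sVal (2 * m) k ≤ 2 * (m.choose k : ℝ) / ((2 * m).choose k : ℝ) +
      (((2 * m).choose (k + 1) : ℝ) - 2 * m.choose (k + 1) - 2 * (m * m.choose k)) /
        ((2 * m).choose (k + 1) : ℝ) := by
  obtain ⟨A, -, hA⟩ := exists_subset_card_eq (s := (univ : Finset (Fin (2 * m)))) (n := m)
    (by rw [card_fin]; omega)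
  have hB : (Aᶜ).card = m := by rw [card_compl, Fintype.card_fin, hA]; omega
  have hlin : qLinear (k - 1) ({A, Aᶜ} : Finset (Finset (Fin (2 * m)))) := by
    intro E hE E' hE' hne
    have h0 : (E ∩ E').card = 0 := by
      simp only [mem_insert, mem_singleton] at hE hE'
      rw [card_eq_zero, ← disjoint_iff_inter_eq_empty]
      rcases hE with rfl | rfl <;> rcases hE' with h | rfl
      · exact absurd h.symm hne
      · exact disjoint_compl_right
      · exact h ▸ disjoint_compl_left
      · exact absurd rfl hne
    omega
  have hbdd : BddBelow {r : ℝ | ∃ 𝓔 : Finset (Finset (Fin (2 * m))),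
      qLinear (k - 1) 𝓔 ∧ r = hSum (2 * m) k 𝓔} := by
    refine ⟨0, ?_⟩
    rintro r ⟨𝓔, -, rfl⟩
    exact sum_nonneg fun S _ => by positivity
  refine (csInf_le hbdd ⟨_, hlin, rfl⟩).trans ?_
  have h1 := card_secE_pair_le_s9 k A hA hB
  have h2 := card_zeroE_pair_le hk A hA hB
  have hsum : hSum (2 * m) k {A, Aᶜ} ≤
      ∑ S ∈ secE k {A, Aᶜ}, (((2 * m).choose S.card : ℝ))⁻¹ +
      ∑ S ∈ zeroE univ k {A, Aᶜ}, (((2 * m).choose S.card : ℝ))⁻¹ := by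
    rw [hSum, ← sum_union_inter]
    exact le_add_of_nonneg_right (sum_nonneg fun S _ => by positivity)
  refine hsum.trans (add_le_add ?_ ?_)
  · rw [sum_congr rfl (g := fun _ => (((2 * m).choose k : ℝ))⁻¹), sum_const, nsmul_eq_mul,
      div_eq_mul_inv]
    · exact mul_le_mul_of_nonneg_right (by exact_mod_cast h1) (by positivity)
    · intro S hS
      obtain ⟨E, -, hSE⟩ := mem_biUnion.1 hS
      rw [(mem_powersetCard.1 hSE).2]
  · rw [sum_congr rfl (g := fun _ => (((2 * m).choose (k + 1) : ℝ))⁻¹), sum_const, nsmul_eq_mul,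
      div_eq_mul_inv]
    · refine mul_le_mul_of_nonneg_right ?_ (by positivity)
      have h3 : ((zeroE univ k {A, Aᶜ}).card : ℝ) +
          (2 * m.choose (k + 1) + 2 * (m * m.choose k)) ≤ (2 * m).choose (k + 1) := by
        exact_mod_cast h2
      linarith
    · intro S hS
      simp only [zeroE, mem_filter] at hS
      rw [(mem_powersetCard.1 hS.1).2]

/-- `C(N,k+1) = C(N,k) (N-k)/(k+1)` over the reals; both sides vanish when `N < k`. -/
lemma choose_succ_real (N k : ℕ) :
    (N.choose (k + 1) : ℝ) = N.choose k * ((N : ℝ) - k) / (k + 1) := by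
  rw [eq_div_iff (by positivity)]
  rcases le_or_gt k N with h | h
  · have := Nat.choose_succ_right_eq N k
    rw [← Nat.cast_sub h]
    exact_mod_cast this
  · simp [Nat.choose_eq_zero_of_lt h, Nat.choose_eq_zero_of_lt (Nat.lt_succ_of_lt h)]

lemma tendsto_sub_div_two_mul_sub (a b : ℝ) :
    Filter.Tendsto (fun m : ℕ => ((m : ℝ) - a) / (2 * m - b)) Filter.atTop (nhds (1 / 2)) := by
  have ha := tendsto_const_div_atTop_nhds_zero_nat a
  have hb := tendsto_const_div_atTop_nhds_zero_nat b
  have h : Filter.Tendsto (fun m : ℕ => (1 - a / (m : ℝ)) / (2 - b / m)) Filter.atTop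
      (nhds ((1 - 0) / (2 - 0))) :=
    (tendsto_const_nhds.sub ha).div (tendsto_const_nhds.sub hb) (by norm_num)
  rw [sub_zero, sub_zero] at h
  refine h.congr' ?_
  filter_upwards [Filter.eventually_gt_atTop 0] with m hm
  have hm' : (m : ℝ) ≠ 0 := by positivity
  rw [← mul_div_mul_left _ _ hm']
  congr 1 <;> field_simp

lemma tendsto_choose_div_choose_two_mul (k : ℕ) :
    Filter.Tendsto (fun m : ℕ => (m.choose k : ℝ) / ((2 * m).choose k : ℝ)) Filter.atTop
      (nhds ((1 / 2) ^ k)) := by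
  induction k with
  | zero => simp
  | succ k ih =>
    rw [pow_succ]
    refine (ih.mul (tendsto_sub_div_two_mul_sub k k)).congr fun m => ?_
    rw [choose_succ_real, choose_succ_real, div_div_div_cancel_right₀ (by positivity),
      div_mul_div_comm]
    push_cast
    rfl

lemma tendsto_mul_choose_div (k : ℕ) :
    Filter.Tendsto (fun m : ℕ => (m * m.choose k : ℝ) / ((2 * m).choose (k + 1) : ℝ))
      Filter.atTop (nhds ((k + 1) * ((1 / 2) ^ k * (1 / 2)))) := by
  refine (((tendsto_choose_div_choose_two_mul k).mul
    (tendsto_sub_div_two_mul_sub 0 k)).const_mul ((k : ℝ) + 1)).congr fun m => ?_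
  rw [choose_succ_real, div_mul_div_comm, div_div_eq_mul_div, sub_zero]
  push_cast
  ring

theorem limit_s_le (k : ℕ) (hk : 2 ≤ k) (L : ℝ)
    (hL : Filter.Tendsto (fun n => sVal n k) Filter.atTop (nhds L)) :
    L ≤ 1 - (k : ℝ) / 2 ^ k := by
  have hb := ((tendsto_choose_div_choose_two_mul k).const_mul 2).add
    (((tendsto_const_nhds (x := (1 : ℝ))).sub
      ((tendsto_choose_div_choose_two_mul (k + 1)).const_mul 2)).sub
      ((tendsto_mul_choose_div k).const_mul 2))
  have h2 : Filter.Tendsto (fun m : ℕ => 2 * m) Filter.atTop Filter.atTop :=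
    Filter.tendsto_id.const_mul_atTop' (by norm_num)
  have hlim := le_of_tendsto_of_tendsto (hL.comp h2) hb ?_
  · refine hlim.trans (le_of_eq ?_)
    rw [div_eq_mul_inv (k : ℝ), ← inv_pow, pow_succ, one_div]
    ring
  · filter_upwards [Filter.eventually_ge_atTop (k + 1)] with m hm
    refine (sVal_two_mul_le hk m).trans (le_of_eq ?_)
    have hne : ((2 * m).choose (k + 1) : ℝ) ≠ 0 := by
      exact_mod_cast (Nat.choose_pos (by omega)).ne'
    rw [sub_div, sub_div, div_self hne, mul_div_assoc, mul_div_assoc, mul_div_assoc]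
end
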